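/- arXiv:1810.08411 — 2 statements merged into one kernel-verified Lean document; each statement's English description precedes it below -/
import Mathlib

section
/- Let t ∈ ℤ with t ≥ 58. If (x,y) ∈ ℤ × ℤ is a solution of |F_t^{(4)}(x,y)| ≤ 6t + 7 with gcd(x,y) = 1, y > 0 and −y ≤ x ≤ y, then (x,y) is one of (0,1), (1,1), (−1,1), (1,2), (−1,2). Moreover, if (x,y) is any solution of this inequality, then so is every pair in the orbit {(x,y), (y,−x), (−x,−y), (−y,x)}. -/
/-!
# Primitive solutions of a simplest quartic Thue inequality

The proof is the hypergeometric (Thue–Siegel) method over `ℚ(i)`, made explicit down to `t = 58`.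

Since `Im ((t - 4i) (a + b i) ^ 4) = -4 F_t (a, b)`, a solution of `|F_t (a, b)| ≤ 24 t + 28` with `a`
large makes `a + b i` almost parallel to a fourth root `B` of `t + 4i`. The identity
`F (x - y, x + y) = -4 F (x, y)` and the rotation `(x, y) ↦ (y, -x)` reduce everything to
`2 |b| ≤ a`; there `elem_reduction` leaves only small explicit pairs and pairs with `t ^ 3 < 25 a`, and the
latter have to be excluded.

The Padé denominators `padeQ` of the fourth root, evaluated at `t + 4i`, are Gaussian integers whose
products with `conj B` have tiny imaginary part, and they have a large common factor `padeG n`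
(`padeQ_gaussian`). Comparing them with `a + b i` yields `pade_ineq`: with `Y = |a + b i|`, unless `Y` is
small in terms of `n`,
`padeG n ≤ 24.51 C(2n, n) |t + 4i| ^ n / Y ^ 3 + 1.0002 * 64 ^ n Y / ((2n + 1) C(2n, n) t ^ (n + 1))`.
The size of the remainder, the minimal solution of a three-term recurrence, comes from its
Casoratian with the dominant solution; the integral `padeJ` is only used to see that it is bounded.

A lower bound for `Y` of order `t ^ k` thus gives a lower bound of order `t ^ (n + 1)` for some `n ≥ k`
(`PadeBound.step`), and there is no upper bound for `Y` that stops this: iterating forever shows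
`Y = ∞`, a contradiction (`PadeBound.false`). For `t` as small as `58` the iteration needs almost the
true size of `padeG n`. Up to `n = 25544` the bounds for `padeG n` are computed (`nodes0`, …,
`chain_ok`). Beyond, `pow_le_padeG` gives `1.488 ^ n ≤ padeG n`; as `log (padeG n)` is essentially the sum
of `Λ m` over `m ≤ 4n` with `⌊4n / m⌋ ≡ 3 mod 4`, this follows, in the manner of Chebyshev, from a
combination of floor functions bounded by the indicator of `u ≡ 3 mod 4` up to a small tail
(`cert_le`), the tail being controlled by `ψ N ≤ 1.12 N` (`psi_le`).
-/

/-- The simplest quartic binary form `F_t^{(4)}(x,y) = x^4 - t x^3 y - 6 x^2 y^2 + t x y^3 + y^4`. -/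
def F4 {R : Type*} [CommRing R] (t : ℤ) (x y : R) : R :=
  x ^ 4 - (t : R) * x ^ 3 * y - 6 * x ^ 2 * y ^ 2 + (t : R) * x * y ^ 3 + y ^ 4

open Finset

/-! ### Elementary reduction -/

set_option maxHeartbeats 1000000 in
/-- A solution with `|b| ≤ a / 2`, `b ≠ 0` and `a ≥ 4` lies close to the root of `F` near `b / a = 1 / t`.
Integrality of `D = a (a - t b) - 5 b ^ 2`, which the inequality forces to be small, then makes `a` at
least of order `t ^ 3`. -/
lemma elem_reduction (t a b : ℤ) (ht : 58 ≤ t) (ha : 4 ≤ a) (hb : 2 * |b| ≤ a)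
    (hb0 : b ≠ 0)
    (hF : |a ^ 4 - t * a ^ 3 * b - 6 * a ^ 2 * b ^ 2 + t * a * b ^ 3 + b ^ 4| ≤ 24 * t + 28) :
    0 < b ∧ t * b < a ∧ t ^ 3 < 25 * a := by
  obtain ⟨hF1, hF2⟩ := abs_le.mp hF
  obtain ⟨hb1, hb2⟩ := abs_le.mp (by lia : |b| ≤ a / 2)
  have h2b : 2 * b ≤ a := by lia
  have h2b' : -a ≤ 2 * b := by lia
  have hbsq : 4 * b ^ 2 ≤ a ^ 2 := by nlinarith
  have hapos : 0 < a := by lia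
  have ha3 : 4 ^ 3 ≤ a ^ 3 := pow_le_pow_left₀ (by norm_num) ha 3
  rcases lt_or_gt_of_ne hb0 with hneg | hpos
  · exfalso
    obtain ⟨e, rfl⟩ : ∃ e, b = -e := ⟨-b, by ring⟩
    have he : 1 ≤ e := by lia
    have h1 : 0 ≤ a * e * t * (a ^ 2 - 4 * e ^ 2) := by
      apply mul_nonneg (by positivity) (by nlinarith)
    have h2 : 0 ≤ a ^ 2 * e * (a - 2 * e) := mul_nonneg (by positivity) (by lia)
    have h3 : 64 * (3 * t - 12) ≤ a ^ 3 * e * (3 * t - 12) := by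
      apply mul_le_mul_of_nonneg_right _ (by lia)
      nlinarith
    have h4 : 0 ≤ a ^ 4 := by positivity
    have h5 : 0 ≤ e ^ 4 := by positivity
    nlinarith
  · have hb1 : 1 ≤ b := hpos
    have k1 : 3 * t * a ^ 3 * b ≤ 4 * a ^ 4 + 4 * (24 * t + 28) := by
      have h1 : 0 ≤ a * b * t * (a ^ 2 - 4 * b ^ 2) := by
        apply mul_nonneg (by positivity) (by nlinarith)
      have h2 : 0 ≤ b ^ 2 * (a ^ 2 - 4 * b ^ 2) := mul_nonneg (by positivity) (by lia)
      nlinarith [sq_nonneg (b ^ 2)]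
    have k2 : 20 ≤ a := by
      by_contra hcon
      have h19 : a ≤ 19 := by lia
      have h1 : 3 * t * a ^ 3 * 1 ≤ 3 * t * a ^ 3 * b :=
        mul_le_mul_of_nonneg_left hb1 (by positivity)
      have h2 : (64:ℤ) * (3 * t - 76) ≤ a ^ 3 * (3 * t - 76) :=
        mul_le_mul_of_nonneg_right ha3 (by lia)
      have h3 : 0 ≤ a ^ 3 * (19 - a) := mul_nonneg (by positivity) (by lia)
      nlinarith
    -- `a` is at least `0.72 t b`
    have k3 : 72 * (t * b) ≤ 100 * a := by
      have h8000 : 20 ^ 3 ≤ a ^ 3 := pow_le_pow_left₀ (by norm_num) k2 3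
      have h1 : 0 ≤ (a ^ 3 - 8000) * t := mul_nonneg (by lia) (by lia)
      have h2 : 0 ≤ a ^ 3 * t * (b - 1) := mul_nonneg (by positivity) (by lia)
      have : a ^ 3 * (72 * (t * b)) ≤ a ^ 3 * (100 * a) := by nlinarith
      exact le_of_mul_le_mul_left this (by positivity)
    have hta : 72 * t ≤ 100 * a := by nlinarith
    have hba : 41 * b ≤ a := by nlinarith
    have hba2 : 1681 * b ^ 2 ≤ a ^ 2 := by nlinarith
    have ha41 : 42 ≤ a := by lia
    have hf : 24 * t + 28 ≤ 35 * a := by lia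
    obtain ⟨c, hc⟩ : ∃ c, c = a - t * b := ⟨_, rfl⟩
    obtain ⟨D, hD⟩ : ∃ D, D = a * c - 5 * b ^ 2 := ⟨_, rfl⟩
    have hfac : a ^ 4 - t * a ^ 3 * b - 6 * a ^ 2 * b ^ 2 + t * a * b ^ 3 + b ^ 4
        = (a ^ 2 - b ^ 2) * D - 4 * b ^ 4 := by rw [hD, hc]; ring
    rw [hfac] at hF1 hF2
    have hab : 41 * a ≤ a ^ 2 - b ^ 2 := by nlinarith
    have hD0 : 0 ≤ D := by
      by_contra hcon
      have : D ≤ -1 := by lia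
      have h1 : (a ^ 2 - b ^ 2) * D ≤ (a ^ 2 - b ^ 2) * (-1) :=
        mul_le_mul_of_nonneg_left this (by lia)
      have : 0 ≤ b ^ 4 := by positivity
      lia
    have hcpos : 0 ≤ c := by
      by_contra hcon
      have : c ≤ -1 := by lia
      nlinarith
    have hD1 : 1 ≤ D := by
      by_contra hcon
      have hDz : D = 0 := by lia
      have hb4 : b ^ 4 ≤ 6 * t + 7 := by rw [hDz] at hF1; lia
      have hc1 : 1 ≤ c := by
        by_contra h
        have : c = 0 := by lia
        rw [this] at hD
        nlinarith
      have h5 : a ≤ 5 * b ^ 2 := by nlinarith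
      have h6 : 72 * t ≤ 500 * b := by
        have : b * (72 * t) ≤ b * (500 * b) := by nlinarith
        exact le_of_mul_le_mul_left this hpos
      have h9 : 9 ≤ b := by lia
      have : 729 * b ≤ b ^ 4 := by
        have : 9 ^ 3 ≤ b ^ 3 := pow_le_pow_left₀ (by norm_num) h9 3
        calc 729 * b ≤ b ^ 3 * b := mul_le_mul_of_nonneg_right (by lia) hpos.le
          _ = b ^ 4 := by ring
      lia
    have hc1 : 1 ≤ c := by
      by_contra h
      have : c = 0 := by lia
      rw [this] at hD
      nlinarith
    have htb : t * b < a := by lia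
    have hrel : b * (t * c - 5 * b) = D - c ^ 2 := by rw [hD, show a = t * b + c by lia]; ring
    have htc : t * c < 5 * b := by
      by_contra hcon
      have h1 : 5 * b ≤ t * c := by lia
      have h2 : 0 ≤ b * (t * c - 5 * b) := mul_nonneg hpos.le (by lia)
      have h3 : c ^ 2 ≤ D := by lia
      have h4 : (5 * b) ^ 2 ≤ (t * c) ^ 2 := pow_le_pow_left₀ (by positivity) h1 2
      have h5 : t ^ 2 * b ^ 2 ≤ a ^ 2 := by
        rw [← mul_pow]
        exact pow_le_pow_left₀ (by positivity) htb.le 2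
      have h6 : 24 * b ^ 2 ≤ (t ^ 2 - 1) * c ^ 2 := by
        have e0 : 0 ≤ c ^ 2 * (t ^ 2 - 25) := mul_nonneg (sq_nonneg c) (by nlinarith)
        linarith
      have h7 : 24 * b ^ 4 ≤ (a ^ 2 - b ^ 2) * D := by
        have e1 : b ^ 2 * (24 * b ^ 2) ≤ b ^ 2 * ((t ^ 2 - 1) * c ^ 2) :=
          mul_le_mul_of_nonneg_left h6 (sq_nonneg b)
        have e2 : b ^ 2 * ((t ^ 2 - 1) * c ^ 2) ≤ (a ^ 2 - b ^ 2) * c ^ 2 := by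
          have := mul_nonneg (sq_nonneg c) (sub_nonneg.mpr h5)
          linarith
        have e3 : (a ^ 2 - b ^ 2) * c ^ 2 ≤ (a ^ 2 - b ^ 2) * D :=
          mul_le_mul_of_nonneg_left h3 (by lia)
        linarith
      have h8 : (a ^ 2 - b ^ 2) * 1 ≤ (a ^ 2 - b ^ 2) * D :=
        mul_le_mul_of_nonneg_left hD1 (by lia)
      nlinarith
    have hbc : b < c ^ 2 := by
      have : b * (t * c - 5 * b) ≤ b * (-1) := mul_le_mul_of_nonneg_left (by lia) hpos.le
      lia
    have htb2 : t ^ 2 < 25 * b := by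
      have h1 : (t * c) ^ 2 < (5 * b) ^ 2 := pow_lt_pow_left₀ htc (by positivity) two_ne_zero
      have h2 : b * t ^ 2 ≤ c ^ 2 * t ^ 2 := mul_le_mul_of_nonneg_right hbc.le (sq_nonneg t)
      have h2 : b * t ^ 2 < b * (25 * b) := by linarith
      exact lt_of_mul_lt_mul_left h2 hpos.le
    have h1 : t * t ^ 2 < t * (25 * b) := mul_lt_mul_of_pos_left htb2 (by lia)
    exact ⟨hpos, htb, by linarith⟩

/-! ### Padé denominators and their recurrence -/

/-- The product `(4n - 1)(4n - 5) ⋯ (4(n - j) + 3)` of `j` factors. -/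
def padeProd (n j : ℕ) : ℕ := ∏ i ∈ range j, (4 * (n - i) - 1)

/-- The coefficients `2 ^ j (2n - j)! (4n - 1)(4n - 5) ⋯ / (n! (n - j)! j!)` of the Padé denominators of
`(1 - z) ^ (1 / 4)`, normalised to be integers. -/
noncomputable def padeCoeff (n j : ℕ) : ℚ :=
  if j ≤ n then 2 ^ j * ((2 * n - j).factorial : ℚ) * padeProd n j /
    (n.factorial * (n - j).factorial * j.factorial) else 0

lemma padeProd_succ (n j : ℕ) : padeProd n (j + 1) = padeProd n j * (4 * (n - j) - 1) := by
  simp [padeProd, prod_range_succ]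

lemma padeProd_succ_succ (n j : ℕ) : padeProd (n + 1) (j + 1) = (4 * n + 3) * padeProd n j := by
  simp only [padeProd, prod_range_succ']
  rw [mul_comm]
  congr 1
  · apply prod_congr rfl; intro i _; congr 2; lia

lemma padeCoeff_zero (n : ℕ) : padeCoeff n 0 = (2 * n).factorial / (n.factorial * n.factorial) := by
  simp [padeCoeff, padeProd]

lemma padeCoeff_rec_zero (n : ℕ) :
    ((n + 2 : ℕ) : ℚ) * padeCoeff (n + 2) 0 = (2 * n + 3) * (2 * padeCoeff (n + 1) 0) := by
  rw [padeCoeff_zero, padeCoeff_zero, show 2 * (n + 2) = 2 * n + 4 by ring,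
    show 2 * (n + 1) = 2 * n + 2 by ring]
  simp only [Nat.factorial_succ]
  have := Nat.factorial_ne_zero n
  field_simp
  push_cast
  ring

lemma padeCoeff_rec_one (n : ℕ) :
    ((n + 2 : ℕ) : ℚ) * padeCoeff (n + 2) 1 =
      (2 * n + 3) * (2 * padeCoeff (n + 1) 1 + 8 * padeCoeff (n + 1) 0) := by
  rw [padeCoeff_zero]
  unfold padeCoeff
  rw [if_pos (by lia), if_pos (by lia), show 2 * (n + 2) - 1 = 2 * n + 3 by lia,
    show 2 * (n + 1) - 1 = 2 * n + 1 by lia, show 2 * (n + 1) = 2 * n + 2 by ring]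
  simp only [padeProd, prod_range_one, Nat.sub_zero, Nat.add_sub_cancel,
    show n + 2 - 1 = n + 1 by lia, show 4 * (n + 2) - 1 = 4 * n + 7 by lia,
    show 4 * (n + 1) - 1 = 4 * n + 3 by lia, Nat.factorial_succ, Nat.factorial_zero]
  have := Nat.factorial_ne_zero n
  field_simp
  push_cast
  ring

/-- The generic case of the three-term recurrence for the coefficients. -/
lemma padeCoeff_rec_mid (J m : ℕ) :
    ((J + m + 1 + 2 : ℕ) : ℚ) * padeCoeff (J + m + 1 + 2) (J + 2) =
      (2 * (J + m + 1 : ℕ) + 3) * (2 * padeCoeff (J + m + 1 + 1) (J + 2) +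
        8 * padeCoeff (J + m + 1 + 1) (J + 1)) -
      (64 * ((J + m + 1 : ℕ) + 1) - 4 / ((J + m + 1 : ℕ) + 1)) * padeCoeff (J + m + 1) J := by
  have hP1 : padeProd (J + m + 1 + 2) (J + 2) =
      (4 * (J + m + 2) + 3) * ((4 * (J + m + 1) + 3) * padeProd (J + m + 1) J) := by
    rw [show J + m + 1 + 2 = (J + m + 2) + 1 by ring, padeProd_succ_succ, padeProd_succ_succ]
  have hP3 : padeProd (J + m + 1 + 1) (J + 1) =
      (4 * (J + m + 1) + 3) * padeProd (J + m + 1) J := by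
    rw [padeProd_succ_succ]
  have hP2 : padeProd (J + m + 1 + 1) (J + 2) =
      (4 * (J + m + 1) + 3) * padeProd (J + m + 1) J * (4 * m + 3) := by
    rw [padeProd_succ, hP3]; congr 1; lia
  unfold padeCoeff
  rw [if_pos (by lia), if_pos (by lia), if_pos (by lia), if_pos (by lia), hP1, hP2, hP3]
  generalize padeProd (J + m + 1) J = P
  rw [show 2 * (J + m + 1 + 2) - (J + 2) = J + 2 * m + 4 by lia,
    show J + m + 1 + 2 - (J + 2) = m + 1 by lia,
    show 2 * (J + m + 1 + 1) - (J + 2) = J + 2 * m + 2 by lia,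
    show J + m + 1 + 1 - (J + 2) = m by lia,
    show 2 * (J + m + 1 + 1) - (J + 1) = J + 2 * m + 3 by lia,
    show J + m + 1 + 1 - (J + 1) = m + 1 by lia,
    show 2 * (J + m + 1) - J = J + 2 * m + 2 by lia,
    show J + m + 1 - J = m + 1 by lia]
  simp only [Nat.factorial_succ, show J + 2 * m + 4 = (J + 2 * m + 3) + 1 by ring,
    show J + 2 * m + 3 = (J + 2 * m + 2) + 1 by ring, show J + m + 1 + 2 = (J + m) + 1 + 1 + 1 by ring]
  have h1 := Nat.factorial_ne_zero J
  have h2 := Nat.factorial_ne_zero m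
  have h3 := Nat.factorial_ne_zero (J + m)
  have h4 : ((J:ℚ) + m + 1 + 1) ≠ 0 := by positivity
  push_cast
  field_simp
  ring

/-- The boundary case `j = n + 1`. -/
lemma padeCoeff_rec_last (J : ℕ) :
    ((J + 2 : ℕ) : ℚ) * padeCoeff (J + 2) (J + 2) =
      (2 * (J : ℕ) + 3) * (2 * padeCoeff (J + 1) (J + 2) + 8 * padeCoeff (J + 1) (J + 1)) -
      (64 * ((J : ℕ) + 1) - 4 / ((J : ℕ) + 1)) * padeCoeff J J := by
  have hP1 : padeProd (J + 2) (J + 2) =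
      (4 * (J + 1) + 3) * ((4 * J + 3) * padeProd J J) := by
    rw [show J + 2 = (J + 1) + 1 by ring, padeProd_succ_succ, padeProd_succ_succ]
  unfold padeCoeff
  rw [if_pos (by lia), if_neg (by lia), if_pos (by lia), if_pos (by lia), hP1, padeProd_succ_succ]
  generalize padeProd J J = P
  rw [show 2 * (J + 2) - (J + 2) = J + 2 by lia, show 2 * (J + 1) - (J + 1) = J + 1 by lia,
    show 2 * J - J = J by lia]
  simp only [Nat.factorial_succ, Nat.sub_self, Nat.factorial_zero]
  have h1 := Nat.factorial_ne_zero J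
  have h4 : ((J:ℚ) + 1) ≠ 0 := by positivity
  push_cast
  field_simp
  ring

/-- The homogenised Padé denominator. At `A = t + 4i`, the number `padeQ A n * conj (A ^ (1 / 4))` is
almost real. -/
noncomputable def padeQ (A : ℂ) (n : ℕ) : ℂ :=
  ∑ j ∈ range (n + 1), (padeCoeff n j : ℂ) * (-Complex.I) ^ j * A ^ (n - j)

/-- The three-term recurrence. At `A = t + 4i` the factor `A - 4i` is the real number `t`. -/
lemma padeQ_rec (A : ℂ) (n : ℕ) :
    ((n : ℂ) + 2) * padeQ A (n + 2) = (2 * n + 3) * (2 * (A - 4 * Complex.I)) * padeQ A (n + 1) +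
      (64 * (n + 1) - 4 / (n + 1)) * padeQ A n := by
  have e1 : padeQ A (n + 2) = (padeCoeff (n + 2) 0 : ℂ) * A ^ (n + 2) +
      (padeCoeff (n + 2) 1 : ℂ) * (-Complex.I) * A ^ (n + 1) +
      ∑ J ∈ range (n + 1), (padeCoeff (n + 2) (J + 2) : ℂ) * (-Complex.I) ^ (J + 2) * A ^ (n - J) := by
    unfold padeQ
    rw [show n + 2 + 1 = (n + 1) + 1 + 1 by ring, sum_range_succ', sum_range_succ']
    simp only [Nat.sub_zero, pow_zero, zero_add, pow_one, mul_one]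
    rw [add_comm, ← add_assoc, add_assoc, add_assoc]
    congr 1
    rw [add_comm]
    congr 1
    apply sum_congr rfl
    intro J _
    rw [show n + 2 - (J + 1 + 1) = n - J by lia]
  have e2 : A * padeQ A (n + 1) = (padeCoeff (n + 1) 0 : ℂ) * A ^ (n + 2) +
      (padeCoeff (n + 1) 1 : ℂ) * (-Complex.I) * A ^ (n + 1) +
      ∑ J ∈ range (n + 1), (padeCoeff (n + 1) (J + 2) : ℂ) * (-Complex.I) ^ (J + 2) * A ^ (n - J) := by
    unfold padeQ
    rw [show n + 1 + 1 = n + 1 + 1 by ring, sum_range_succ', sum_range_succ', sum_range_succ _ n]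
    rw [show padeCoeff (n + 1) (n + 2) = 0 by unfold padeCoeff; rw [if_neg (by lia)]]
    simp only [Nat.sub_zero, pow_zero, zero_add, pow_one, mul_one, mul_add, mul_sum]
    have : ∀ J ∈ range n, A * ((padeCoeff (n + 1) (J + 1 + 1) : ℂ) * (-Complex.I) ^ (J + 1 + 1) *
        A ^ (n + 1 - (J + 1 + 1))) =
        (padeCoeff (n + 1) (J + 2) : ℂ) * (-Complex.I) ^ (J + 2) * A ^ (n - J) := by
      intro J hJ
      have := mem_range.mp hJ
      rw [show n - J = (n + 1 - (J + 1 + 1)) + 1 by lia, pow_succ A]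
      ring
    rw [sum_congr rfl this]
    push_cast
    ring
  have e3 : (-Complex.I) * padeQ A (n + 1) = (padeCoeff (n + 1) 0 : ℂ) * (-Complex.I) * A ^ (n + 1) +
      ∑ J ∈ range (n + 1), (padeCoeff (n + 1) (J + 1) : ℂ) * (-Complex.I) ^ (J + 2) * A ^ (n - J) := by
    unfold padeQ
    rw [sum_range_succ', mul_add, mul_sum, add_comm]
    simp only [Nat.sub_zero, pow_zero, mul_one]
    congr 1
    · ring
    · apply sum_congr rfl
      intro J _
      rw [show n + 1 - (J + 1) = n - J by lia]
      ring
  have e4 : padeQ A n = - ∑ J ∈ range (n + 1),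
      (padeCoeff n J : ℂ) * (-Complex.I) ^ (J + 2) * A ^ (n - J) := by
    unfold padeQ
    rw [← sum_neg_distrib]
    apply sum_congr rfl
    intro J _
    rw [pow_add, neg_sq, Complex.I_sq]
    ring
  have hcoef : ∀ J ∈ range (n + 1), ((n : ℂ) + 2) * padeCoeff (n + 2) (J + 2) =
      (2 * n + 3) * (2 * padeCoeff (n + 1) (J + 2) + 8 * padeCoeff (n + 1) (J + 1)) -
      (64 * (n + 1) - 4 / (n + 1)) * padeCoeff n J := by
    intro J hJ
    have hJ := mem_range.mp hJ
    have key : ((n + 2 : ℕ) : ℚ) * padeCoeff (n + 2) (J + 2) =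
        (2 * n + 3) * (2 * padeCoeff (n + 1) (J + 2) + 8 * padeCoeff (n + 1) (J + 1)) -
        (64 * (n + 1) - 4 / (n + 1)) * padeCoeff n J := by
      rcases Nat.lt_or_ge J n with h | h
      · obtain ⟨m, rfl⟩ : ∃ m, n = J + m + 1 := ⟨n - J - 1, by lia⟩
        exact padeCoeff_rec_mid J m
      · obtain rfl : J = n := by lia
        exact padeCoeff_rec_last J
    have := congrArg (fun x : ℚ => (x : ℂ)) key
    push_cast at this
    exact this
  have h0 := congrArg (fun x : ℚ => (x : ℂ)) (padeCoeff_rec_zero n)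
  have h1 := congrArg (fun x : ℚ => (x : ℂ)) (padeCoeff_rec_one n)
  push_cast at h0 h1
  have hs : ((n : ℂ) + 2) * ∑ J ∈ range (n + 1),
        (padeCoeff (n + 2) (J + 2) : ℂ) * (-Complex.I) ^ (J + 2) * A ^ (n - J) =
      (2 * n + 3) * (2 * ∑ J ∈ range (n + 1),
        (padeCoeff (n + 1) (J + 2) : ℂ) * (-Complex.I) ^ (J + 2) * A ^ (n - J) +
        8 * ∑ J ∈ range (n + 1),
        (padeCoeff (n + 1) (J + 1) : ℂ) * (-Complex.I) ^ (J + 2) * A ^ (n - J)) -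
      (64 * (n + 1) - 4 / (n + 1)) * ∑ J ∈ range (n + 1),
        (padeCoeff n J : ℂ) * (-Complex.I) ^ (J + 2) * A ^ (n - J) := by
    simp only [mul_sum, ← sum_add_distrib, ← sum_sub_distrib]
    apply sum_congr rfl
    intro J hJ
    have := hcoef J hJ
    linear_combination (-Complex.I) ^ (J + 2) * A ^ (n - J) * this
  have e5 : (2 * (n:ℂ) + 3) * (2 * (A - 4 * Complex.I)) * padeQ A (n + 1) =
      (2 * n + 3) * (2 * (A * padeQ A (n + 1)) + 8 * ((-Complex.I) * padeQ A (n + 1))) := by ring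
  rw [e5, e2, e3, e1, e4]
  linear_combination hs + A ^ (n + 2) * h0 + (-Complex.I) * A ^ (n + 1) * h1

lemma padeQ_zero (A : ℂ) : padeQ A 0 = 1 := by
  simp [padeQ, padeCoeff, padeProd]

lemma padeQ_one (A : ℂ) : padeQ A 1 = 2 * A - 6 * Complex.I := by
  simp [padeQ, padeCoeff, padeProd, sum_range_succ]
  ring

/-! ### The common factor of the coefficients -/

/-- The guaranteed common divisor of the coefficients `padeCoeff n j`, `j ≤ n`: one factor `p` for every
odd prime power `p ^ e` for which `n / p ^ e` has fractional part at least `3 / 4`, up to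
rounding. -/
def padeG (n : ℕ) : ℕ :=
  ∏ m ∈ (Icc 1 (4 * n)).filter (fun m => Odd m ∧ IsPrimePow m ∧ 3 * m ≤ 4 * (n % m) + 1),
    m.minFac

/-- The `p`-adic heart of `padeG_dvd`: a Legendre-type inequality between the numbers of multiples of
`m` in the numerator and denominator of `padeCoeff n j`, with a gain of `1` when
`n % m` is at least about `3 m / 4`. -/
lemma floor_count (n j m : ℕ) (hm : Odd m) (hj : j ≤ n) :
    n / m + (n - j) / m + j / m + (if 3 * m ≤ 4 * (n % m) + 1 then 1 else 0) ≤
      (2 * n - j) / m + #{i ∈ range j | m ∣ 4 * (n - i) - 1} := by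
  have hm0 : 0 < m := hm.pos
  obtain ⟨v, k, hvm, hv⟩ : ∃ v k, v ≤ m ∧ 4 * v = k * m + 1 := by
    obtain ⟨u, hu⟩ := hm
    rcases Nat.even_or_odd' u with ⟨w, hw | hw⟩
    · exact ⟨3 * w + 1, 3, by lia, by lia⟩
    · exact ⟨w + 1, 1, by lia, by lia⟩
  obtain ⟨i0, hi0⟩ : ∃ i0, i0 = (n + m - v) % m := ⟨_, rfl⟩
  have hi0m : i0 < m := hi0 ▸ Nat.mod_lt _ hm0
  have hdvd0 : (m : ℤ) ∣ 4 * ((n : ℤ) - i0) - 1 := by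
    have h1 : (m : ℤ) ∣ ((n + m - v : ℕ) : ℤ) - i0 := by
      rw [hi0]; push_cast; exact Int.dvd_self_sub_emod
    have h2 : 4 * ((n : ℤ) - i0) - 1 = 4 * (((n + m - v : ℕ) : ℤ) - i0) + m * (k - 4) := by
      rw [Nat.cast_sub (by lia)]; push_cast
      have : (4 : ℤ) * v = k * m + 1 := by exact_mod_cast hv
      linarith
    rw [h2]
    exact dvd_add (dvd_mul_of_dvd_right h1 4) (dvd_mul_right _ _)
  have hcount : j / m + (if i0 < j % m then 1 else 0) ≤ #{i ∈ range j | m ∣ 4 * (n - i) - 1} := by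
    have := Nat.count_modEq_card j hm0 i0
    rw [Nat.mod_eq_of_lt hi0m] at this
    rw [← this, Nat.count_eq_card_filter_range]
    apply card_le_card
    intro i hi
    rw [mem_filter, mem_range] at hi ⊢
    refine ⟨hi.1, ?_⟩
    have h1 : (m : ℤ) ∣ (i0 : ℤ) - i := (Nat.modEq_iff_dvd.mp hi.2)
    have h2 : (m : ℤ) ∣ ((4 * (n - i) - 1 : ℕ) : ℤ) := by
      rw [Nat.cast_sub (by lia)]; push_cast
      rw [Nat.cast_sub (by lia)]
      have : 4 * ((n : ℤ) - i) - 1 = (4 * ((n : ℤ) - i0) - 1) + 4 * ((i0 : ℤ) - i) := by ring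
      rw [this]
      exact dvd_add hdvd0 (dvd_mul_of_dvd_right h1 4)
    exact_mod_cast h2
  have hadd : n / m + (n - j) / m ≤ (2 * n - j) / m := by
    have : n / m + (n - j) / m ≤ (n + (n - j)) / m := Nat.div_add_div_le_add_div
    rwa [show n + (n - j) = 2 * n - j by lia] at this
  by_cases hcond : 3 * m ≤ 4 * (n % m) + 1
  · rw [if_pos hcond]
    by_cases hs : i0 < j % m
    · rw [if_pos hs] at hcount; lia
    · rw [if_neg hs] at hcount
      have hr : n % m < m := Nat.mod_lt _ hm0
      have hn := Nat.div_add_mod n m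
      have hjj := Nat.div_add_mod j m
      -- residue `d = n % m - i0`
      have hd : (m : ℤ) ∣ 4 * (((n % m : ℕ) : ℤ) - i0) - 1 := by
        have h1 : (m : ℤ) ∣ (n : ℤ) - ((n % m : ℕ) : ℤ) := by
          push_cast; exact Int.dvd_self_sub_emod
        have : 4 * (((n % m : ℕ) : ℤ) - i0) - 1 = (4 * ((n : ℤ) - i0) - 1) -
          4 * ((n : ℤ) - ((n % m : ℕ) : ℤ)) := by ring
        rw [this]
        exact dvd_sub hdvd0 (dvd_mul_of_dvd_right h1 4)
      generalize hrdef : n % m = r at *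
      generalize hsdef : j % m = s at *
      generalize hadef : n / m = a at *
      generalize hcdef : j / m = c at *
      obtain ⟨k', hk'⟩ := hd
      have hk1 : k' < 4 := by
        by_contra h
        have : (m : ℤ) * 4 ≤ m * k' := mul_le_mul_of_nonneg_left (by lia) (by lia)
        lia
      have hk2 : -5 < k' := by
        by_contra h
        have : (m : ℤ) * k' ≤ m * (-5) := mul_le_mul_of_nonneg_left (by lia) (by lia)
        lia
      obtain ⟨u, hu⟩ := hm
      have h2r : s ≤ r ∧ m ≤ 2 * r - s := by
        interval_cases k' <;> lia
      have hca : c ≤ a := by rw [← hcdef, ← hadef]; exact Nat.div_le_div_right hj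
      obtain ⟨e, rfl⟩ := Nat.exists_eq_add_of_le hca
      have e1 : (n - j) / m = e := by
        have : n - j = r - s + m * e := by rw [← hn, ← hjj, mul_add]; lia
        rw [this, Nat.add_mul_div_left _ _ hm0, Nat.div_eq_of_lt (by lia), zero_add]
      have e2 : (c + e) + e + 1 ≤ (2 * n - j) / m := by
        rw [Nat.le_div_iff_mul_le hm0]
        rw [← hn, ← hjj]
        have : (c + e + e + 1) * m = m * c + m * e + m * e + m := by ring
        rw [this, mul_add]; lia
      lia
  · rw [if_neg hcond]
    have : j / m ≤ j / m + (if i0 < j % m then 1 else 0) := Nat.le_add_right _ _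
    lia

lemma padeProd_ne_zero {n j : ℕ} (hj : j ≤ n) : padeProd n j ≠ 0 := by
  unfold padeProd
  rw [prod_ne_zero_iff]
  intro i hi
  have := mem_range.mp hi
  lia

lemma padeG_ne_zero (n : ℕ) : padeG n ≠ 0 := by
  unfold padeG
  rw [prod_ne_zero_iff]
  intro m _
  exact (Nat.minFac_pos m).ne'

lemma factorization_padeG_le {n p : ℕ} (hp : p.Prime) :
    (padeG n).factorization p ≤
      #{e ∈ Ico 1 (4 * n + 1) | Odd (p ^ e) ∧ 3 * p ^ e ≤ 4 * (n % p ^ e) + 1} := by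
  unfold padeG
  rw [Nat.factorization_prod_apply (fun m _ => (Nat.minFac_pos m).ne')]
  have h1 : ∀ m ∈ (Icc 1 (4 * n)).filter
      (fun m => Odd m ∧ IsPrimePow m ∧ 3 * m ≤ 4 * (n % m) + 1),
      (m.minFac).factorization p = if m.minFac = p then 1 else 0 := by
    intro m hm
    simp only [mem_filter] at hm
    rw [Nat.Prime.factorization (Nat.minFac_prime hm.2.2.1.ne_one), Finsupp.single_apply]
  rw [sum_congr rfl h1, ← card_filter]
  calc _ ≤ #(({e ∈ Ico 1 (4 * n + 1) | Odd (p ^ e) ∧ 3 * p ^ e ≤ 4 * (n % p ^ e) + 1}).image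
        (fun e => p ^ e)) := by
        apply card_le_card
        intro m hm
        simp only [mem_filter, mem_Icc, mem_image, mem_Ico] at hm ⊢
        obtain ⟨⟨⟨h1, h2⟩, hodd, hpp, hc⟩, hpm⟩ := hm
        obtain ⟨q, e, hq, he, rfl⟩ := hpp
        have hq' := hq.nat_prime
        have : q = p := by rw [← hpm, hq'.pow_minFac he.ne']
        subst this
        refine ⟨e, ⟨⟨he, ?_⟩, hodd, hc⟩, rfl⟩
        have := Nat.lt_pow_self hq'.one_lt (n := e)
        lia
    _ ≤ _ := card_image_le

lemma card_pow_dvd_le_factorization {p k N : ℕ} (hp : p.Prime) (hk : k ≠ 0) :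
    #{e ∈ Ico 1 N | p ^ e ∣ k} ≤ k.factorization p := by
  calc _ ≤ #(Ico 1 (k.factorization p + 1)) := by
        apply card_le_card
        intro e he
        simp only [mem_filter, mem_Ico] at he ⊢
        have := (hp.pow_dvd_iff_le_factorization hk).mp he.2
        lia
    _ = _ := by simp

/-- The divisibility that makes both the integrality and the large common factor `padeG n`. -/
lemma padeG_dvd (n j : ℕ) (hj : j ≤ n) :
    padeG n * (n.factorial * (n - j).factorial * j.factorial) ∣
      2 ^ j * (2 * n - j).factorial * padeProd n j := by
  have hf := Nat.factorial_ne_zero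
  have hP := padeProd_ne_zero hj
  have hG := padeG_ne_zero n
  have h2 : (2 ^ j : ℕ) ≠ 0 := by positivity
  rw [← Nat.factorization_prime_le_iff_dvd
    (mul_ne_zero hG (mul_ne_zero (mul_ne_zero (hf _) (hf _)) (hf _)))
    (mul_ne_zero (mul_ne_zero h2 (hf _)) hP)]
  intro p hp
  rw [Nat.factorization_mul hG (mul_ne_zero (mul_ne_zero (hf _) (hf _)) (hf _)),
    Nat.factorization_mul (mul_ne_zero (hf _) (hf _)) (hf _),
    Nat.factorization_mul (hf _) (hf _),
    Nat.factorization_mul (mul_ne_zero h2 (hf _)) hP, Nat.factorization_mul h2 (hf _)]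
  simp only [Finsupp.add_apply]
  have hGle := factorization_padeG_le (n := n) hp
  have := Fact.mk hp
  rcases hp.eq_two_or_odd' with rfl | hodd
  · have hG0 : (padeG n).factorization 2 = 0 := by
      rw [← Nat.le_zero]
      refine hGle.trans (le_of_eq ?_)
      rw [card_eq_zero, filter_eq_empty_iff]
      intro e he
      have := (mem_Ico.mp he).1
      rintro ⟨h, -⟩
      rw [Nat.odd_pow_iff (by lia)] at h
      exact absurd h (by decide)
    have h1 : (n.factorial).factorization 2 + ((n - j).factorial).factorization 2 ≤
        ((2 * n - j).factorial).factorization 2 := by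
      have := Nat.factorial_mul_factorial_dvd_factorial_add n (n - j)
      rw [show n + (n - j) = 2 * n - j by lia] at this
      have := (Nat.factorization_le_iff_dvd (mul_ne_zero (hf _) (hf _)) (hf _)).mpr this 2
      rwa [Nat.factorization_mul (hf _) (hf _)] at this
    have h3 : (j.factorial).factorization 2 ≤ j := by
      have := sub_one_mul_padicValNat_factorial (p := 2) j
      rw [Nat.factorization_def _ hp]
      lia
    have h4 : (2 ^ j : ℕ).factorization 2 = j := by
      simp [Nat.factorization_pow, Nat.Prime.factorization Nat.prime_two]
    lia
  · have hlog : ∀ k ≤ 2 * n, Nat.log p k < 4 * n + 1 := fun k hk => by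
      have := Nat.log_le_self p k
      lia
    have hleg : ∀ k ≤ 2 * n, (k.factorial).factorization p = ∑ e ∈ Ico 1 (4 * n + 1), k / p ^ e :=
      fun k hk => by rw [Nat.factorization_def _ hp, padicValNat_factorial (hlog k hk)]
    rw [hleg n (by lia), hleg (n - j) (by lia), hleg j (by lia), hleg (2 * n - j) (by lia)]
    have hprod : ∑ e ∈ Ico 1 (4 * n + 1), #{i ∈ range j | p ^ e ∣ 4 * (n - i) - 1} ≤
        (padeProd n j).factorization p := by
      unfold padeProd
      rw [Nat.factorization_prod_apply (fun i hi => by have := mem_range.mp hi; lia)]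
      simp only [card_filter]
      rw [sum_comm]
      apply sum_le_sum
      intro i hi
      rw [← card_filter]
      apply card_pow_dvd_le_factorization hp
      have := mem_range.mp hi; lia
    have hGle2 : (padeG n).factorization p ≤
        ∑ e ∈ Ico 1 (4 * n + 1), (if 3 * p ^ e ≤ 4 * (n % p ^ e) + 1 then 1 else 0) := by
      rw [← card_filter]
      refine hGle.trans (card_le_card ?_)
      intro e he
      simp only [mem_filter] at he ⊢
      exact ⟨he.1, he.2.2⟩
    have hsum := sum_le_sum (s := Ico 1 (4 * n + 1))
      (fun e _ => floor_count n j (p ^ e) hodd.pow hj)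
    simp only [sum_add_distrib] at hsum
    lia

/-- `padeQ` at a Gaussian integer is a Gaussian integer divisible by `padeG n`. -/
lemma padeQ_gaussian (z : GaussianInt) (n : ℕ) :
    ∃ w : GaussianInt, padeQ (GaussianInt.toComplex z) n = padeG n * GaussianInt.toComplex w := by
  have h : ∀ j ∈ range (n + 1), ∃ b : ℕ, padeCoeff n j = padeG n * b := by
    intro j hj
    have hj : j ≤ n := by have := mem_range.mp hj; lia
    obtain ⟨b, hb⟩ := padeG_dvd n j hj
    refine ⟨b, ?_⟩
    unfold padeCoeff
    rw [if_pos hj, div_eq_iff (by positivity)]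
    have : ((2 ^ j * (2 * n - j).factorial * padeProd n j : ℕ) : ℚ) =
      ((padeG n * (n.factorial * (n - j).factorial * j.factorial) * b : ℕ) : ℚ) := by rw [hb]
    push_cast at this
    rw [this]; ring
  choose! b hb using h
  refine ⟨∑ j ∈ range (n + 1), (b j : GaussianInt) * (⟨0, -1⟩ : GaussianInt) ^ j * z ^ (n - j), ?_⟩
  unfold padeQ
  rw [map_sum, mul_sum]
  apply sum_congr rfl
  intro j hj
  have hI : GaussianInt.toComplex (⟨0, -1⟩ : GaussianInt) = -Complex.I := by
    simp [GaussianInt.toComplex_def]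
  rw [hb j hj, map_mul, map_mul, map_pow, map_pow, hI, map_natCast]
  push_cast
  ring

/-! ### Dominant and minimal solutions of the recurrence -/

/-- The real three-term recurrence satisfied by the real and imaginary parts of `padeD t`. -/
def PadeRec (t : ℝ) (u : ℕ → ℝ) : Prop :=
  ∀ n : ℕ, ((n : ℝ) + 2) * u (n + 2) =
    (2 * n + 3) * (2 * t) * u (n + 1) + (64 * (n + 1) - 4 / (n + 1)) * u n

lemma pade_kappa_pos (n : ℕ) : (0 : ℝ) < 64 * (n + 1) - 4 / (n + 1) := by
  have h : (1 : ℝ) ≤ (n : ℝ) + 1 := by linarith [n.cast_nonneg (α := ℝ)]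
  have : 4 / ((n : ℝ) + 1) ≤ 4 := by rw [div_le_iff₀ (by linarith)]; linarith
  linarith

lemma PadeRec.neg {t : ℝ} {u : ℕ → ℝ} (h : PadeRec t u) : PadeRec t (fun n => -u n) := by
  intro n
  have := h n
  linear_combination -this

/-- A solution with a large initial ratio grows by a factor of at least `2 (2n + 1) t / (n + 1)`. -/
lemma PadeRec.dominant {t : ℝ} {c : ℕ → ℝ} (h : PadeRec t c) (ht : 0 < t) (h0 : 0 < c 0)
    (h1 : 2 * t * c 0 ≤ c 1) (n : ℕ) :
    0 < c n ∧ 2 * (2 * n + 1) * t * c n ≤ (n + 1) * c (n + 1) := by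
  induction n with
  | zero => exact ⟨h0, by simpa using h1⟩
  | succ n ih =>
    obtain ⟨ih1, ih2⟩ := ih
    have hpos : 0 < c (n + 1) := by
      have h3 : 0 < 2 * (2 * n + 1) * t * c n := by positivity
      have h4 : 0 < ((n : ℝ) + 1) * c (n + 1) := lt_of_lt_of_le h3 ih2
      exact (mul_pos_iff_of_pos_left (by positivity)).mp h4
    refine ⟨hpos, ?_⟩
    have h5 := h n
    have h6 := mul_pos (pade_kappa_pos n) ih1
    push_cast
    have : ((n : ℝ) + 1 + 1) * c (n + 1 + 1) = (n + 2) * c (n + 2) := by ring_nf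
    rw [this, h5]
    linarith

lemma PadeRec.lower {t : ℝ} {c : ℕ → ℝ} (h : PadeRec t c) (ht : 0 < t) (h0 : 0 < c 0)
    (h1 : 2 * t * c 0 ≤ c 1) (n : ℕ) : n.centralBinom * t ^ n * c 0 ≤ c n := by
  induction n with
  | zero => simp
  | succ n ih =>
    have h2 := (h.dominant ht h0 h1 n).2
    have h3 : ((n : ℝ) + 1) * (n + 1).centralBinom = 2 * (2 * n + 1) * n.centralBinom := by
      exact_mod_cast Nat.succ_mul_centralBinom_succ n
    have h4 : ((n : ℝ) + 1) * ((n + 1).centralBinom * t ^ (n + 1) * c 0) ≤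
        (n + 1) * c (n + 1) := by
      refine le_trans ?_ h2
      calc ((n : ℝ) + 1) * ((n + 1).centralBinom * t ^ (n + 1) * c 0)
          = (((n : ℝ) + 1) * (n + 1).centralBinom) * (t ^ n * t * c 0) := by ring
        _ = (2 * (2 * n + 1) * t) * (n.centralBinom * t ^ n * c 0) := by rw [h3]; ring
        _ ≤ (2 * (2 * n + 1) * t) * c n := mul_le_mul_of_nonneg_left ih (by positivity)
    exact le_of_mul_le_mul_left h4 (by positivity)

lemma PadeRec.wronskian {t : ℝ} {c s : ℕ → ℝ} (hc : PadeRec t c) (hs : PadeRec t s) (n : ℕ) :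
    ((n : ℝ) + 2) * (c (n + 1) * s (n + 2) - s (n + 1) * c (n + 2)) =
      -(64 * (n + 1) - 4 / (n + 1)) * (c n * s (n + 1) - s n * c (n + 1)) := by
  linear_combination c (n + 1) * hs n - s (n + 1) * hc n

/-- The Casoratian of two solutions satisfies a first-order recurrence, hence has size
`64 ^ n / (n + 1)` up to the factor `∏ (1 - 1 / (16 k ^ 2)) ≥ 7 / 8`. -/
lemma PadeRec.wronskian_bounds {t : ℝ} {c s : ℕ → ℝ} (hc : PadeRec t c) (hs : PadeRec t s)
    (n : ℕ) :
    (7 / 8 + 1 / (8 * (n + 1))) * 64 ^ n * |c 0 * s 1 - s 0 * c 1| ≤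
      (n + 1) * |c n * s (n + 1) - s n * c (n + 1)| ∧
    (n + 1) * |c n * s (n + 1) - s n * c (n + 1)| ≤ 64 ^ n * |c 0 * s 1 - s 0 * c 1| := by
  induction n with
  | zero => norm_num
  | succ n ih =>
    obtain ⟨ih1, ih2⟩ := ih
    have hw := congrArg abs (hc.wronskian hs n)
    rw [abs_mul, abs_mul, abs_neg, abs_of_pos (pade_kappa_pos n),
      abs_of_pos (by positivity : (0 : ℝ) < (n : ℝ) + 2)] at hw
    generalize hW : |c n * s (n + 1) - s n * c (n + 1)| = W at *
    generalize hW0 : |c 0 * s 1 - s 0 * c 1| = W0 at *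
    have hW0' : 0 ≤ W0 := hW0 ▸ abs_nonneg _
    push_cast
    have e : ((n : ℝ) + 1 + 1) * |c (n + 1) * s (n + 1 + 1) - s (n + 1) * c (n + 1 + 1)| =
        (64 - 4 / (n + 1) ^ 2) * ((n + 1) * W) := by
      have : (n : ℝ) + 1 ≠ 0 := by positivity
      rw [show (n : ℝ) + 1 + 1 = n + 2 by ring, hw]
      field_simp
    rw [e]
    generalize hm : (n : ℝ) + 1 = m at *
    have hm1 : 1 ≤ m := by rw [← hm]; linarith [n.cast_nonneg (α := ℝ)]
    have hk : 0 ≤ 64 - 4 / m ^ 2 := by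
      have : 4 / m ^ 2 ≤ 4 := by rw [div_le_iff₀ (by positivity)]; nlinarith
      linarith
    constructor
    · have h1 : (7 / 8 + 1 / (8 * (m + 1))) * 64 ≤ (64 - 4 / m ^ 2) * (7 / 8 + 1 / (8 * m)) := by
        have : (64 - 4 / m ^ 2) * (7 / 8 + 1 / (8 * m)) - (7 / 8 + 1 / (8 * (m + 1))) * 64 =
          (9 * m ^ 2 - 8 * m - 1 ) / (2 * m ^ 3 * (m + 1)) := by
          field_simp; ring
        have h2 : 0 ≤ (9 * m ^ 2 - 8 * m - 1 ) / (2 * m ^ 3 * (m + 1)) := by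
          apply div_nonneg _ (by positivity)
          nlinarith
        linarith
      calc (7 / 8 + 1 / (8 * (m + 1))) * 64 ^ (n + 1) * W0
          = ((7 / 8 + 1 / (8 * (m + 1))) * 64) * (64 ^ n * W0) := by ring
        _ ≤ ((64 - 4 / m ^ 2) * (7 / 8 + 1 / (8 * m))) * (64 ^ n * W0) :=
            mul_le_mul_of_nonneg_right h1 (by positivity)
        _ = (64 - 4 / m ^ 2) * ((7 / 8 + 1 / (8 * m)) * 64 ^ n * W0) := by ring
        _ ≤ _ := mul_le_mul_of_nonneg_left ih1 hk
    · calc (64 - 4 / m ^ 2) * (m * W) ≤ (64 - 4 / m ^ 2) * (64 ^ n * W0) :=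
            mul_le_mul_of_nonneg_left ih2 hk
        _ ≤ 64 * (64 ^ n * W0) := by
            apply mul_le_mul_of_nonneg_right _ (by positivity)
            have : 0 ≤ 4 / m ^ 2 := by positivity
            linarith
        _ = _ := by ring

/-- A bounded solution cannot have two consecutive values of the same sign: it would then grow. -/
lemma PadeRec.not_bounded {t : ℝ} {s : ℕ → ℝ} (h : PadeRec t s) (ht : 1 ≤ t) {K : ℝ}
    (hK : ∀ n, |s n| ≤ K) (n : ℕ) (h0 : 0 ≤ s n) (h1 : 0 ≤ s (n + 1))
    (hne : s n ≠ 0 ∨ s (n + 1) ≠ 0) : False := by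
  have hstep : ∀ m, 0 ≤ s m → 0 ≤ s (m + 1) → 2 * s (m + 1) ≤ s (m + 2) := by
    intro m hm hm1
    have h2 := h m
    have h3 := mul_nonneg (pade_kappa_pos m).le hm
    have h4 : (m + 2) * (2 * s (m + 1)) ≤ (m + 2) * s (m + 2) := by
      rw [h2]
      have : ((m : ℝ) + 2) * (2 * s (m + 1)) ≤ (2 * m + 3) * (2 * t) * s (m + 1) := by
        have h5 : ((m : ℝ) + 2) * 2 ≤ (2 * m + 3) * (2 * t) := by
          have := m.cast_nonneg (α := ℝ)
          nlinarith
        nlinarith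
      linarith
    exact le_of_mul_le_mul_left h4 (by positivity)
  have hpos : 0 < s (n + 2) := by
    have h2 := h n
    have : 0 < ((n : ℝ) + 2) * s (n + 2) := by
      rw [h2]
      rcases hne with hne | hne
      · have := mul_pos (pade_kappa_pos n) (lt_of_le_of_ne h0 hne.symm)
        have : 0 ≤ (2 * (n : ℝ) + 3) * (2 * t) * s (n + 1) := by positivity
        linarith
      · have := lt_of_le_of_ne h1 hne.symm
        have h5 : 0 < (2 * (n : ℝ) + 3) * (2 * t) * s (n + 1) := by positivity
        have := mul_nonneg (pade_kappa_pos n).le h0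
        linarith
    exact (mul_pos_iff_of_pos_left (by positivity)).mp this
  have hgrow : ∀ k, 0 ≤ s (n + k + 1) ∧ 2 ^ k * s (n + 2) ≤ s (n + k + 2) := by
    intro k
    induction k with
    | zero => exact ⟨h1, by simp⟩
    | succ k ih =>
      have hp : 0 ≤ s (n + k + 2) := le_trans (by positivity) ih.2
      refine ⟨hp, ?_⟩
      have := hstep (n + k + 1) ih.1 hp
      calc 2 ^ (k + 1) * s (n + 2) = 2 * (2 ^ k * s (n + 2)) := by ring
        _ ≤ 2 * s (n + k + 2) := by linarith [ih.2]
        _ ≤ _ := this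
  obtain ⟨k, hk⟩ := pow_unbounded_of_one_lt (K / s (n + 2)) (one_lt_two)
  have h2 := (hgrow k).2
  rw [div_lt_iff₀ hpos] at hk
  have := (le_abs_self _).trans (hK (n + k + 2))
  linarith

lemma PadeRec.alternating {t : ℝ} {s : ℕ → ℝ} (h : PadeRec t s) (ht : 1 ≤ t) {K : ℝ}
    (hK : ∀ n, |s n| ≤ K) (hne : ∀ n, s n ≠ 0 ∨ s (n + 1) ≠ 0) (n : ℕ) :
    s n * s (n + 1) < 0 := by
  by_contra hcon
  rw [not_lt, mul_nonneg_iff] at hcon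
  rcases hcon with ⟨h1, h2⟩ | ⟨h1, h2⟩
  · exact h.not_bounded ht hK n h1 h2 (hne n)
  · exact h.neg.not_bounded ht (K := K) (fun n => by rw [abs_neg]; exact hK n) n (by simpa using h1)
      (by simpa using h2) (by simpa using hne n)

/-- The size of a bounded solution `s`, measured against a dominant solution `c` through the
Casoratian: as `s` alternates in sign, the two terms of the Casoratian do not cancel. -/
lemma PadeRec.minimal_bounds {t : ℝ} {c s : ℕ → ℝ} (hc : PadeRec t c) (hs : PadeRec t s)
    (ht : 58 ≤ t) (h0 : 0 < c 0) (h1 : 2 * t * c 0 ≤ c 1) {K : ℝ} (hK : ∀ n, |s n| ≤ K)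
    (hW : c 0 * s 1 - s 0 * c 1 ≠ 0) (n : ℕ) :
    (n + 1) * (c (n + 1) * |s n|) ≤ 64 ^ n * |c 0 * s 1 - s 0 * c 1| ∧
    7 / 8 * 64 ^ n * |c 0 * s 1 - s 0 * c 1| ≤ 1.0024 * ((n + 1) * (c (n + 1) * |s n|)) := by
  have hb := hc.wronskian_bounds hs
  have hW0 : 0 < |c 0 * s 1 - s 0 * c 1| := abs_pos.mpr hW
  have hne : ∀ n, s n ≠ 0 ∨ s (n + 1) ≠ 0 := by
    intro m
    by_contra hcon
    push Not at hcon
    have h2 := (hb m).1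
    rw [hcon.1, hcon.2] at h2
    simp only [mul_zero, zero_mul, sub_zero, abs_zero] at h2
    have : 0 < (7 / 8 + 1 / (8 * ((m : ℝ) + 1))) * 64 ^ m * |c 0 * s 1 - s 0 * c 1| := by positivity
    linarith
  have halt := hs.alternating (by linarith) hK hne
  have hcn := (hc.dominant (by linarith) h0 h1 n)
  have hcn1 := (hc.dominant (by linarith) h0 h1 (n + 1)).1
  have habs : |c n * s (n + 1) - s n * c (n + 1)| = c (n + 1) * |s n| + c n * |s (n + 1)| := by
    rcases mul_neg_iff.mp (halt n) with ⟨h2, h3⟩ | ⟨h2, h3⟩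
    · rw [abs_of_pos h2, abs_of_neg h3, abs_of_neg]
      · ring
      · nlinarith [mul_pos h2 hcn1, mul_pos hcn.1 (neg_pos.mpr h3)]
    · rw [abs_of_neg h2, abs_of_pos h3, abs_of_pos]
      · ring
      · nlinarith [mul_pos (neg_pos.mpr h2) hcn1, mul_pos hcn.1 h3]
  obtain ⟨hb1, hb2⟩ := hb n
  rw [habs] at hb1 hb2
  have hn0 := n.cast_nonneg (α := ℝ)
  have hsn1 := abs_nonneg (s (n + 1))
  have hsn := abs_nonneg (s n)
  have hcs : 0 ≤ c n * |s (n + 1)| := mul_nonneg hcn.1.le hsn1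
  refine ⟨by nlinarith, ?_⟩
  -- `|s (n+1)| ≤ (16 / t) |s n|`
  have hratio : t * |s (n + 1)| ≤ 16 * |s n| := by
    have h2 := hs n
    have hsgn : |(2 * (n : ℝ) + 3) * (2 * t) * s (n + 1)| ≤
        |(64 * ((n : ℝ) + 1) - 4 / (n + 1)) * s n| := by
      have k0 := pade_kappa_pos n
      have hkt : (0:ℝ) < (2 * (n : ℝ) + 3) * (2 * t) := by positivity
      rcases mul_neg_iff.mp (halt n) with ⟨h3, h4⟩ | ⟨h3, h4⟩
      · have h5 : 0 < s (n + 2) := by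
          rcases mul_neg_iff.mp (halt (n + 1)) with ⟨h6, h7⟩ | ⟨h6, h7⟩
          · linarith
          · exact h7
        have h5' : 0 < ((n : ℝ) + 2) * s (n + 2) := by positivity
        rw [abs_of_neg (mul_neg_of_pos_of_neg hkt h4), abs_of_pos (mul_pos k0 h3)]
        linarith
      · have h5 : s (n + 2) < 0 := by
          rcases mul_neg_iff.mp (halt (n + 1)) with ⟨h6, h7⟩ | ⟨h6, h7⟩
          · exact h7
          · linarith
        have h5' : ((n : ℝ) + 2) * s (n + 2) < 0 := mul_neg_of_pos_of_neg (by positivity) h5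
        rw [abs_of_pos (mul_pos hkt h4), abs_of_neg (mul_neg_of_pos_of_neg k0 h3)]
        linarith
    rw [abs_mul _ (s (n + 1)), abs_mul _ (s n), abs_of_pos (pade_kappa_pos n),
      abs_of_pos (by positivity)] at hsgn
    have h4 : (64 * ((n : ℝ) + 1) - 4 / (n + 1)) * |s n| ≤ 64 * ((n : ℝ) + 1) * |s n| := by
      apply mul_le_mul_of_nonneg_right _ hsn
      have : 0 ≤ 4 / ((n : ℝ) + 1) := by positivity
      linarith
    have h5 : (2 * (n : ℝ) + 2) * 2 * (t * |s (n + 1)|) ≤ (2 * (n : ℝ) + 2) * 2 * (16 * |s n|) := by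
      have : 0 ≤ t * |s (n + 1)| := by positivity
      nlinarith
    exact le_of_mul_le_mul_left h5 (by positivity)
  have hcn2 : 2 * t * c n ≤ c (n + 1) := by
    have h2 : ((n : ℝ) + 1) * (2 * t * c n) ≤ (n + 1) * c (n + 1) := by
      refine le_trans ?_ hcn.2
      have : 0 ≤ t * c n := by have := hcn.1; positivity
      nlinarith
    exact le_of_mul_le_mul_left h2 (by positivity)
  have hprod : (2 * t * c n) * (t * |s (n + 1)|) ≤ c (n + 1) * (16 * |s n|) :=
    mul_le_mul hcn2 hratio (by positivity) hcn1.le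
  have hfin : c n * |s (n + 1)| ≤ 0.0024 * (c (n + 1) * |s n|) := by
    have h2 : 2 * 58 ^ 2 * (c n * |s (n + 1)|) ≤ 2 * t ^ 2 * (c n * |s (n + 1)|) := by
      apply mul_le_mul_of_nonneg_right _ hcs
      nlinarith
    have : 0 ≤ c (n + 1) * |s n| := by positivity
    nlinarith
  have h8 : 7 / 8 * 64 ^ n * |c 0 * s 1 - s 0 * c 1| ≤
      (7 / 8 + 1 / (8 * ((n : ℝ) + 1))) * 64 ^ n * |c 0 * s 1 - s 0 * c 1| := by
    apply mul_le_mul_of_nonneg_right _ hW0.le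
    apply mul_le_mul_of_nonneg_right _ (by positivity)
    have : 0 ≤ 1 / (8 * ((n : ℝ) + 1)) := by positivity
    linarith
  nlinarith

lemma padeQ_norm_le (t : ℝ) (ht : 58 ≤ t) (n : ℕ) :
    ‖padeQ (t + 4 * Complex.I) n‖ ≤ n.centralBinom * ‖(t + 4 * Complex.I : ℂ)‖ ^ n := by
  have hA2 : ‖(t + 4 * Complex.I : ℂ)‖ ^ 2 = t ^ 2 + 16 := by
    rw [← Complex.normSq_eq_norm_sq]
    simp [Complex.normSq_apply]; ring
  generalize hA : (t + 4 * Complex.I : ℂ) = A at *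
  have hR := norm_nonneg A
  have hRt : t < ‖A‖ := by nlinarith
  have hRt2 : 8 ≤ ‖A‖ * (‖A‖ - t) := by nlinarith
  induction n using Nat.strong_induction_on with
  | _ n ih =>
    match n with
    | 0 => simp [padeQ_zero]
    | 1 =>
      rw [padeQ_one]
      have h1 : ‖2 * A - 6 * Complex.I‖ ^ 2 = 4 * t ^ 2 + 4 := by
        rw [← hA, ← Complex.normSq_eq_norm_sq]
        simp [Complex.normSq_apply]; ring
      have h2 := norm_nonneg (2 * A - 6 * Complex.I)
      simp only [Nat.centralBinom, Nat.mul_one, Nat.choose_one_right, pow_one]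
      push_cast
      nlinarith
    | n + 2 =>
      have h0 := ih n (by lia)
      have h1 := ih (n + 1) (by lia)
      have hrec := padeQ_rec A n
      have htA : A - 4 * Complex.I = (t : ℂ) := by rw [← hA]; ring
      rw [htA] at hrec
      have hn : ‖((n : ℂ) + 2) * padeQ A (n + 2)‖ ≤
          (2 * n + 3) * (2 * t) * ‖padeQ A (n + 1)‖ + 64 * (n + 1) * ‖padeQ A n‖ := by
        rw [hrec]
        refine (norm_add_le _ _).trans (add_le_add ?_ ?_)
        · rw [norm_mul]
          apply mul_le_mul_of_nonneg_right _ (norm_nonneg _)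
          rw [show (2 * (n : ℂ) + 3) * (2 * t) = (((2 * n + 3) * (2 * t) : ℝ) : ℂ) by push_cast; ring,
            Complex.norm_real, Real.norm_eq_abs, abs_of_nonneg (by positivity)]
        · rw [norm_mul]
          apply mul_le_mul_of_nonneg_right _ (norm_nonneg _)
          rw [show (64 * ((n : ℂ) + 1) - 4 / (n + 1)) = ((64 * (n + 1) - 4 / (n + 1) : ℝ) : ℂ) by
            push_cast; ring, Complex.norm_real, Real.norm_eq_abs, abs_of_pos (pade_kappa_pos n)]
          have : 0 ≤ 4 / ((n : ℝ) + 1) := by positivity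
          linarith
      rw [norm_mul, show ((n : ℂ) + 2) = ((n + 2 : ℝ) : ℂ) by push_cast; ring,
            Complex.norm_real, Real.norm_eq_abs, abs_of_nonneg (by positivity)] at hn
      have hC1 : ((n : ℝ) + 1) * (n + 1).centralBinom = 2 * (2 * n + 1) * n.centralBinom := by
        exact_mod_cast Nat.succ_mul_centralBinom_succ n
      have hC2 : ((n : ℝ) + 2) * (n + 2).centralBinom = 2 * (2 * n + 3) * (n + 1).centralBinom := by
        have := Nat.succ_mul_centralBinom_succ (n + 1)
        have h3 : (((n + 1 + 1) * (n + 1 + 1).centralBinom : ℕ) : ℝ) =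
          ((2 * (2 * (n + 1) + 1) * (n + 1).centralBinom : ℕ) : ℝ) := by rw [this]
        push_cast at h3
        rw [show n + 2 = n + 1 + 1 by ring]
        linarith
      have key : 64 * ((n : ℝ) + 1) * n.centralBinom ≤
          2 * (2 * n + 3) * (n + 1).centralBinom * (‖A‖ * (‖A‖ - t)) := by
        have h4 : (n + 1) * (64 * ((n : ℝ) + 1) * n.centralBinom) ≤
            (n + 1) * (2 * (2 * n + 3) * (n + 1).centralBinom * 8) := by
          have : ((n : ℝ) + 1) * (2 * (2 * n + 3) * (n + 1).centralBinom * 8) =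
            16 * (2 * n + 3) * (2 * (2 * n + 1) * n.centralBinom) := by rw [← hC1]; ring
          rw [this]
          have hCn : (0 : ℝ) ≤ n.centralBinom := by positivity
          have : (n + 1) * (64 * ((n : ℝ) + 1)) ≤ 16 * (2 * n + 3) * (2 * (2 * n + 1)) := by
            nlinarith [n.cast_nonneg (α := ℝ)]
          nlinarith
        have h5 := le_of_mul_le_mul_left h4 (by positivity)
        refine h5.trans (mul_le_mul_of_nonneg_left hRt2 (by positivity))
      have hfin : ((n : ℝ) + 2) * ‖padeQ A (n + 2)‖ ≤
          (n + 2) * ((n + 2).centralBinom * ‖A‖ ^ (n + 2)) := by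
        calc _ ≤ _ := hn
          _ ≤ (2 * n + 3) * (2 * t) * ((n + 1).centralBinom * ‖A‖ ^ (n + 1)) +
              64 * (n + 1) * (n.centralBinom * ‖A‖ ^ n) := by gcongr
          _ = (2 * n + 3) * (2 * t) * ((n + 1).centralBinom * ‖A‖ ^ (n + 1)) +
              (64 * (n + 1) * n.centralBinom) * ‖A‖ ^ n := by ring
          _ ≤ (2 * n + 3) * (2 * t) * ((n + 1).centralBinom * ‖A‖ ^ (n + 1)) +
              (2 * (2 * n + 3) * (n + 1).centralBinom * (‖A‖ * (‖A‖ - t))) * ‖A‖ ^ n := by gcongr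
          _ = (2 * (2 * n + 3) * (n + 1).centralBinom) * ‖A‖ ^ (n + 2) := by ring
          _ = _ := by rw [← hC2]; ring
      exact le_of_mul_le_mul_left hfin (by positivity)

section Complex

open Complex

/-! ### The remainder integral -/

noncomputable section

/-- The segment from `t - 4i` to `t + 4i`. -/
def pathX (t τ : ℝ) : ℂ := t + τ * I
/-- The fourth root along the segment. -/
def pathR (t τ : ℝ) : ℂ := (pathX t τ) ^ (1 / 4 : ℂ)
/-- The base `(X - A)(X - conj A) / X` of the integrand, where `A = t + 4i` and `X = t + τ i`. -/
def pathY (t τ : ℝ) : ℂ := (16 - (τ : ℂ) ^ 2) / pathX t τ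
/-- `X - |A| ^ 2 / X`, which appears in the derivative of `pathY`. -/
def pathZ (t τ : ℝ) : ℂ := pathX t τ - ((t : ℂ) ^ 2 + 16) / pathX t τ
/-- The remainder integral of the Padé approximation, along the segment from `conj A` to `A`. -/
def padeJ (t : ℝ) (n : ℕ) : ℂ :=
  ∫ τ in (-4 : ℝ)..4, pathY t τ ^ n * (pathR t τ / pathX t τ)

end

section path
variable {t : ℝ}

lemma pathX_slit (ht : 58 ≤ t) (τ : ℝ) : pathX t τ ∈ slitPlane := by
  left; simp [pathX]; linarith

lemma pathX_ne (ht : 58 ≤ t) (τ : ℝ) : pathX t τ ≠ 0 := slitPlane_ne_zero (pathX_slit ht τ)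

lemma hasDerivAt_pathX (τ : ℝ) : HasDerivAt (pathX t) I τ := by
  unfold pathX
  have := ((hasDerivAt_id τ).ofReal_comp.mul_const I).const_add (t : ℂ)
  simpa using this

lemma hasDerivAt_pathR (ht : 58 ≤ t) (τ : ℝ) :
    HasDerivAt (pathR t) (I * pathR t τ / (4 * pathX t τ)) τ := by
  have h1 : HasDerivAt (fun z : ℂ => ((t : ℂ) + z * I) ^ (1 / 4 : ℂ))
      ((1 / 4 : ℂ) * ((t : ℂ) + (τ : ℂ) * I) ^ ((1 / 4 : ℂ) - 1) * I) (τ : ℂ) := by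
    have h2 : HasDerivAt (fun z : ℂ => (t : ℂ) + z * I) I (τ : ℂ) := by
      simpa using ((hasDerivAt_id (τ : ℂ)).mul_const I).const_add (t : ℂ)
    exact h2.cpow_const (pathX_slit ht τ)
  have h3 : HasDerivAt (pathR t) _ τ := h1.comp_ofReal
  refine h3.congr_deriv (Eq.symm ?_)
  change I * (pathX t τ) ^ (1 / 4 : ℂ) / (4 * pathX t τ) =
    (1 / 4 : ℂ) * (pathX t τ) ^ ((1 / 4 : ℂ) - 1) * I
  rw [cpow_sub _ _ (pathX_ne ht τ), cpow_one]
  have := pathX_ne ht τ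
  field_simp

lemma pathY_eq (ht : 58 ≤ t) (τ : ℝ) :
    pathY t τ = pathX t τ - 2 * t + ((t : ℂ) ^ 2 + 16) / pathX t τ := by
  have := pathX_ne ht τ
  unfold pathY
  field_simp
  unfold pathX
  linear_combination (-(τ : ℂ) ^ 2) * I_sq

lemma hasDerivAt_pathY (ht : 58 ≤ t) (τ : ℝ) :
    HasDerivAt (pathY t) (I * pathZ t τ / pathX t τ) τ := by
  have h : pathY t = fun τ => pathX t τ - 2 * t + ((t : ℂ) ^ 2 + 16) / pathX t τ :=
    funext (pathY_eq ht)
  have hX := pathX_ne ht τ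
  rw [h]
  have h1 := ((hasDerivAt_pathX (t := t) τ).sub_const (2 * (t : ℂ))).add
    ((hasDerivAt_const τ ((t : ℂ) ^ 2 + 16)).div (hasDerivAt_pathX (t := t) τ) hX)
  refine h1.congr_deriv ?_
  unfold pathZ
  field_simp
  ring

lemma hasDerivAt_pathZ (ht : 58 ≤ t) (τ : ℝ) :
    HasDerivAt (pathZ t) (I * (pathY t τ + 2 * t) / pathX t τ) τ := by
  have hX := pathX_ne ht τ
  have h1 : HasDerivAt (pathZ t) _ τ := (hasDerivAt_pathX (t := t) τ).sub
    ((hasDerivAt_const τ ((t : ℂ) ^ 2 + 16)).div (hasDerivAt_pathX (t := t) τ) hX)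
  refine h1.congr_deriv ?_
  rw [pathY_eq ht]
  field_simp
  ring

lemma pathZ_sq (ht : 58 ≤ t) (τ : ℝ) :
    pathZ t τ ^ 2 = pathY t τ ^ 2 + 4 * t * pathY t τ - 64 := by
  have hX := pathX_ne ht τ
  rw [pathY_eq ht]
  unfold pathZ
  field_simp
  ring

lemma continuous_pathX : Continuous (pathX t) :=
  continuous_iff_continuousAt.2 fun τ => (hasDerivAt_pathX τ).continuousAt

lemma continuous_pathRX (ht : 58 ≤ t) : Continuous (fun τ => pathR t τ / pathX t τ) :=
  (continuous_iff_continuousAt.2 fun τ => (hasDerivAt_pathR ht τ).continuousAt).div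
    continuous_pathX (pathX_ne ht)

lemma continuous_pathY (ht : 58 ≤ t) : Continuous (pathY t) :=
  continuous_iff_continuousAt.2 fun τ => (hasDerivAt_pathY ht τ).continuousAt

lemma integrable_J (ht : 58 ≤ t) (n : ℕ) :
    IntervalIntegrable (fun τ => pathY t τ ^ n * (pathR t τ / pathX t τ))
      MeasureTheory.volume (-4) 4 :=
  (((continuous_pathY ht).pow n).mul (continuous_pathRX ht)).intervalIntegrable _ _

/-- The integrals satisfy the recurrence of `padeD`, up to normalisation, by integration by parts. -/
lemma padeJ_rec (ht : 58 ≤ t) (n : ℕ) :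
    ((n : ℂ) + 2 - 1 / (16 * (n + 2))) * padeJ t (n + 2) + (4 * n + 6) * t * padeJ t (n + 1) -
      64 * (n + 1) * padeJ t n = 0 := by
  have hn2 : (n : ℂ) + 2 ≠ 0 := by exact_mod_cast (by positivity : ((n : ℝ) + 2) ≠ 0)
  have hder : ∀ τ ∈ Set.uIcc (-4 : ℝ) 4, HasDerivAt
      (fun τ => (pathY t τ ^ (n + 1) * pathZ t τ - pathY t τ ^ (n + 2) / (4 * (n + 2))) * pathR t τ)
      (I * (((n : ℂ) + 2 - 1 / (16 * (n + 2))) * (pathY t τ ^ (n + 2) * (pathR t τ / pathX t τ)) +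
        (4 * n + 6) * t * (pathY t τ ^ (n + 1) * (pathR t τ / pathX t τ)) -
        64 * (n + 1) * (pathY t τ ^ n * (pathR t τ / pathX t τ)))) τ := by
    intro τ _
    have hX := pathX_ne ht τ
    have hY := hasDerivAt_pathY ht τ
    have h1 := ((((hY.pow (n + 1)).mul (hasDerivAt_pathZ ht τ)).sub
      ((hY.pow (n + 2)).div_const (4 * ((n : ℂ) + 2)))).mul (hasDerivAt_pathR ht τ))
    refine HasDerivAt.congr_deriv h1 ?_
    have hsq := pathZ_sq ht τ
    simp only [Nat.add_sub_cancel, show n + 2 - 1 = n + 1 by lia, Pi.pow_apply, Pi.mul_apply,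
      Pi.sub_apply]
    push_cast
    field_simp
    linear_combination (256 * (n + 2) * (n + 1)) * pathR t τ * pathY t τ ^ n * hsq
  have hparts := intervalIntegral.integral_eq_sub_of_hasDerivAt hder (by
    refine IntervalIntegrable.const_mul ?_ _
    exact (((integrable_J ht (n + 2)).const_mul _).add ((integrable_J ht (n + 1)).const_mul _)).sub
      ((integrable_J ht n).const_mul _))
  rw [intervalIntegral.integral_const_mul, intervalIntegral.integral_sub
    (((integrable_J ht (n + 2)).const_mul _).add ((integrable_J ht (n + 1)).const_mul _))
      ((integrable_J ht n).const_mul _), intervalIntegral.integral_add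
    ((integrable_J ht (n + 2)).const_mul _) ((integrable_J ht (n + 1)).const_mul _),
    intervalIntegral.integral_const_mul, intervalIntegral.integral_const_mul,
    intervalIntegral.integral_const_mul] at hparts
  have hb1 : pathY t 4 = 0 := by unfold pathY; norm_num
  have hb2 : pathY t (-4) = 0 := by unfold pathY; norm_num
  simp only [hb1, hb2, ne_eq, Nat.add_eq_zero_iff, one_ne_zero, and_false, not_false_eq_true,
    zero_pow, zero_mul, zero_div, sub_zero, OfNat.ofNat_ne_zero, mul_eq_zero, I_ne_zero,
    false_or] at hparts
  exact hparts

lemma pathR_conj (ht : 58 ≤ t) : pathR t (-4) = (starRingEnd ℂ) (pathR t 4) := by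
  unfold pathR
  have h : pathX t (-4) = (starRingEnd ℂ) (pathX t 4) := by
    simp [pathX, conj_ofNat]
  rw [h, conj_cpow _ _ (mem_slitPlane_iff_arg.mp (pathX_slit ht 4)).1]
  simp [conj_ofNat]

lemma padeJ_zero (ht : 58 ≤ t) : padeJ t 0 = 8 * (pathR t 4).im := by
  have hder : ∀ τ ∈ Set.uIcc (-4 : ℝ) 4, HasDerivAt (fun τ => 4 * pathR t τ)
      (I * (pathY t τ ^ 0 * (pathR t τ / pathX t τ))) τ := by
    intro τ _
    refine ((hasDerivAt_pathR ht τ).const_mul 4).congr_deriv ?_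
    have hX := pathX_ne ht τ
    field_simp
  have hparts := intervalIntegral.integral_eq_sub_of_hasDerivAt hder
    ((integrable_J ht 0).const_mul _)
  rw [intervalIntegral.integral_const_mul, pathR_conj ht] at hparts
  have : I * padeJ t 0 = I * (8 * (pathR t 4).im) := by
    unfold padeJ
    rw [hparts, ← mul_sub, sub_conj]
    push_cast
    ring
  exact mul_left_cancel₀ I_ne_zero this

lemma padeJ_one (ht : 58 ≤ t) :
    15 / 16 * padeJ t 1 = 16 * (pathR t 4).re - 16 * t * (pathR t 4).im := by
  have hder : ∀ τ ∈ Set.uIcc (-4 : ℝ) 4, HasDerivAt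
      (fun τ => (pathZ t τ - pathY t τ / 4) * pathR t τ)
      (I * (15 / 16 * (pathY t τ ^ 1 * (pathR t τ / pathX t τ)) +
        2 * t * (pathY t τ ^ 0 * (pathR t τ / pathX t τ)))) τ := by
    intro τ _
    have hX := pathX_ne ht τ
    refine HasDerivAt.congr_deriv (((hasDerivAt_pathZ ht τ).sub
      ((hasDerivAt_pathY ht τ).div_const 4)).mul (hasDerivAt_pathR ht τ)) ?_
    simp only [Pi.sub_apply]
    field_simp
    ring
  have hparts := intervalIntegral.integral_eq_sub_of_hasDerivAt hder
    ((((integrable_J ht 1).const_mul _).add ((integrable_J ht 0).const_mul _)).const_mul _)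
  rw [intervalIntegral.integral_const_mul, intervalIntegral.integral_add
    ((integrable_J ht 1).const_mul _) ((integrable_J ht 0).const_mul _),
    intervalIntegral.integral_const_mul, intervalIntegral.integral_const_mul, pathR_conj ht] at hparts
  have hb1 : pathY t 4 = 0 := by unfold pathY; norm_num
  have hb2 : pathY t (-4) = 0 := by unfold pathY; norm_num
  have hX4 := pathX_ne ht 4
  have hX4' := pathX_ne ht (-4)
  have hz1 : pathZ t 4 = 8 * I := by
    unfold pathZ
    field_simp
    simp only [pathX]; push_cast
    linear_combination (-16) * I_sq
  have hz2 : pathZ t (-4) = -8 * I := by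
    unfold pathZ
    field_simp
    simp only [pathX]; push_cast
    linear_combination (-16) * I_sq
  rw [hb1, hb2, hz1, hz2] at hparts
  change I * (15 / 16 * padeJ t 1 + 2 * t * padeJ t 0) = _ at hparts
  rw [padeJ_zero ht] at hparts
  have hre := add_conj (pathR t 4)
  push_cast at hre
  apply mul_left_cancel₀ I_ne_zero
  linear_combination hparts + 8 * I * hre

lemma padeJ_norm_le (ht : 58 ≤ t) (n : ℕ) : ‖padeJ t n‖ ≤ 8 := by
  have := intervalIntegral.norm_integral_le_of_norm_le_const (a := (-4 : ℝ)) (b := 4) (C := 1)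
    (f := fun τ => pathY t τ ^ n * (pathR t τ / pathX t τ)) (by
      intro τ hτ
      rw [Set.uIoc_of_le (by norm_num)] at hτ
      have hX : 58 ≤ ‖pathX t τ‖ := by
        refine le_trans ?_ (abs_re_le_norm _)
        simp only [pathX, add_re, ofReal_re, mul_re, I_re, mul_zero, ofReal_im, I_im, mul_one,
          sub_self, add_zero]
        exact ht.trans (le_abs_self t)
      have hY : ‖pathY t τ‖ ≤ 1 := by
        unfold pathY
        rw [norm_div, div_le_one (by linarith)]
        have : (16 - (τ : ℂ) ^ 2) = ((16 - τ ^ 2 : ℝ) : ℂ) := by push_cast; ring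
        rw [this, norm_real, Real.norm_eq_abs]
        refine le_trans ?_ hX
        rw [abs_le]
        constructor <;> nlinarith [hτ.1, hτ.2]
      have hR : ‖pathR t τ / pathX t τ‖ ≤ 1 := by
        rw [norm_div, div_le_one (by linarith)]
        unfold pathR
        have : (1 / 4 : ℂ) = ((1 / 4 : ℝ) : ℂ) := by push_cast; ring
        rw [this, norm_cpow_real]
        calc ‖pathX t τ‖ ^ (1 / 4 : ℝ) ≤ ‖pathX t τ‖ ^ (1 : ℝ) :=
              Real.rpow_le_rpow_of_exponent_le (by linarith) (by norm_num)
          _ = _ := Real.rpow_one _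
      rw [norm_mul, norm_pow]
      exact mul_le_one₀ (pow_le_one₀ (norm_nonneg _) hY) (norm_nonneg _) hR)
  unfold padeJ
  norm_num at this ⊢
  exact this

end path

noncomputable section
/-- The fourth root of `A = t + 4i`. -/
def rootB (t : ℝ) : ℂ := (t + 4 * I) ^ (1 / 4 : ℂ)

/-- `padeQ` at `A = t + 4i`, times the conjugate of the fourth root of `A`. -/
def padeD (t : ℝ) (n : ℕ) : ℂ := padeQ (t + 4 * I) n * (starRingEnd ℂ) (rootB t)

/-- The normalising factor `∏ (1 - 1 / (16 k ^ 2))` between `padeJ` and the imaginary part of `padeD`. -/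
def padeGamma : ℕ → ℝ
  | 0 => 1
  | n + 1 => padeGamma n * (1 - 1 / (16 * ((n : ℝ) + 1) ^ 2))
end

lemma padeD_rec (t : ℝ) (n : ℕ) : ((n : ℂ) + 2) * padeD t (n + 2) =
    (2 * n + 3) * (2 * t) * padeD t (n + 1) + (64 * (n + 1) - 4 / (n + 1)) * padeD t n := by
  unfold padeD
  have := padeQ_rec (t + 4 * I) n
  linear_combination (starRingEnd ℂ) (rootB t) * this

lemma padeD_re_rec (t : ℝ) : PadeRec t (fun n => (padeD t n).re) := by
  intro n
  have := padeD_rec t n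
  have e : ((n : ℂ) + 2) = (((n : ℝ) + 2 : ℝ) : ℂ) := by push_cast; ring
  have e1 : (2 * (n : ℂ) + 3) * (2 * t) = (((2 * n + 3) * (2 * t) : ℝ) : ℂ) := by push_cast; ring
  have e2 : (64 * ((n : ℂ) + 1) - 4 / (n + 1)) = ((64 * (n + 1) - 4 / (n + 1) : ℝ) : ℂ) := by
    push_cast; ring
  rw [e, e1, e2] at this
  have := congrArg re this
  simpa only [add_re, re_ofReal_mul] using this

lemma padeD_im_rec (t : ℝ) : PadeRec t (fun n => (padeD t n).im) := by
  intro n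
  have := padeD_rec t n
  have e : ((n : ℂ) + 2) = (((n : ℝ) + 2 : ℝ) : ℂ) := by push_cast; ring
  have e1 : (2 * (n : ℂ) + 3) * (2 * t) = (((2 * n + 3) * (2 * t) : ℝ) : ℂ) := by push_cast; ring
  have e2 : (64 * ((n : ℂ) + 1) - 4 / (n + 1)) = ((64 * (n + 1) - 4 / (n + 1) : ℝ) : ℂ) := by
    push_cast; ring
  rw [e, e1, e2] at this
  have := congrArg im this
  simpa only [add_im, im_ofReal_mul] using this

lemma padeGamma_mem (n : ℕ) : 0 ≤ padeGamma n ∧ padeGamma n ≤ 1 := by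
  induction n with
  | zero => simp [padeGamma]
  | succ n ih =>
    have h1 : 0 ≤ 1 / (16 * ((n : ℝ) + 1) ^ 2) := by positivity
    have h2 : 1 / (16 * ((n : ℝ) + 1) ^ 2) ≤ 1 := by
      rw [div_le_one (by positivity)]
      nlinarith [n.cast_nonneg (α := ℝ)]
    simp only [padeGamma]
    exact ⟨mul_nonneg ih.1 (by linarith), mul_le_one₀ ih.2 (by linarith) (by linarith)⟩

lemma rootB_eq (t : ℝ) : rootB t = pathR t 4 := by simp [rootB, pathR, pathX]

lemma padeD_zero (t : ℝ) : padeD t 0 = (starRingEnd ℂ) (rootB t) := by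
  simp [padeD, padeQ_zero]

lemma padeD_one (t : ℝ) : padeD t 1 = (2 * t + 2 * I) * (starRingEnd ℂ) (rootB t) := by
  unfold padeD; rw [padeQ_one]; ring

lemma padeD_im_eq {t : ℝ} (ht : 58 ≤ t) (n : ℕ) :
    ((padeD t n).im : ℂ) = (-1) ^ (n + 1) * padeGamma n * padeJ t n / 8 := by
  induction n using Nat.strong_induction_on with
  | _ n ih =>
    match n with
    | 0 => rw [padeD_zero, padeJ_zero ht, rootB_eq]; simp [padeGamma]; ring
    | 1 =>
      have := padeJ_one ht
      rw [padeD_one, rootB_eq]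
      simp only [padeGamma, mul_im, conj_im, conj_re, add_im, add_re, mul_re, ofReal_re, ofReal_im,
        I_re, I_im, re_ofNat, im_ofNat]
      push_cast
      linear_combination (-1 / 8) * this
    | n + 2 =>
      have h0 := ih n (by lia)
      have h1 := ih (n + 1) (by lia)
      have hJ := padeJ_rec ht n
      have hs := congrArg (fun x : ℝ => (x : ℂ)) (padeD_im_rec t n)
      push_cast at hs
      rw [h0, h1] at hs
      have hn2 : (n : ℂ) + 2 ≠ 0 := by exact_mod_cast (by positivity : ((n : ℝ) + 2) ≠ 0)
      have hn1 : (n : ℂ) + 1 ≠ 0 := by exact_mod_cast (by positivity : ((n : ℝ) + 1) ≠ 0)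
      apply mul_left_cancel₀ hn2
      rw [hs]
      have g2 : (padeGamma (n + 2) : ℂ) = padeGamma (n + 1) * (1 - 1 / (16 * ((n : ℂ) + 2) ^ 2)) := by
        simp only [padeGamma]; push_cast; ring
      have g1 : (padeGamma (n + 1) : ℂ) = padeGamma n * (1 - 1 / (16 * ((n : ℂ) + 1) ^ 2)) := by
        simp only [padeGamma]; push_cast; ring
      have g2' : ((n : ℂ) + 2) * padeGamma (n + 2) =
          padeGamma (n + 1) * ((n : ℂ) + 2 - 1 / (16 * (n + 2))) := by
        rw [g2]; field_simp
      have g1' : (64 * ((n : ℂ) + 1) - 4 / (n + 1)) * padeGamma n = 64 * (n + 1) * padeGamma (n + 1) := by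
        rw [g1]; field_simp
        ring
      have e : (-1 : ℂ) ^ (n + 2 + 1) = (-1) ^ (n + 1) := by ring
      have e' : (-1 : ℂ) ^ (n + 1 + 1) = - (-1) ^ (n + 1) := by ring
      rw [e, e']
      linear_combination (-1) ^ (n + 1) * padeJ t n / 8 * g1' - (-1) ^ (n + 1) * padeJ t (n + 2) / 8 * g2'
        - (-1) ^ (n + 1) / 8 * padeGamma (n + 1) * hJ

/-- Boundedness identifies `Im padeD` as the minimal solution of the recurrence; its precise size comes
from `PadeRec.minimal_bounds`. -/
lemma padeD_im_bounded {t : ℝ} (ht : 58 ≤ t) (n : ℕ) : |(padeD t n).im| ≤ 1 := by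
  have h := congrArg norm (padeD_im_eq ht n)
  rw [norm_real, Real.norm_eq_abs] at h
  rw [h, norm_div, norm_mul, norm_mul, norm_pow, norm_neg, norm_one, one_pow, one_mul, norm_real,
    Real.norm_eq_abs, abs_of_nonneg (padeGamma_mem n).1]
  have h1 := padeJ_norm_le ht n
  have h2 := (padeGamma_mem n)
  have h3 : padeGamma n * ‖padeJ t n‖ ≤ 1 * 8 := mul_le_mul h2.2 h1 (norm_nonneg _) (by norm_num)
  have : ‖(8 : ℂ)‖ = 8 := by norm_num
  rw [this]
  linarith

/-! ### The Padé inequality -/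

lemma rootB_pow (t : ℝ) : rootB t ^ 4 = t + 4 * I := by
  unfold rootB
  have := cpow_nat_inv_pow (t + 4 * I) (n := 4) (by norm_num)
  rw [show (1 / 4 : ℂ) = ((4 : ℕ) : ℂ)⁻¹ by norm_num]
  exact this

lemma rootB_facts {t : ℝ} (ht : 58 ≤ t) :
    0 < (rootB t).re ∧ 0 < (rootB t).im ∧ t * (rootB t).im ≤ (rootB t).re ∧
    (rootB t).re * (rootB t).im * ((rootB t).re ^ 2 - (rootB t).im ^ 2) = 1 ∧
    (rootB t).re ^ 4 - 6 * (rootB t).re ^ 2 * (rootB t).im ^ 2 + (rootB t).im ^ 4 = t := by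
  have hA : (t + 4 * I : ℂ) ≠ 0 := by
    intro h
    have := congrArg re h
    simp at this
    linarith
  have harg1 : 0 < arg (t + 4 * I) := by
    have h1 : 0 ≤ arg (t + 4 * I) := by rw [arg_nonneg_iff]; simp
    refine lt_of_le_of_ne h1 (fun h => ?_)
    have := (arg_eq_zero_iff.mp h.symm).2
    simp at this
  have harg2 : arg (t + 4 * I) < Real.pi / 2 := by
    rw [arg_lt_pi_div_two_iff]
    left; simp; linarith
  have hpi := Real.pi_pos
  have hre : (rootB t).re = Real.exp (Real.log ‖(t + 4 * I : ℂ)‖ / 4) *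
      Real.cos (arg (t + 4 * I) / 4) := by
    unfold rootB
    rw [cpow_def_of_ne_zero hA, exp_re]
    simp [log_re, log_im, div_eq_mul_inv]
  have him : (rootB t).im = Real.exp (Real.log ‖(t + 4 * I : ℂ)‖ / 4) *
      Real.sin (arg (t + 4 * I) / 4) := by
    unfold rootB
    rw [cpow_def_of_ne_zero hA, exp_im]
    simp [log_re, log_im, div_eq_mul_inv]
  have h1 : 0 < (rootB t).re := by
    rw [hre]
    exact mul_pos (Real.exp_pos _) (Real.cos_pos_of_mem_Ioo ⟨by linarith, by linarith⟩)
  have h2 : 0 < (rootB t).im := by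
    rw [him]
    exact mul_pos (Real.exp_pos _) (Real.sin_pos_of_pos_of_lt_pi (by linarith) (by linarith))
  have h3 : (rootB t).im < (rootB t).re := by
    rw [hre, him]
    apply mul_lt_mul_of_pos_left _ (Real.exp_pos _)
    rw [← Real.cos_pi_div_two_sub]
    apply Real.cos_lt_cos_of_nonneg_of_le_pi_div_two <;> linarith
  have hB := rootB_pow t
  have e1 := congrArg re hB
  have e2 := congrArg im hB
  obtain ⟨x, hx⟩ : ∃ x, x = (rootB t).re := ⟨_, rfl⟩
  obtain ⟨y, hy⟩ : ∃ y, y = (rootB t).im := ⟨_, rfl⟩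
  have hBxy : rootB t = x + y * I := by rw [hx, hy, re_add_im]
  have e3 : ((x + y * I : ℂ)) ^ 4 = ((x ^ 4 - 6 * x ^ 2 * y ^ 2 + y ^ 4 : ℝ) : ℂ) +
      ((4 * (x * y * (x ^ 2 - y ^ 2)) : ℝ) : ℂ) * I := by
    push_cast
    linear_combination ((4 * x * y ^ 3 * I : ℂ) + 6 * x ^ 2 * y ^ 2 + y ^ 4 * (I ^ 2 - 1)) * I_sq
  rw [hBxy, e3] at e1 e2
  simp only [add_re, ofReal_re, mul_re, I_re, mul_zero, ofReal_im, I_im, mul_one, re_ofNat,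
    im_ofNat, add_zero, sub_self, add_im, mul_im, zero_add] at e1 e2
  rw [← hx] at h1 h3 ⊢
  rw [← hy] at h2 h3 ⊢
  refine ⟨h1, h2, ?_, by linarith, e1⟩
  have h4 : 0 < x * (x ^ 2 - y ^ 2) := mul_pos h1 (by nlinarith)
  have h5 : x * (x ^ 2 - y ^ 2) * (t * y) ≤ x * (x ^ 2 - y ^ 2) * x := by
    have : x * (x ^ 2 - y ^ 2) * (t * y) = t := by linear_combination t / 4 * e2
    rw [this, ← e1]
    have : 0 ≤ y ^ 2 * (5 * x ^ 2 - y ^ 2) := by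
      apply mul_nonneg (sq_nonneg _); nlinarith
    linarith
  exact le_of_mul_le_mul_left h5 h4

set_option maxHeartbeats 1600000 in
/-- The Padé inequality. Write `B = (t + 4i) ^ (1 / 4)`, `conj B * (a + b i) = p + q i` and
`padeD t n = c + s i`. Then `F (a, b) = - p q (p ^ 2 - q ^ 2)`, so `q` is tiny. The quantity
`c q - s p` equals `|B| ^ 2 padeG n` times a rational integer, which is nonzero under `hS2`; hence
`|B| ^ 2 padeG n ≤ c |q| + |s| p`. Here `Y = |a + b i|` and `R = |t + 4i|`. -/
lemma pade_ineq (t a b : ℤ) (ht : 58 ≤ t) (hb : 0 < b) (hab : t * b < a)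
    (hF : |a ^ 4 - t * a ^ 3 * b - 6 * a ^ 2 * b ^ 2 + t * a * b ^ 3 + b ^ 4| ≤ 24 * t + 28)
    (Y R : ℝ) (hY : 0 < Y) (hY2 : Y ^ 2 = (a : ℝ) ^ 2 + (b : ℝ) ^ 2)
    (hR0 : 0 < R) (hR : R ^ 2 = (t : ℝ) ^ 2 + 16) (n : ℕ)
    (hS2 : 24.6 * (n.centralBinom * (n + 1).centralBinom * R ^ (2 * n + 1) * (n + 1)) <
      1.75 * 64 ^ n * Y ^ 4) :
    (padeG n : ℝ) ≤ 24.51 * (n.centralBinom * R ^ n) / Y ^ 3 +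
      1.0002 * 64 ^ n * Y / ((2 * n + 1) * n.centralBinom * (t : ℝ) ^ (n + 1)) := by
  have htR : (58 : ℝ) ≤ t := by exact_mod_cast ht
  obtain ⟨h1, h2, h3, h4, h5⟩ := rootB_facts htR
  obtain ⟨x, hx⟩ : ∃ x, x = (rootB t).re := ⟨_, rfl⟩
  obtain ⟨y, hy⟩ : ∃ y, y = (rootB t).im := ⟨_, rfl⟩
  have hnR : ‖((t : ℝ) + 4 * I : ℂ)‖ = R := by
    have : ‖((t : ℝ) + 4 * I : ℂ)‖ ^ 2 = R ^ 2 := by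
      rw [← Complex.normSq_eq_norm_sq, hR]
      simp [Complex.normSq_apply]; ring
    exact (sq_eq_sq₀ (norm_nonneg _) hR0.le).mp this
  -- `β = |B|`
  obtain ⟨β, hβdef⟩ : ∃ β, β = ‖rootB t‖ := ⟨_, rfl⟩
  have hβ2 : β ^ 2 = x ^ 2 + y ^ 2 := by
    rw [hβdef, ← Complex.normSq_eq_norm_sq, Complex.normSq_apply, hx, hy]; ring
  have hβ4 : β ^ 4 = R := by
    rw [hβdef, ← norm_pow, rootB_pow, hnR]
  have hβ0 : 0 < β := by
    have : 0 ≤ β := hβdef ▸ norm_nonneg _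
    rcases this.lt_or_eq with h | h
    · exact h
    · rw [← h] at hβ4; norm_num at hβ4; linarith
  have hc_le : ∀ n, (padeD t n).re ≤ n.centralBinom * R ^ n * β := by
    intro n
    calc (padeD t n).re ≤ ‖padeD t n‖ := re_le_norm _
      _ = ‖padeQ ((t : ℝ) + 4 * I) n‖ * β := by
        unfold padeD; rw [norm_mul, norm_conj, hβdef]
      _ ≤ _ := by
        apply mul_le_mul_of_nonneg_right _ hβ0.le
        have := padeQ_norm_le t htR n
        rwa [hnR] at this
  have hc0 : (padeD t 0).re = x := by rw [padeD_zero, hx]; simp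
  have hs0 : (padeD t 0).im = -y := by rw [padeD_zero, hy]; simp
  have hc1 : (padeD t 1).re = 2 * t * x + 2 * y := by rw [padeD_one, hx, hy]; simp
  have hs1 : (padeD t 1).im = 2 * x - 2 * t * y := by rw [padeD_one, hx, hy]; simp; ring
  rw [← hx] at h1 h3 h4 h5
  rw [← hy] at h2 h3 h4 h5
  have hW : (padeD t 0).re * (padeD t 1).im - (padeD t 0).im * (padeD t 1).re = 2 * β ^ 2 := by
    rw [hc0, hs0, hc1, hs1, hβ2]; ring
  have hC := padeD_re_rec (t : ℝ)
  have hS := padeD_im_rec (t : ℝ)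
  have hmin := hC.minimal_bounds hS htR (by simpa [hc0] using h1)
    (by simp only [hc0, hc1]; linarith) (padeD_im_bounded htR)
    (by rw [hW]; positivity) n
  have hlow := hC.lower (by linarith) (by simpa [hc0] using h1)
    (by simp only [hc0, hc1]; linarith) (n + 1)
  have hcpos := (hC.dominant (by linarith) (by simpa [hc0] using h1)
    (by simp only [hc0, hc1]; linarith) n).1
  rw [hW, abs_of_pos (by positivity : (0 : ℝ) < 2 * β ^ 2)] at hmin
  rw [hc0] at hlow
  have hcn := hc_le n
  have hcn1 := hc_le (n + 1)
  generalize hc' : (padeD t n).re = c at *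
  generalize hs' : (padeD t n).im = s at *
  generalize hc1' : (padeD t (n + 1)).re = c1 at *
  obtain ⟨hmin1, hmin2⟩ := hmin
  -- coordinates of `w * conj B`
  have ha0 : (0 : ℝ) < a := by
    have : 0 < a := by nlinarith
    exact_mod_cast this
  have hb0 : (0 : ℝ) < b := by exact_mod_cast hb
  have habR : (t : ℝ) * b ≤ a := by exact_mod_cast hab.le
  obtain ⟨p, hp⟩ : ∃ p, p = x * a + y * b := ⟨_, rfl⟩
  obtain ⟨q, hq⟩ : ∃ q, q = x * b - y * a := ⟨_, rfl⟩
  have hp0 : 0 < p := by rw [hp]; positivity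
  have hpq : p ^ 2 + q ^ 2 = β ^ 2 * Y ^ 2 := by rw [hY2, hβ2, hp, hq]; ring
  have hqp : t * |q| ≤ p := by
    have e1 : (t : ℝ) * (x * b) ≤ x * a := by
      calc (t : ℝ) * (x * b) = x * (t * b) := by ring
        _ ≤ x * a := mul_le_mul_of_nonneg_left habR h1.le
    have e2 : (t : ℝ) * (y * a) ≤ x * a := by
      calc (t : ℝ) * (y * a) = (t * y) * a := by ring
        _ ≤ x * a := mul_le_mul_of_nonneg_right h3 ha0.le
    have e3 : 0 < (t : ℝ) * (x * b) := by positivity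
    have e4 : 0 < (t : ℝ) * (y * a) := by positivity
    have e5 : 0 < y * b := by positivity
    rw [show (t : ℝ) * |q| = |t * q| by rw [abs_mul, abs_of_pos (by linarith : (0 : ℝ) < t)], hq, hp,
      abs_le]
    rw [mul_sub]
    constructor <;> linarith
  have hFR : |p * q * (p ^ 2 - q ^ 2)| ≤ 24.483 * t := by
    have e1 : -(p * q * (p ^ 2 - q ^ 2)) = ((a ^ 4 - t * a ^ 3 * b - 6 * a ^ 2 * b ^ 2 +
        t * a * b ^ 3 + b ^ 4 : ℤ) : ℝ) := by
      push_cast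
      rw [hp, hq]
      linear_combination ((a : ℝ) ^ 4 - 6 * a ^ 2 * b ^ 2 + b ^ 4) * h4
        - ((a : ℝ) ^ 3 * b - a * b ^ 3) * h5
    rw [← abs_neg, e1]
    have : ((|a ^ 4 - t * a ^ 3 * b - 6 * a ^ 2 * b ^ 2 + t * a * b ^ 3 + b ^ 4| : ℤ) : ℝ) ≤
      ((24 * t + 28 : ℤ) : ℝ) := by exact_mod_cast hF
    rw [Int.cast_abs] at this
    refine this.trans ?_
    push_cast
    linarith
  have hq58 : 58 * |q| ≤ p := (mul_le_mul_of_nonneg_right htR (abs_nonneg q)).trans hqp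
  have hqsq : 3364 * q ^ 2 ≤ p ^ 2 := by
    have := pow_le_pow_left₀ (by positivity) hq58 2
    rw [mul_pow, sq_abs] at this
    linarith
  have hpY : p ≤ β * Y := by
    refine (sq_le_sq₀ hp0.le (by positivity)).mp ?_
    rw [mul_pow, ← hpq]; linarith [sq_nonneg q]
  have hYp : β * Y ≤ 1.0002 * p := by
    refine (sq_le_sq₀ (by positivity) (by positivity)).mp ?_
    rw [mul_pow, mul_pow, ← hpq]; linarith [sq_nonneg p]
  have hβx : β ≤ 1.0002 * x := by
    refine (sq_le_sq₀ (by positivity) (by positivity)).mp ?_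
    rw [hβ2, mul_pow]
    have h58 : 58 * y ≤ x := (mul_le_mul_of_nonneg_right htR h2.le).trans h3
    have := pow_le_pow_left₀ (by positivity) h58 2
    rw [mul_pow] at this
    linarith [sq_nonneg x]
  have htR' : (t : ℝ) ≤ R := by
    refine (sq_le_sq₀ (by linarith) hR0.le).mp ?_
    rw [hR]; linarith
  have hqY : |q| * Y ^ 3 ≤ 24.51 * β := by
    have e1 : |p * q * (p ^ 2 - q ^ 2)| = |q| * (p * (p ^ 2 - q ^ 2)) := by
      rw [abs_mul, abs_mul, abs_of_pos hp0, abs_of_nonneg (by linarith [sq_nonneg q] : 0 ≤ p ^ 2 - q ^ 2)]; ring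
    have e2 : (β * Y) ^ 3 ≤ 1.001 * (p * (p ^ 2 - q ^ 2)) := by
      have : (β * Y) ^ 3 ≤ (1.0002 * p) ^ 3 := pow_le_pow_left₀ (by positivity) hYp 3
      have e3 : p * (3363 / 3364 * p ^ 2) ≤ p * (p ^ 2 - q ^ 2) :=
        mul_le_mul_of_nonneg_left (by linarith) hp0.le
      have e4 : 0 < p ^ 3 := by positivity
      have e5 : (1.0002 * p) ^ 3 = 1.0002 ^ 3 * p ^ 3 := by ring
      have e6 : p * (3363 / 3364 * p ^ 2) = 3363 / 3364 * p ^ 3 := by ring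
      rw [e5] at this
      rw [e6] at e3
      linarith
    have e3 : |q| * (β * Y) ^ 3 ≤ 24.51 * β ^ 4 := by
      calc |q| * (β * Y) ^ 3 ≤ |q| * (1.001 * (p * (p ^ 2 - q ^ 2))) :=
            mul_le_mul_of_nonneg_left e2 (abs_nonneg q)
        _ = 1.001 * |p * q * (p ^ 2 - q ^ 2)| := by rw [e1]; ring
        _ ≤ 1.001 * (24.483 * t) := by linarith
        _ ≤ 24.51 * β ^ 4 := by rw [hβ4]; linarith
    have e4 : β ^ 3 * (|q| * Y ^ 3) ≤ β ^ 3 * (24.51 * β) := by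
      calc β ^ 3 * (|q| * Y ^ 3) = |q| * (β * Y) ^ 3 := by ring
        _ ≤ _ := e3
        _ = _ := by ring
    exact le_of_mul_le_mul_left e4 (by positivity)
  have hCn : (0 : ℝ) < n.centralBinom := by exact_mod_cast n.centralBinom_pos
  have hCn1 : (0 : ℝ) < (n + 1).centralBinom := by exact_mod_cast (n + 1).centralBinom_pos
  have hCrel : ((n : ℝ) + 1) * (n + 1).centralBinom = 2 * (2 * n + 1) * n.centralBinom := by
    exact_mod_cast Nat.succ_mul_centralBinom_succ n
  -- if `c q = s p`, the bound on `Y` in `hS2` would be violated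
  have hnz : c * q - s * p ≠ 0 := by
    intro hz
    have e0 : |s| * p = c * |q| := by
      have : s * p = c * q := by linarith
      calc |s| * p = |s * p| := by rw [abs_mul, abs_of_pos hp0]
        _ = c * |q| := by rw [this, abs_mul, abs_of_pos hcpos]
    have e1 : 1.75 * 64 ^ n * β ≤ 1.0024 * ((n + 1) * ((n + 1).centralBinom * R ^ (n + 1))) * |s| := by
      have : β * (1.75 * 64 ^ n * β) ≤
          β * (1.0024 * ((n + 1) * ((n + 1).centralBinom * R ^ (n + 1))) * |s|) := by
        calc β * (1.75 * 64 ^ n * β) = 7 / 8 * 64 ^ n * (2 * β ^ 2) := by ring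
          _ ≤ 1.0024 * ((n + 1) * (c1 * |s|)) := hmin2
          _ ≤ 1.0024 * ((n + 1) * (((n + 1).centralBinom * R ^ (n + 1) * β) * |s|)) := by gcongr
          _ = _ := by ring
      exact le_of_mul_le_mul_left this hβ0
    have e2 : 1.75 * 64 ^ n * Y ^ 4 * β ^ 2 ≤
        24.6 * (n.centralBinom * (n + 1).centralBinom * R ^ (2 * n + 1) * (n + 1)) * β ^ 2 := by
      calc 1.75 * 64 ^ n * Y ^ 4 * β ^ 2 = 1.75 * 64 ^ n * β * Y ^ 3 * (β * Y) := by ring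
        _ ≤ 1.75 * 64 ^ n * β * Y ^ 3 * (1.0002 * p) := by gcongr
        _ ≤ 1.0024 * ((n + 1) * ((n + 1).centralBinom * R ^ (n + 1))) * |s| * Y ^ 3 * (1.0002 * p) := by
            gcongr
        _ = 1.0024 * 1.0002 * ((n + 1) * ((n + 1).centralBinom * R ^ (n + 1))) * Y ^ 3 *
            (|s| * p) := by ring
        _ = 1.0024 * 1.0002 * ((n + 1) * ((n + 1).centralBinom * R ^ (n + 1))) * c *
            (|q| * Y ^ 3) := by rw [e0]; ring
        _ ≤ 1.0024 * 1.0002 * ((n + 1) * ((n + 1).centralBinom * R ^ (n + 1))) *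
            (n.centralBinom * R ^ n * β) * (24.51 * β) := by gcongr
        _ = 1.0024 * 1.0002 * 24.51 *
            (n.centralBinom * (n + 1).centralBinom * R ^ (2 * n + 1) * (n + 1)) * β ^ 2 := by ring
        _ ≤ _ := by gcongr; norm_num
    have := le_of_mul_le_mul_right e2 (by positivity)
    linarith
  -- `padeQ` is `padeG n` times a Gaussian integer
  obtain ⟨w, hw⟩ := padeQ_gaussian ⟨t, 4⟩ n
  have hz : GaussianInt.toComplex ⟨t, 4⟩ = ((t : ℝ) : ℂ) + 4 * I := by
    simp [GaussianInt.toComplex_def]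
  rw [hz] at hw
  have hD : padeD t n = padeG n * (w.re + w.im * I) * (x - y * I) := by
    unfold padeD
    rw [hw, GaussianInt.toComplex_def]
    congr 1
    apply Complex.ext
    · simp [hx]
    · simp [hy]
  have hcR : c = padeG n * (w.re * x + w.im * y) := by
    rw [← hc', hD]; simp; ring
  have hsR : s = padeG n * (w.im * x - w.re * y) := by
    rw [← hs', hD]; simp; ring
  have hIm : c * q - s * p = β ^ 2 * (padeG n * ((w.re * b - w.im * a : ℤ) : ℝ)) := by
    rw [hcR, hsR, hp, hq, hβ2]; push_cast; ring
  have hint : 1 ≤ |((w.re * b - w.im * a : ℤ) : ℝ)| := by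
    have : w.re * b - w.im * a ≠ 0 := by
      intro h
      rw [hIm, h] at hnz
      simp at hnz
    have := Int.one_le_abs this
    exact_mod_cast this
  have hGle : β ^ 2 * padeG n ≤ c * |q| + |s| * p := by
    calc β ^ 2 * padeG n ≤ β ^ 2 * padeG n * |((w.re * b - w.im * a : ℤ) : ℝ)| :=
          le_mul_of_one_le_right (by positivity) hint
      _ = |c * q - s * p| := by
          rw [hIm, abs_mul, abs_mul, abs_of_nonneg (by positivity : 0 ≤ β ^ 2), Nat.abs_cast]; ring
      _ ≤ |c * q| + |s * p| := abs_sub _ _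
      _ = _ := by rw [abs_mul, abs_mul, abs_of_pos hcpos, abs_of_pos hp0]
  have hT1 : c * |q| ≤ β ^ 2 * (24.51 * (n.centralBinom * R ^ n) / Y ^ 3) := by
    rw [mul_div_assoc', le_div_iff₀ (by positivity)]
    calc c * |q| * Y ^ 3 = c * (|q| * Y ^ 3) := by ring
      _ ≤ (n.centralBinom * R ^ n * β) * (24.51 * β) := by gcongr
      _ = _ := by ring
  have hT2 : |s| * p ≤ β ^ 2 * (1.0002 * 64 ^ n * Y /
      ((2 * n + 1) * n.centralBinom * (t : ℝ) ^ (n + 1))) := by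
    rw [mul_div_assoc', le_div_iff₀ (by positivity)]
    have e1 : ((2 * n + 1) * n.centralBinom * (t : ℝ) ^ (n + 1)) * x * |s| ≤ 64 ^ n * β ^ 2 := by
      have : ((n : ℝ) + 1) * (((n + 1).centralBinom * (t : ℝ) ^ (n + 1) * x) * |s|) ≤
          64 ^ n * (2 * β ^ 2) := le_trans (by gcongr) hmin1
      have e2 : ((n : ℝ) + 1) * (((n + 1).centralBinom * (t : ℝ) ^ (n + 1) * x) * |s|) =
        2 * (((2 * n + 1) * n.centralBinom * (t : ℝ) ^ (n + 1)) * x * |s|) := by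
        calc _ = (((n : ℝ) + 1) * (n + 1).centralBinom) * ((t : ℝ) ^ (n + 1) * x * |s|) := by ring
          _ = _ := by rw [hCrel]; ring
      linarith
    have e3 : x * (|s| * p * ((2 * n + 1) * n.centralBinom * (t : ℝ) ^ (n + 1))) ≤
        x * (β ^ 2 * (1.0002 * 64 ^ n * Y)) := by
      calc x * (|s| * p * ((2 * n + 1) * n.centralBinom * (t : ℝ) ^ (n + 1)))
          = (((2 * n + 1) * n.centralBinom * (t : ℝ) ^ (n + 1)) * x * |s|) * p := by ring
        _ ≤ (64 ^ n * β ^ 2) * (β * Y) := by gcongr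
        _ ≤ (64 ^ n * β ^ 2) * (1.0002 * x * Y) := by gcongr
        _ = _ := by ring
    exact le_of_mul_le_mul_left e3 h1
  have : β ^ 2 * (padeG n : ℝ) ≤ β ^ 2 * (24.51 * (n.centralBinom * R ^ n) / Y ^ 3 +
      1.0002 * 64 ^ n * Y / ((2 * n + 1) * n.centralBinom * (t : ℝ) ^ (n + 1))) := by
    rw [mul_add]; linarith
  exact le_of_mul_le_mul_left this (by positivity)

end Complex

/-! ### The bootstrap step -/

/-- The consequence of the Padé construction used in the chain argument, as a predicate on the
real data `t`, `Y`, `R`. -/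
def PadeBound (t Y R : ℝ) : Prop := ∀ n : ℕ,
  24.6 * (n.centralBinom * (n + 1).centralBinom * R ^ (2 * n + 1) * (n + 1)) <
      1.75 * 64 ^ n * Y ^ 4 →
    (padeG n : ℝ) ≤ 24.51 * (n.centralBinom * R ^ n) / Y ^ 3 +
      1.0002 * 64 ^ n * Y / ((2 * n + 1) * n.centralBinom * t ^ (n + 1))

/-- One step of the bootstrap: a lower bound `e t ^ k ≤ Y` makes the first term of the Padé inequality of
order `n` at most `padeG n / 50`, so that the second one gives a new lower bound for `Y`, of
order `t ^ (n + 1)`. The conditions `s1`, `s2` are stated at `t = 58`, the worst case. -/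
lemma PadeBound.step {t Y R : ℝ} (hP : PadeBound t Y R) (ht : 58 ≤ t) (hY : 0 < Y) (hR0 : 0 < R)
    (hRt : 420 * R ≤ 421 * t) {e : ℝ} {k n : ℕ} (he : 0 < e) (hE : e * t ^ k ≤ Y)
    (hn1 : n ≤ 3 * k) (hn2 : 2 * n + 1 ≤ 4 * k) {g U U1 L : ℝ} (hg0 : 0 < g)
    (hg : g ≤ padeG n) (hU : n.centralBinom ≤ U) (hU1 : (n + 1).centralBinom ≤ U1)
    (hL : L ≤ (2 * n + 1) * n.centralBinom)
    (s1 : 1225.5 * U * 421 ^ n ≤ g * e ^ 3 * 58 ^ (3 * k - n) * 420 ^ n)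
    (s2 : 24.6 * U * U1 * (n + 1) * 421 ^ (2 * n + 1) <
      1.75 * 64 ^ n * e ^ 4 * 58 ^ (4 * k - (2 * n + 1)) * 420 ^ (2 * n + 1)) :
    0.9797 * L * g / 64 ^ n * t ^ (n + 1) ≤ Y := by
  have ht0 : 0 < t := by linarith
  have hC : (0 : ℝ) < n.centralBinom := by exact_mod_cast n.centralBinom_pos
  have hC1 : (0 : ℝ) < (n + 1).centralBinom := by exact_mod_cast (n + 1).centralBinom_pos
  -- `t ^ j` dominates the corresponding powers of `58` and of `R`
  have hpow : ∀ i m : ℕ, m ≤ i → 58 ^ (i - m) * (420 * R) ^ m ≤ 421 ^ m * t ^ i := by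
    intro i m him
    calc 58 ^ (i - m) * (420 * R) ^ m ≤ t ^ (i - m) * (421 * t) ^ m := by gcongr
      _ = 421 ^ m * t ^ i := by
        rw [mul_pow]
        calc t ^ (i - m) * (421 ^ m * t ^ m) = 421 ^ m * (t ^ (i - m) * t ^ m) := by ring
          _ = _ := by rw [← pow_add, Nat.sub_add_cancel him]
  have hYpow : ∀ j : ℕ, e ^ j * t ^ (j * k) ≤ Y ^ j := by
    intro j
    calc e ^ j * t ^ (j * k) = (e * t ^ k) ^ j := by rw [mul_pow, ← pow_mul, mul_comm k j]
      _ ≤ Y ^ j := by gcongr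
  have hS1 : 1225.5 * (n.centralBinom * R ^ n) ≤ padeG n * Y ^ 3 := by
    have h420 : (0 : ℝ) < 420 ^ n * 421 ^ n := by positivity
    refine le_of_mul_le_mul_right ?_ h420
    calc 1225.5 * (n.centralBinom * R ^ n) * (420 ^ n * 421 ^ n)
        ≤ 1225.5 * (U * R ^ n) * (420 ^ n * 421 ^ n) := by gcongr
      _ = (1225.5 * U * 421 ^ n) * (420 * R) ^ n := by rw [mul_pow]; ring
      _ ≤ (g * e ^ 3 * 58 ^ (3 * k - n) * 420 ^ n) * (420 * R) ^ n := by gcongr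
      _ = g * e ^ 3 * 420 ^ n * (58 ^ (3 * k - n) * (420 * R) ^ n) := by ring
      _ ≤ g * e ^ 3 * 420 ^ n * (421 ^ n * t ^ (3 * k)) := by
          gcongr g * e ^ 3 * 420 ^ n * ?_; exact hpow _ _ hn1
      _ = g * (e ^ 3 * t ^ (3 * k)) * (420 ^ n * 421 ^ n) := by ring
      _ ≤ padeG n * Y ^ 3 * (420 ^ n * 421 ^ n) := by
          gcongr
          exact hYpow 3
  have hS2 : 24.6 * (n.centralBinom * (n + 1).centralBinom * R ^ (2 * n + 1) * (n + 1)) <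
      1.75 * 64 ^ n * Y ^ 4 := by
    have h420 : (0 : ℝ) < 420 ^ (2 * n + 1) * 421 ^ (2 * n + 1) := by positivity
    refine lt_of_mul_lt_mul_right ?_ h420.le
    calc 24.6 * (n.centralBinom * (n + 1).centralBinom * R ^ (2 * n + 1) * (n + 1)) *
          (420 ^ (2 * n + 1) * 421 ^ (2 * n + 1))
        ≤ 24.6 * (U * U1 * R ^ (2 * n + 1) * (n + 1)) *
          (420 ^ (2 * n + 1) * 421 ^ (2 * n + 1)) := by
          have hU0 : 0 < U := hC.trans_le hU
          gcongr
      _ = (24.6 * U * U1 * (n + 1) * 421 ^ (2 * n + 1)) * (420 * R) ^ (2 * n + 1) := by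
          rw [mul_pow]; ring
      _ < (1.75 * 64 ^ n * e ^ 4 * 58 ^ (4 * k - (2 * n + 1)) * 420 ^ (2 * n + 1)) *
          (420 * R) ^ (2 * n + 1) := by gcongr
      _ = 1.75 * 64 ^ n * e ^ 4 * 420 ^ (2 * n + 1) *
          (58 ^ (4 * k - (2 * n + 1)) * (420 * R) ^ (2 * n + 1)) := by ring
      _ ≤ 1.75 * 64 ^ n * e ^ 4 * 420 ^ (2 * n + 1) * (421 ^ (2 * n + 1) * t ^ (4 * k)) := by
          gcongr 1.75 * 64 ^ n * e ^ 4 * 420 ^ (2 * n + 1) * ?_; exact hpow _ _ hn2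
      _ = 1.75 * 64 ^ n * (e ^ 4 * t ^ (4 * k)) * (420 ^ (2 * n + 1) * 421 ^ (2 * n + 1)) := by ring
      _ ≤ _ := by
          gcongr
          exact hYpow 4
  have hmain := hP n hS2
  have hX1 : 24.51 * (n.centralBinom * R ^ n) / Y ^ 3 ≤ padeG n / 50 := by
    rw [div_le_div_iff₀ (by positivity) (by norm_num)]
    linarith
  have hden : 0 < (2 * (n : ℝ) + 1) * n.centralBinom * t ^ (n + 1) := by positivity
  have hX2 : 0.98 * padeG n * ((2 * n + 1) * n.centralBinom * t ^ (n + 1)) ≤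
      1.0002 * 64 ^ n * Y := by
    have : 0.98 * (padeG n : ℝ) ≤ 1.0002 * 64 ^ n * Y /
      ((2 * n + 1) * n.centralBinom * t ^ (n + 1)) := by linarith
    rwa [le_div_iff₀ hden] at this
  rw [div_mul_eq_mul_div, div_le_iff₀ (by positivity)]
  have h1 : L * g * t ^ (n + 1) ≤ padeG n * ((2 * n + 1) * n.centralBinom * t ^ (n + 1)) := by
    calc L * g * t ^ (n + 1) ≤ ((2 * n + 1) * n.centralBinom) * padeG n * t ^ (n + 1) := by gcongr
      _ = _ := by ring
  have h2 : 0 < Y * 64 ^ n := by positivity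
  linarith

/-! ### Computing lower bounds for the common factor -/

/-- `leafG P ps n m` is the contribution of the odd number `m` to `padeG n`, or `1` when `m` is not
recognised as a prime power. It is meant for `P` divisible by all primes up to `√m`: then
`gcd m P = 1` makes `m` prime, and otherwise `m` is compared with powers of the primes in `ps`. -/
def leafG (P : ℕ) (ps : List ℕ) (n m : ℕ) : ℕ :=
  @Bool.rec (fun _ => ℕ) (nat_lit 1)
    (@Bool.rec (fun _ => ℕ)
      (@Bool.rec (fun _ => ℕ) (nat_lit 1) (Nat.gcd m P)
        (ps.any (Nat.beq (Nat.gcd m P)) &&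
          Nat.beq (Nat.mod (Nat.pow (Nat.gcd m P) (nat_lit 20)) m) (nat_lit 0)))
      m (Nat.beq (Nat.gcd m P) (nat_lit 1)))
    (Nat.ble (Nat.mul (nat_lit 3) m) (Nat.succ (Nat.mul (nat_lit 4) (Nat.mod n m))))

/-- Product of `f` over the `2 ^ k` odd numbers from `2 * lo + 3` on, by bisection; blocks
beyond `B` are skipped. Recursors and raw literals keep the kernel evaluation short. -/
def oddProd (f : ℕ → ℕ) (B k : ℕ) : ℕ → ℕ :=
  @Nat.rec (fun _ => ℕ → ℕ)
    (fun lo => f (Nat.add (Nat.mul (nat_lit 2) lo) (nat_lit 3)))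
    (fun k ih lo => @Bool.rec (fun _ => ℕ)
      (Nat.mul (ih lo) (ih (Nat.add lo (Nat.pow (nat_lit 2) k)))) (nat_lit 1)
      (Nat.blt B (Nat.add (Nat.mul (nat_lit 2) lo) (nat_lit 3)))) k

lemma oddProd_le (f h : ℕ → ℕ) (hf : ∀ i, f (2 * i + 3) ≤ h (2 * i + 3)) (h1 : ∀ m, 1 ≤ h m)
    (B k : ℕ) : ∀ lo, oddProd f B k lo ≤ ∏ i ∈ range (2 ^ k), h (2 * (lo + i) + 3) := by
  induction k with
  | zero =>
    intro lo
    have : oddProd f B 0 lo = f (2 * lo + 3) := rfl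
    simpa [this] using hf lo
  | succ k ih =>
    intro lo
    have hrec : oddProd f B (k + 1) lo = @Bool.rec (fun _ => ℕ)
      (oddProd f B k lo * oddProd f B k (lo + 2 ^ k)) 1 (Nat.blt B (2 * lo + 3)) := rfl
    rw [hrec]
    cases hb : Nat.blt B (2 * lo + 3)
    · show oddProd f B k lo * oddProd f B k (lo + 2 ^ k) ≤ _
      rw [pow_succ, mul_two, prod_range_add]
      refine Nat.mul_le_mul (ih lo) ((ih _).trans (le_of_eq ?_))
      apply prod_congr rfl
      intro i _
      congr 1
      ring
    · exact Finset.one_le_prod' fun i _ => h1 _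

lemma leafG_le {P Bd : ℕ} {ps : List ℕ} (hP : ∀ p < Bd, 2 ≤ p → Nat.gcd p P ≠ 1)
    (hps : ∀ p ∈ ps, p.Prime) {n : ℕ} (hn : 4 * n + 1 < 3 * Bd ^ 2) (i : ℕ) :
    leafG P ps n (2 * i + 3) ≤
      if Odd (2 * i + 3) ∧ IsPrimePow (2 * i + 3) ∧ 3 * (2 * i + 3) ≤ 4 * (n % (2 * i + 3)) + 1
        then (2 * i + 3).minFac else 1 := by
  have hodd : Odd (2 * i + 3) := ⟨i + 1, by ring⟩
  have hm2 : 3 ≤ 2 * i + 3 := by omega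
  generalize 2 * i + 3 = m at hodd hm2
  have hone : 1 ≤ if Odd m ∧ IsPrimePow m ∧ 3 * m ≤ 4 * (n % m) + 1 then m.minFac else 1 := by
    split_ifs
    · exact Nat.minFac_pos m
    · exact le_rfl
  unfold leafG
  cases h1 : Nat.ble (Nat.mul 3 m) (Nat.succ (Nat.mul 4 (Nat.mod n m)))
  · exact hone
  have h1' : 3 * m ≤ 4 * (n % m) + 1 := Nat.le_of_ble_eq_true h1
  cases h2 : Nat.beq (Nat.gcd m P) 1
  · cases h3 : (ps.any (Nat.beq (Nat.gcd m P)) &&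
      Nat.beq (Nat.mod (Nat.pow (Nat.gcd m P) 20) m) 0)
    · exact hone
    show Nat.gcd m P ≤ _
    rw [Bool.and_eq_true, List.any_eq_true] at h3
    obtain ⟨⟨p, hp, hpg⟩, h4⟩ := h3
    have hpg' : Nat.gcd m P = p := Nat.eq_of_beq_eq_true hpg
    have hpp := hps p hp
    have h4' : p ^ 20 % m = 0 := by rw [← hpg']; exact Nat.eq_of_beq_eq_true h4
    obtain ⟨j, -, hj⟩ := (Nat.dvd_prime_pow hpp).mp (Nat.dvd_of_mod_eq_zero h4')
    have hj0 : j ≠ 0 := by rintro rfl; simp at hj; omega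
    have hpw : IsPrimePow m := hj ▸ hpp.isPrimePow.pow hj0
    rw [if_pos ⟨hodd, hpw, h1'⟩, hpg', hj, hpp.pow_minFac hj0]
  · show m ≤ _
    have hg : Nat.gcd m P = 1 := Nat.eq_of_beq_eq_true h2
    have hmp : m.Prime := by
      by_contra hnp
      have hq := Nat.minFac_prime (show m ≠ 1 by omega)
      have hlt : m.minFac < Bd := by
        have h5 := Nat.minFac_sq_le_self (by omega : 0 < m) hnp
        have h6 : n % m ≤ n := Nat.mod_le _ _
        by_contra h7
        have : Bd ^ 2 ≤ m.minFac ^ 2 := Nat.pow_le_pow_left (by omega) 2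
        omega
      have h8 := hP _ hlt hq.two_le
      apply h8
      exact Nat.Coprime.coprime_dvd_left (Nat.minFac_dvd m) hg
    rw [if_pos ⟨hodd, hmp.isPrimePow, h1'⟩, hmp.minFac_eq]

/-- A kernel-computable lower bound for `padeG n`, from the odd numbers below `2 ^ (k + 1) + 3`. -/
def padeGLow (P : ℕ) (ps : List ℕ) (n k : ℕ) : ℕ :=
  oddProd (leafG P ps n) (Nat.succ (Nat.div (Nat.mul 4 n) 3)) k 0

lemma padeGLow_le {P Bd : ℕ} {ps : List ℕ} (hP : ∀ p < Bd, 2 ≤ p → Nat.gcd p P ≠ 1)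
    (hps : ∀ p ∈ ps, p.Prime) {n : ℕ} (hn : 4 * n + 1 < 3 * Bd ^ 2) (k : ℕ) :
    padeGLow P ps n k ≤ padeG n := by
  set h : ℕ → ℕ := fun m =>
    if Odd m ∧ IsPrimePow m ∧ 3 * m ≤ 4 * (n % m) + 1 then m.minFac else 1 with hh
  have h1 : ∀ m, 1 ≤ h m := by
    intro m
    simp only [hh]
    split_ifs
    · exact Nat.minFac_pos m
    · exact le_rfl
  refine (oddProd_le _ h (fun i => leafG_le hP hps hn i) h1 _ k 0).trans ?_
  rw [← prod_image (s := range (2 ^ k)) (g := fun i => 2 * (0 + i) + 3) (f := h)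
    (by intro x _ y _ hxy; simp only at hxy; omega)]
  simp only [hh]
  rw [← prod_filter]
  unfold padeG
  refine Finset.prod_le_prod_of_subset_of_one_le' ?_ fun m _ _ => Nat.minFac_pos m
  intro m hm
  rw [mem_filter] at hm ⊢
  obtain ⟨-, hodd, hpp, hc⟩ := hm
  have : n % m ≤ n := Nat.mod_le _ _
  have : 0 < m := hpp.pos
  exact ⟨mem_Icc.mpr ⟨by omega, by omega⟩, hodd, hpp, hc⟩

/-! ### The finite chain -/

/-- Central binomial coefficients by their one-step recursion. -/
def cbRec : ℕ → ℕ
  | 0 => 1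
  | n + 1 => 2 * (2 * n + 1) * cbRec n / (n + 1)

lemma cbRec_eq (n : ℕ) : cbRec n = n.centralBinom := by
  induction n with
  | zero => rfl
  | succ n ih =>
    rw [cbRec, ih, ← Nat.succ_mul_centralBinom_succ, Nat.mul_div_cancel_left _ n.succ_pos]

/-- An upper bound for the central binomial coefficient, exact for small `n`. -/
def cbHi (n : ℕ) : ℕ := if n ≤ 65 then cbRec n else 4 ^ n

/-- A lower bound for `(2 * n + 1) * n.centralBinom`, exact for small `n`. -/
def cbLo (n : ℕ) : ℕ := if n ≤ 65 then (2 * n + 1) * cbRec n else 4 ^ n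

lemma centralBinom_le_four_pow (n : ℕ) : n.centralBinom ≤ 4 ^ n := by
  rw [Nat.centralBinom_eq_two_mul_choose, show 4 = 2 ^ 2 by norm_num, ← pow_mul]
  exact Nat.choose_le_two_pow _ _

lemma four_pow_le_centralBinom (n : ℕ) : 4 ^ n ≤ (2 * n + 1) * n.centralBinom := by
  rw [Nat.centralBinom_eq_two_mul_choose]
  calc 4 ^ n ≤ (2 * n + 1) * (2 * n).choose (2 * n / 2) := by
        rw [show 4 = 2 ^ 2 by norm_num, ← pow_mul, ← Nat.sum_range_choose]
        refine (sum_le_card_nsmul _ _ _ fun i _ => Nat.choose_le_middle i (2 * n)).trans ?_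
        simp
    _ = _ := by rw [Nat.mul_div_cancel_left n two_pos]

lemma le_cbHi (n : ℕ) : n.centralBinom ≤ cbHi n := by
  unfold cbHi
  split_ifs
  · exact (cbRec_eq n).ge
  · exact centralBinom_le_four_pow n

lemma cbLo_le (n : ℕ) : cbLo n ≤ (2 * n + 1) * n.centralBinom := by
  unfold cbLo
  split_ifs
  · rw [cbRec_eq]
  · exact four_pow_le_centralBinom n

lemma cbLo_pos (n : ℕ) : 0 < cbLo n := by
  unfold cbLo
  split_ifs
  · rw [cbRec_eq]; exact Nat.mul_pos (by omega) n.centralBinom_pos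
  · positivity

/-- The lower bound for `Y` attached to a node `(n, m, a, k)`, where `padeG n` is at least
`m * 2 ^ a`; the entry `k` only controls how that bound is computed. -/
def NodeBound (t Y : ℝ) (p : ℕ × ℕ × ℕ × ℕ) : Prop :=
  0.9797 * cbLo p.1 * ((p.2.1 * 2 ^ p.2.2.1 : ℕ) : ℝ) / 64 ^ p.1 * t ^ (p.1 + 1) ≤ Y

/-- The hypotheses of `PadeBound.step` for passing from the node `p` to the node `q`, in integers
and for `t = 58`. -/
def stepOK (p q : ℕ × ℕ × ℕ × ℕ) : Bool :=
  let e := 9797 * cbLo p.1 * (p.2.1 * 2 ^ p.2.2.1)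
  let d := 10000 * 64 ^ p.1
  Nat.blt 0 p.2.1 && Nat.blt 0 q.2.1 && Nat.ble q.1 (3 * (p.1 + 1)) &&
  Nat.ble (2 * q.1 + 1) (4 * (p.1 + 1)) &&
  Nat.ble (12255 * cbHi q.1 * 421 ^ q.1 * d ^ 3)
    (10 * (q.2.1 * 2 ^ q.2.2.1) * e ^ 3 * 58 ^ (3 * (p.1 + 1) - q.1) * 420 ^ q.1) &&
  Nat.blt (2460 * cbHi q.1 * cbHi (q.1 + 1) * (q.1 + 1) * 421 ^ (2 * q.1 + 1) * d ^ 4)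
    (175 * 64 ^ q.1 * e ^ 4 * 58 ^ (4 * (p.1 + 1) - (2 * q.1 + 1)) * 420 ^ (2 * q.1 + 1))

lemma NodeBound.step {t Y R : ℝ} (hP : PadeBound t Y R) (ht : 58 ≤ t) (hY : 0 < Y) (hR0 : 0 < R)
    (hRt : 420 * R ≤ 421 * t) {p q : ℕ × ℕ × ℕ × ℕ} (hp : NodeBound t Y p)
    (hq : q.2.1 * 2 ^ q.2.2.1 ≤ padeG q.1) (h : stepOK p q = true) : NodeBound t Y q := by
  obtain ⟨n, m, a, k⟩ := p
  obtain ⟨n', m', a', k'⟩ := q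
  simp only [stepOK, Bool.and_eq_true, Nat.blt_eq, Nat.ble_eq] at h
  obtain ⟨⟨⟨⟨⟨h1, h2⟩, h3⟩, h4⟩, h5⟩, h6⟩ := h
  simp only [NodeBound] at hp hq ⊢
  have hL : (0 : ℝ) < cbLo n := by exact_mod_cast cbLo_pos n
  have hg : (0 : ℝ) < ((m * 2 ^ a : ℕ) : ℝ) := by
    exact_mod_cast Nat.mul_pos h1 (by positivity)
  have hd : (0 : ℝ) < 10000 * 64 ^ n := by positivity
  refine hP.step ht hY hR0 hRt (e := 0.9797 * cbLo n * ((m * 2 ^ a : ℕ) : ℝ) / 64 ^ n) (k := n + 1)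
    (U := cbHi n') (U1 := cbHi (n' + 1)) (by positivity) hp h3 h4
    (by exact_mod_cast Nat.mul_pos h2 (by positivity)) (by exact_mod_cast hq)
    (by exact_mod_cast le_cbHi n') (by exact_mod_cast le_cbHi (n' + 1))
    (by exact_mod_cast cbLo_le n') ?_ ?_
  all_goals
    rw [show 0.9797 * (cbLo n : ℝ) * ((m * 2 ^ a : ℕ) : ℝ) / 64 ^ n =
      (9797 * cbLo n * ((m * 2 ^ a : ℕ) : ℝ)) / (10000 * 64 ^ n) by field_simp; norm_num]
  · have h5' : (12255 * cbHi n' * 421 ^ n' * (10000 * 64 ^ n) ^ 3 : ℝ) ≤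
      10 * ((m' * 2 ^ a' : ℕ) : ℝ) * (9797 * cbLo n * ((m * 2 ^ a : ℕ) : ℝ)) ^ 3 *
        58 ^ (3 * (n + 1) - n') * 420 ^ n' := by exact_mod_cast h5
    generalize (10000 * 64 ^ n : ℝ) = d at *
    rw [div_pow, mul_div_assoc', div_mul_eq_mul_div, div_mul_eq_mul_div, le_div_iff₀ (by positivity)]
    linarith
  · have h6' : (2460 * cbHi n' * cbHi (n' + 1) * (n' + 1) * 421 ^ (2 * n' + 1) *
        (10000 * 64 ^ n) ^ 4 : ℝ) <
      175 * 64 ^ n' * (9797 * cbLo n * ((m * 2 ^ a : ℕ) : ℝ)) ^ 4 *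
        58 ^ (4 * (n + 1) - (2 * n' + 1)) * 420 ^ (2 * n' + 1) := by exact_mod_cast h6
    generalize (10000 * 64 ^ n : ℝ) = d at *
    rw [div_pow, mul_div_assoc', div_mul_eq_mul_div, div_mul_eq_mul_div, lt_div_iff₀ (by positivity)]
    linarith

/-- All consecutive steps along the list are admissible. -/
def chainOK : (ℕ × ℕ × ℕ × ℕ) → List (ℕ × ℕ × ℕ × ℕ) → Bool
  | _, [] => true
  | p, q :: l => stepOK p q && chainOK q l

lemma NodeBound.chain {t Y R : ℝ} (hP : PadeBound t Y R) (ht : 58 ≤ t) (hY : 0 < Y) (hR0 : 0 < R)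
    (hRt : 420 * R ≤ 421 * t) (l : List (ℕ × ℕ × ℕ × ℕ)) :
    ∀ p : ℕ × ℕ × ℕ × ℕ, NodeBound t Y p →
    (∀ q ∈ l, q.2.1 * 2 ^ q.2.2.1 ≤ padeG q.1) → chainOK p l = true →
    NodeBound t Y (l.getLastD p) := by
  induction l with
  | nil => intro p hp _ _; exact hp
  | cons q l ih =>
    intro p hp hl hc
    rw [chainOK, Bool.and_eq_true] at hc
    have hq := hp.step hP ht hY hR0 hRt (hl q (by simp)) hc.1
    have := ih q hq (fun r hr => hl r (by simp [hr])) hc.2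
    rwa [List.getLastD_cons]

/-- The product bounds `m * 2 ^ a ≤ padeGLow` for all nodes of a list. -/
def nodesOK (P : ℕ) (ps : List ℕ) (l : List (ℕ × ℕ × ℕ × ℕ)) : Bool :=
  l.all fun q => Nat.ble (q.2.1 * 2 ^ q.2.2.1) (padeGLow P ps q.1 q.2.2.2)

lemma le_padeG_of_nodesOK {P Bd : ℕ} {ps : List ℕ} {l : List (ℕ × ℕ × ℕ × ℕ)}
    (hP : ∀ p < Bd, 2 ≤ p → Nat.gcd p P ≠ 1) (hps : ∀ p ∈ ps, p.Prime)
    (hl : ∀ q ∈ l, 4 * q.1 + 1 < 3 * Bd ^ 2) (h : nodesOK P ps l = true) :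
    ∀ q ∈ l, q.2.1 * 2 ^ q.2.2.1 ≤ padeG q.1 := by
  intro q hq
  rw [nodesOK, List.all_eq_true] at h
  exact (Nat.le_of_ble_eq_true (h q hq)).trans (padeGLow_le hP hps (hl q hq) _)

/-- The orders `n` visited by the finite chain, with lower bounds `m * 2 ^ a` for `padeG n`. The lists
`nodes0`, …, `nodes3` are separated because they use different primorials in `padeGLow`. -/
def nodes0 : List (ℕ × ℕ × ℕ × ℕ) := [
  (4,5,0,1), (5,21,0,2), (7,3,0,2), (8,99,0,3), (10,143,0,3), (12,91,0,3), (14,605,3,4),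
  (17,983,2,4), (20,622,7,4), (24,855,10,4), (28,519,6,5), (30,837,8,5), (32,558,16,5),
  (36,722,20,5), (41,949,22,5), (47,852,23,5), (51,861,24,6), (55,543,38,6), (62,651,33,6),
  (64,868,41,6), (69,854,36,6), (72,536,35,6), (73,712,35,6), (74,595,39,6), (76,645,47,6),
  (80,733,52,6), (86,720,65,6), (95,717,56,6), (98,606,63,7), (104,708,70,7), (112,725,64,7),
  (116,755,72,7), (119,586,84,7), (129,837,91,7), (140,685,99,7), (149,640,116,7),
  (162,1008,102,7), (170,551,112,7), (180,727,128,7), (194,568,127,8), (204,766,154,8)]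

/-- Continuation of `nodes0`. -/
def nodes1 : List (ℕ × ℕ × ℕ × ℕ) := [
  (223,804,158,8), (236,632,168,8), (253,516,171,8), (267,1002,170,8), (278,539,188,8),
  (292,624,212,8), (314,621,221,8), (334,676,236,8), (350,718,272,8), (377,749,273,8),
  (401,643,285,9), (427,708,307,9), (455,628,308,9), (478,873,341,9), (509,712,380,9),
  (548,682,408,9), (590,918,405,9), (621,975,428,9), (653,798,477,9), (698,561,502,9),
  (740,879,546,9), (791,544,597,10), (852,746,624,10), (912,840,642,10), (965,648,686,10),
  (1022,998,724,10)]

/-- Continuation of `nodes1`. -/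
def nodes2 : List (ℕ × ℕ × ℕ × ℕ) := [
  (1080,981,781,10), (1151,751,838,10), (1224,904,951,10), (1324,558,986,10), (1421,898,1040,10),
  (1515,763,1112,10), (1616,1000,1166,11), (1715,588,1234,11), (1821,819,1399,11),
  (1966,576,1435,11), (2096,959,1516,11), (2228,581,1627,11), (2376,799,1694,11),
  (2512,837,1837,11), (2670,855,1951,11), (2847,545,2142,11), (3059,948,2277,11),
  (3278,592,2383,12), (3488,909,2517,12), (3705,551,2675,12), (3936,606,2848,12),
  (4181,566,3103,12), (4475,580,3330,12)]

/-- Continuation of `nodes2`, up to the order `25544`, from which `pow_le_padeG` takes over. -/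
def nodes3 : List (ℕ × ℕ × ℕ × ℕ) := [
  (4794,971,3563,12), (5134,676,3787,12), (5483,801,3967,12), (5827,592,4258,12),
  (6209,660,4563,13), (6626,564,4840,13), (7048,821,5178,13), (7521,857,5632,13),
  (8055,601,5956,13), (8611,977,6235,13), (9148,901,6660,13), (9735,1009,7138,13),
  (10381,541,7718,13), (11111,627,8183,13), (11863,1012,8763,13), (12676,929,9246,14),
  (13496,862,9922,14), (14396,657,10468,14), (15313,695,11164,14), (16274,928,12044,14),
  (17390,957,12811,14), (18566,733,13630,14), (19784,517,14499,14), (21086,1009,15470,14),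
  (22472,581,16484,14), (23961,555,17563,14), (25544,648,18671,15)]

/-- The primes below 191. -/
def smallPrimes : List ℕ := [
  2, 3, 5, 7, 11, 13, 17, 19, 23, 29, 31, 37, 41, 43, 47, 53, 59, 61, 67, 71, 73, 79, 83, 89,
  97, 101, 103, 107, 109, 113, 127, 131, 137, 139, 149, 151, 157, 163, 167, 173, 179, 181]

lemma smallPrimes_prime : ∀ p ∈ smallPrimes, p.Prime := by
  unfold smallPrimes
  simp only [List.mem_cons, List.not_mem_nil, or_false, forall_eq_or_imp, forall_eq]
  norm_num

lemma nodes0_le : ∀ q ∈ nodes0, q.2.1 * 2 ^ q.2.2.1 ≤ padeG q.1 :=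
  le_padeG_of_nodesOK (P := 30030)
    (Bd := 17) (ps := (smallPrimes.take 6))
    (by decide +kernel) (fun p hp => smallPrimes_prime p (List.mem_of_mem_take hp)) (by decide +kernel) (by decide +kernel)

lemma nodes1_le : ∀ q ∈ nodes1, q.2.1 * 2 ^ q.2.2.1 ≤ padeG q.1 :=
  le_padeG_of_nodesOK (P := 200560490130)
    (Bd := 37) (ps := (smallPrimes.take 11))
    (by decide +kernel) (fun p hp => smallPrimes_prime p (List.mem_of_mem_take hp)) (by decide +kernel) (by decide +kernel)

lemma nodes2_le : ∀ q ∈ nodes2, q.2.1 * 2 ^ q.2.2.1 ≤ padeG q.1 :=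
  le_padeG_of_nodesOK (P := 40729680599249024150621323470)
    (Bd := 79) (ps := (smallPrimes.take 21))
    (by decide +kernel) (fun p hp => smallPrimes_prime p (List.mem_of_mem_take hp)) (by decide +kernel) (by decide +kernel)

lemma nodes3_le : ∀ q ∈ nodes3, q.2.1 * 2 ^ q.2.2.1 ≤ padeG q.1 :=
  le_padeG_of_nodesOK (P := 5397346292805549782720214077673687806275517530364350655459511599582614290)
    (Bd := 191) (ps := (smallPrimes.take 42))
    (by decide +kernel) (fun p hp => smallPrimes_prime p (List.mem_of_mem_take hp)) (by decide +kernel) (by decide +kernel)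

lemma chain_ok : chainOK (4, 5, 0, 1) (nodes0.tail ++ nodes1 ++ nodes2 ++ nodes3) = true := by
  decide +kernel

/-! ### Factorials, the von Mangoldt function, and a bound for `ψ` -/

open ArithmeticFunction in
lemma log_factorial_eq_sum (N k : ℕ) :
    Real.log (N / k).factorial = ∑ m ∈ Ioc 0 N, vonMangoldt m * ((N / m / k : ℕ) : ℝ) := by
  have h1 : ∀ M : ℕ, Real.log M.factorial = ∑ m ∈ Ioc 0 M, vonMangoldt m * ((M / m : ℕ) : ℝ) := by
    intro M
    rw [← sum_Ioc_mul_zeta_eq_sum, vonMangoldt_mul_zeta]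
    induction M with
    | zero => simp
    | succ M ih =>
      rw [Nat.factorial_succ, Nat.cast_mul,
        Real.log_mul (by positivity) (by exact_mod_cast M.factorial_ne_zero), ih,
        Finset.sum_Ioc_succ_top (by omega)]
      simp [ArithmeticFunction.log_apply, add_comm]
  rw [h1]
  have hsub : Ioc 0 (N / k) ⊆ Ioc 0 N := Ioc_subset_Ioc_right (Nat.div_le_self _ _)
  rw [← sum_subset hsub]
  · refine sum_congr rfl fun m _ => ?_
    rw [Nat.div_div_eq_div_mul, Nat.div_div_eq_div_mul, mul_comm m k]
  · intro m hm hm'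
    have h0 : N / k < m := by simp only [mem_Ioc, not_and, not_le] at hm hm'; omega
    have : N / m / k = 0 := by
      rw [Nat.div_div_eq_div_mul, mul_comm, ← Nat.div_div_eq_div_mul]
      exact Nat.div_eq_of_lt h0
    simp [this]

lemma psi_natCast (N : ℕ) :
    Chebyshev.psi N = ∑ m ∈ Ioc 0 N, ArithmeticFunction.vonMangoldt m := by
  simp [Chebyshev.psi]

/-- Terms with `K ≤ ⌊N / m⌋` are those with `m ≤ ⌊N / K⌋`. -/
lemma sum_vonMangoldt_ite (N : ℕ) {K : ℕ} (hK : 0 < K) :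
    ∑ m ∈ Ioc 0 N, ArithmeticFunction.vonMangoldt m * (if K ≤ N / m then 1 else 0) =
      Chebyshev.psi ((N / K : ℕ) : ℝ) := by
  rw [psi_natCast, ← sum_subset (Ioc_subset_Ioc_right (Nat.div_le_self N K))]
  · refine sum_congr rfl fun m hm => ?_
    rw [mem_Ioc] at hm
    rw [if_pos, mul_one]
    rw [Nat.le_div_iff_mul_le hm.1, mul_comm]
    exact (Nat.le_div_iff_mul_le hK).mp hm.2
  · intro m hm hm'
    rw [if_neg, mul_zero]
    rw [mem_Ioc] at hm hm'
    intro h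
    apply hm'
    refine ⟨hm.1, ?_⟩
    rw [Nat.le_div_iff_mul_le hm.1, mul_comm] at h
    exact (Nat.le_div_iff_mul_le hK).mpr h

/-- Stirling's formula with a crude but uniform error term, valid for the floor `⌊N / k⌋`. -/
lemma abs_log_factorial_div_sub_le {N k : ℕ} (hk : 0 < k) (hkN : k ≤ N) {x : ℝ}
    (hx : x = (N : ℝ) / k) :
    |Real.log (N / k).factorial - (x * Real.log x - x)| ≤ Real.log x / 2 + 1 := by
  have hk' : (0 : ℝ) < k := by exact_mod_cast hk
  obtain ⟨m, hm⟩ : ∃ m, m = N / k := ⟨_, rfl⟩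
  rw [← hm]
  have hm1 : 1 ≤ m := by rw [hm]; exact Nat.div_pos hkN hk
  have hm1' : (1 : ℝ) ≤ m := by exact_mod_cast hm1
  have hmx : (m : ℝ) ≤ x := by
    rw [hx, le_div_iff₀ hk', hm]
    exact_mod_cast Nat.div_mul_le_self N k
  have hxm : x < m + 1 := by
    rw [hx, div_lt_iff₀ hk', hm]
    have := Nat.lt_div_mul_add hk (a := N)
    have h2 : N < (N / k + 1) * k := by rw [add_mul, one_mul]; exact this
    exact_mod_cast h2
  have hx0 : 0 < x := by linarith
  have hlogm : 0 ≤ Real.log m := Real.log_nonneg hm1'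
  have hlogx : Real.log m ≤ Real.log x := Real.log_le_log (by linarith) hmx
  have e1 : m * (Real.log x - Real.log m) ≤ x - m := by
    have := Real.log_le_sub_one_of_pos (x := x / m) (by positivity)
    rw [Real.log_div (by positivity) (by positivity)] at this
    calc m * (Real.log x - Real.log m) ≤ m * (x / m - 1) := by gcongr
      _ = x - m := by field_simp
  have e2 : x * (Real.log m - Real.log x) ≤ m - x := by
    have := Real.log_le_sub_one_of_pos (x := m / x) (by positivity)
    rw [Real.log_div (by positivity) (by positivity)] at this
    calc x * (Real.log m - Real.log x) ≤ x * (m / x - 1) := by gcongr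
      _ = m - x := by field_simp
  have e3 : (x - m) * Real.log x ≤ 1 * Real.log x := by gcongr <;> linarith
  have e4 : 0 ≤ (x - m) * Real.log m := by
    apply mul_nonneg <;> linarith
  have e5 : Real.log x - Real.log m ≤ 1 := by nlinarith
  have lo := Stirling.le_log_factorial_stirling (n := m) (by omega)
  have hpi : 0 ≤ Real.log (2 * Real.pi) := Real.log_nonneg (by linarith [Real.two_le_pi])
  have hi : Real.log m.factorial ≤ m * Real.log m - m + Real.log m / 2 + 1 := by
    have h := Stirling.log_stirlingSeq'_antitone (Nat.zero_le (m - 1))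
    have hs : (m - 1).succ = m := by omega
    simp only [Function.comp_apply, hs, Stirling.log_stirlingSeq_formula] at h
    rw [Real.log_div (by positivity) (Real.exp_pos 1).ne',
      Real.log_mul (by norm_num) (by positivity)] at h
    norm_num at h
    linarith
  rw [abs_le]
  constructor <;> nlinarith

/-- `lcmOK f N L` verifies `lcm(1, …, M) ^ 5 ≤ 2 ^ (8 * M)` for `N < M ≤ N + f`, given
`L = lcm(1, …, N)`. -/
def lcmOK : ℕ → ℕ → ℕ → Bool
  | 0, _, _ => true
  | f + 1, N, L => Nat.ble ((L * ((N + 1) / Nat.gcd L (N + 1))) ^ 5) (2 ^ (8 * (N + 1))) &&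
      lcmOK f (N + 1) (L * ((N + 1) / Nat.gcd L (N + 1)))

lemma lcmUpto_succ (N : ℕ) : Nat.lcmUpto (N + 1) =
    Nat.lcmUpto N * ((N + 1) / Nat.gcd (Nat.lcmUpto N) (N + 1)) := by
  rw [← Nat.mul_div_assoc _ (Nat.gcd_dvd_right _ _)]
  change _ = Nat.lcm _ _
  rw [Nat.lcm_comm]
  unfold Nat.lcmUpto
  rw [← Finset.insert_Icc_right_eq_Icc_add_one (by omega), Finset.lcm_insert]
  rfl

lemma lcmUpto_pow_le_of_lcmOK {f N : ℕ} (h : lcmOK f N (Nat.lcmUpto N) = true) :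
    ∀ M, N < M → M ≤ N + f → Nat.lcmUpto M ^ 5 ≤ 2 ^ (8 * M) := by
  induction f generalizing N with
  | zero => intro M h1 h2; omega
  | succ f ih =>
    rw [lcmOK, Bool.and_eq_true, ← lcmUpto_succ] at h
    intro M h1 h2
    rcases eq_or_lt_of_le (Nat.succ_le_of_lt h1) with h3 | h3
    · rw [← h3]; exact Nat.le_of_ble_eq_true h.1
    · exact ih h.2 M h3 (by omega)

lemma lcmOK_2200 : lcmOK 2200 0 1 = true := by decide +kernel

lemma psi_le_of_le_2200 {N : ℕ} (hN : N ≤ 2200) : Chebyshev.psi N ≤ 1.12 * N := by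
  rcases Nat.eq_zero_or_pos N with rfl | hpos
  · simp
  have h := lcmUpto_pow_le_of_lcmOK (f := 2200) (N := 0) lcmOK_2200 N hpos (by omega)
  have h' : ((Nat.lcmUpto N : ℕ) : ℝ) ^ 5 ≤ 2 ^ (8 * N) := by exact_mod_cast h
  have hL : (0 : ℝ) < Nat.lcmUpto N := by exact_mod_cast Nat.lcmUpto_pos N
  have h2 := Real.log_le_log (by positivity) h'
  rw [Real.log_pow, Real.log_pow] at h2
  rw [Chebyshev.psi_eq_log_lcmUpto]
  push_cast at h2
  have hN0 : (0 : ℝ) ≤ N := by positivity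
  nlinarith [Real.log_two_lt_d9]

lemma log_three_le : Real.log 3 ≤ 27 / 17 * Real.log 2 := by
  have h := Real.log_le_log (by norm_num) (show (3 : ℝ) ^ 17 ≤ 2 ^ 27 by norm_num)
  rw [Real.log_pow, Real.log_pow] at h
  push_cast at h
  linarith

lemma log_five_le : Real.log 5 ≤ 7 / 3 * Real.log 2 := by
  have h := Real.log_le_log (by norm_num) (show (5 : ℝ) ^ 3 ≤ 2 ^ 7 by norm_num)
  rw [Real.log_pow, Real.log_pow] at h
  push_cast at h
  linarith

/-- Chebyshev's upper bound for `ψ`, from the integer-valued factorial ratio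
`N! ⌊N/30⌋! / (⌊N/2⌋! ⌊N/3⌋! ⌊N/5⌋!)`. -/
lemma psi_le (N : ℕ) : Chebyshev.psi N ≤ 1.12 * N := by
  induction N using Nat.strong_induction_on with
  | _ N ih =>
  rcases le_or_gt N 2200 with hN | hN
  · exact psi_le_of_le_2200 hN
  have hN' : (2200 : ℝ) < N := by exact_mod_cast hN
  have ih6 : Chebyshev.psi ((N / 6 : ℕ) : ℝ) ≤ 1.12 * (N / 6 : ℝ) := by
    refine (ih (N / 6) (by omega)).trans ?_
    gcongr
    exact Nat.cast_div_le
  have key : Chebyshev.psi N + Real.log (N / 2).factorial + Real.log (N / 3).factorial +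
      Real.log (N / 5).factorial ≤ Real.log (N / 1).factorial + Real.log (N / 30).factorial +
      Chebyshev.psi ((N / 6 : ℕ) : ℝ) := by
    rw [← sum_vonMangoldt_ite N (by norm_num : 0 < 6), psi_natCast]
    simp only [log_factorial_eq_sum, ← sum_add_distrib]
    refine sum_le_sum fun m hm => ?_
    rw [mem_Ioc] at hm
    have hu : 1 ≤ N / m := Nat.div_pos hm.2 hm.1
    generalize N / m = u at hu
    have hΛ := ArithmeticFunction.vonMangoldt_nonneg (n := m)
    have hf : (1 : ℝ) + ((u / 2 : ℕ) : ℝ) + ((u / 3 : ℕ) : ℝ) + ((u / 5 : ℕ) : ℝ) ≤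
        ((u / 1 : ℕ) : ℝ) + ((u / 30 : ℕ) : ℝ) + if 6 ≤ u then 1 else 0 := by
      split_ifs with h6
      · have : 1 + u / 2 + u / 3 + u / 5 ≤ u / 1 + u / 30 + 1 := by omega
        exact_mod_cast this
      · have : 1 + u / 2 + u / 3 + u / 5 ≤ u / 1 + u / 30 + 0 := by omega
        exact_mod_cast this
    nlinarith [mul_le_mul_of_nonneg_left hf hΛ]
  have b : ∀ k : ℕ, 0 < k → k ≤ N → |Real.log (N / k).factorial - ((N : ℝ) / k *
      (Real.log N - Real.log k) - (N : ℝ) / k)| ≤ (Real.log N - Real.log k) / 2 + 1 := by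
    intro k hk hkN
    have := abs_log_factorial_div_sub_le hk hkN rfl
    rwa [Real.log_div (by positivity) (by positivity)] at this
  have b1 := (abs_le.mp (b 1 (by norm_num) (by omega))).2
  have b2 := (abs_le.mp (b 2 (by norm_num) (by omega))).1
  have b3 := (abs_le.mp (b 3 (by norm_num) (by omega))).1
  have b5 := (abs_le.mp (b 5 (by norm_num) (by omega))).1
  have b30 := (abs_le.mp (b 30 (by norm_num) (by omega))).2
  have hlog30 : Real.log 30 = Real.log 2 + Real.log 3 + Real.log 5 := by
    rw [← Real.log_mul (by norm_num) (by norm_num), ← Real.log_mul (by norm_num) (by norm_num)]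
    norm_num
  push_cast at b1 b2 b3 b5 b30
  rw [Real.log_one] at b1
  rw [hlog30] at b30
  have l2 := Real.log_two_lt_d9
  have l2' := Real.log_two_gt_d9
  have l3 := log_three_le
  have l5 := log_five_le
  have l3' : Real.log 2 ≤ Real.log 3 := Real.log_le_log (by norm_num) (by norm_num)
  have l5' : 2 * Real.log 2 ≤ Real.log 5 := by
    rw [← Real.log_rpow (by norm_num)]
    exact Real.log_le_log (by norm_num) (by norm_num)
  have hlogN : Real.log N ≤ 11 * Real.log 2 + (N / 2048 - 1) := by
    have h := Real.log_le_sub_one_of_pos (x := (N : ℝ) / 2 ^ 11) (by positivity)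
    rw [Real.log_div (by positivity) (by positivity), Real.log_pow] at h
    push_cast at h
    norm_num at h
    linarith
  -- the coefficient of `N` in the main term
  have hA : 14 / 30 * Real.log 2 + 3 / 10 * Real.log 3 + 1 / 6 * Real.log 5 ≤ 0.9234 := by
    linarith
  have hA' := mul_le_mul_of_nonneg_left hA (show (0 : ℝ) ≤ N by positivity)
  nlinarith

/-! ### A certificate in the manner of Chebyshev -/

/-- Pairs `(C, k)`: the positive coefficients `C` of `⌊u / k⌋`, in units of `10⁻⁵`. -/
def certPos : List (ℕ × ℕ) := [
  (100000, 3), (100000, 7), (100000, 11), (1, 17), (100000, 18), (49736, 19), (4654, 20),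
  (100005, 23), (6, 25), (100000, 27), (7, 29), (6886, 32), (13, 37), (154385, 42), (41031, 43),
  (35673, 44), (23285, 45), (38706, 47), (4284, 51), (11141, 56), (92401, 59), (2938, 60),
  (11553, 62), (147493, 63), (76210, 66), (33, 73), (54396, 76), (49138, 79), (3542, 80),
  (59179, 83), (43379, 95), (38696, 98), (16109, 99), (76165, 100), (3560, 102), (50367, 103),
  (4521, 111), (73502, 112), (91048, 114), (45734, 116), (15986, 117), (9427, 121), (19321, 124),
  (88216, 138), (11537, 139), (5803, 140), (3365, 146), (93080, 147), (44616, 150)]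

/-- Pairs `(C, k)`: the negative coefficients `-C` of `⌊u / k⌋`, in units of `10⁻⁵`. -/
def certNeg : List (ℕ × ℕ) := [
  (1, 1), (100000, 4), (100000, 6), (100001, 9), (1, 13), (100001, 14), (154384, 21),
  (100000, 22), (11538, 31), (95338, 33), (49730, 38), (4654, 40), (99999, 46), (38715, 49),
  (4284, 50), (100000, 54), (11141, 55), (149730, 57), (88217, 69), (4520, 74), (35810, 75),
  (106721, 77), (52683, 81), (11177, 85), (24721, 86), (23285, 90), (88447, 93), (38696, 94),
  (5151, 101), (29532, 107), (29212, 109), (30727, 115), (92408, 118), (133098, 126),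
  (20974, 129), (66276, 133), (23286, 135), (60659, 141), (3365, 144)]

/-- Pairs `(D, K)`: the excess `D`, in units of `10⁻⁵`, allowed from `u = K` on. -/
def certTail : List (ℕ × ℕ) := [
  (34, 37), (33648, 124), (27025, 128), (90303, 204), (23166, 568), (46142, 1260), (4574, 1984),
  (6342, 2788), (51763, 3496), (73382, 7728), (1832103, 10000)]

/-- `∑ C ⌊u / k⌋` over the pairs `(C, k)` of `l`. Recursors and raw literals keep the kernel
evaluation short. -/
def floorSum (l : List (ℕ × ℕ)) (u : ℕ) : ℕ :=
  @List.rec (ℕ × ℕ) (fun _ => ℕ) (nat_lit 0)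
    (fun p _ ih => Nat.add (Nat.mul p.1 (Nat.div u p.2)) ih) l

/-- `∑ D` over the pairs `(D, K)` of `l` with `K ≤ u`. -/
def tailSum (l : List (ℕ × ℕ)) (u : ℕ) : ℕ :=
  @List.rec (ℕ × ℕ) (fun _ => ℕ) (nat_lit 0)
    (fun p _ ih => Nat.add (@Bool.rec (fun _ => ℕ) (nat_lit 0) p.1 (Nat.ble p.2 u)) ih) l

/-- The certified inequality at `u`:
`∑ C ⌊u / k⌋ ≤ ∑_{K ≤ u} D + 10⁵ [u ≡ 3 mod 4]`, negative coefficients moved to the right. -/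
def certAt (u : ℕ) : Bool :=
  Nat.ble (floorSum certPos u) (Nat.add (floorSum certNeg u) (Nat.add (tailSum certTail u)
    (@Bool.rec (fun _ => ℕ) (nat_lit 0) (nat_lit 100000)
      (Nat.beq (Nat.mod u (nat_lit 4)) (nat_lit 3)))))

/-- Conjunction of `f` over the `2 ^ k` numbers from `lo` on, by bisection. -/
def allBlock (f : ℕ → Bool) (k : ℕ) : ℕ → Bool :=
  @Nat.rec (fun _ => ℕ → Bool) f
    (fun k ih lo => @Bool.rec (fun _ => Bool) false (ih (Nat.add lo (Nat.pow (nat_lit 2) k)))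
      (ih lo)) k

lemma allBlock_spec {f : ℕ → Bool} {k : ℕ} : ∀ {lo : ℕ}, allBlock f k lo = true →
    ∀ u, lo ≤ u → u < lo + 2 ^ k → f u = true := by
  induction k with
  | zero => intro lo h u h1 h2; obtain rfl : u = lo := by omega
            exact h
  | succ k ih =>
    intro lo h u h1 h2
    have hrec : allBlock f (k + 1) lo = @Bool.rec (fun _ => Bool) false
      (allBlock f k (lo + 2 ^ k)) (allBlock f k lo) := rfl
    rw [hrec] at h
    cases hb : allBlock f k lo
    · rw [hb] at h; exact absurd h (by simp)
    · rw [hb] at h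
      rcases lt_or_ge u (lo + 2 ^ k) with h3 | h3
      · exact ih hb u h1 h3
      · exact ih h u h3 (by rw [pow_succ] at h2; omega)

lemma certAt_block₁ : allBlock certAt 12 0 = true := by decide +kernel
lemma certAt_block₂ : allBlock certAt 12 4096 = true := by decide +kernel
lemma certAt_block₃ : allBlock certAt 11 8192 = true := by decide +kernel

lemma floorSum_eq (l : List (ℕ × ℕ)) (u : ℕ) :
    floorSum l u = (l.map fun p => p.1 * (u / p.2)).sum := by
  induction l with
  | nil => rfl
  | cons p l ih =>
    rw [List.map_cons, List.sum_cons, ← ih]; rfl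

lemma tailSum_eq (l : List (ℕ × ℕ)) (u : ℕ) :
    tailSum l u = (l.map fun p => if p.2 ≤ u then p.1 else 0).sum := by
  induction l with
  | nil => rfl
  | cons p l ih =>
    rw [List.map_cons, List.sum_cons, ← ih]
    have : tailSum (p :: l) u =
      @Bool.rec (fun _ => ℕ) 0 p.1 (Nat.ble p.2 u) + tailSum l u := rfl
    rw [this]
    congr 1
    cases h : Nat.ble p.2 u
    · rw [if_neg]
      intro h'
      rw [Nat.ble_eq_true_of_le h'] at h
      exact absurd h (by simp)
    · rw [if_pos (Nat.le_of_ble_eq_true h)]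

/-- The least common multiple of the denominators `k` in the certificate. -/
def certQ : ℕ := 1188014184427695852873984077167180552800

/-- `∑ C * f k` over the pairs `(C, k)` of `l`. -/
def wSum (f : ℕ → ℕ) (l : List (ℕ × ℕ)) : ℕ := (l.map fun p => p.1 * f p.2).sum

lemma cert_dvd : ∀ p ∈ certPos ++ certNeg, 0 < p.2 ∧ p.2 ≤ 150 ∧ p.2 ∣ certQ := by decide +kernel

lemma cert_balance : wSum (certQ / ·) certPos = wSum (certQ / ·) certNeg := by decide +kernel

lemma mul_floorSum_le {l : List (ℕ × ℕ)} (hl : ∀ p ∈ l, 0 < p.2 ∧ p.2 ≤ 150 ∧ p.2 ∣ certQ)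
    (u : ℕ) : certQ * floorSum l u ≤ u * wSum (certQ / ·) l ∧
      u * wSum (certQ / ·) l ≤ certQ * (floorSum l u + (l.map Prod.fst).sum) := by
  rw [floorSum_eq]
  unfold wSum
  induction l with
  | nil => simp
  | cons p l ih =>
    have ⟨i1, i2⟩ := ih fun q hq => hl q (List.mem_cons_of_mem _ hq)
    obtain ⟨hk, -, s, hs⟩ := hl p List.mem_cons_self
    simp only [List.map_cons, List.sum_cons]
    have hQ : certQ / p.2 = s := by rw [hs, Nat.mul_div_cancel_left _ hk]
    rw [hQ]
    have h1 : certQ * (p.1 * (u / p.2)) ≤ u * (p.1 * s) := by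
      calc certQ * (p.1 * (u / p.2)) = (p.2 * (u / p.2)) * (p.1 * s) := by rw [hs]; ring
        _ ≤ _ := Nat.mul_le_mul_right _ (Nat.mul_div_le u p.2)
    have h2 : u * (p.1 * s) ≤ certQ * (p.1 * (u / p.2) + p.1) := by
      calc u * (p.1 * s) ≤ (p.2 * (u / p.2 + 1)) * (p.1 * s) :=
            Nat.mul_le_mul_right _ (Nat.lt_mul_div_succ u hk).le
        _ = _ := by rw [hs]; ring
    constructor
    · rw [mul_add, mul_add]; exact Nat.add_le_add h1 i1
    · calc _ = u * (p.1 * s) + u * (l.map fun p => p.1 * (certQ / p.2)).sum := by rw [mul_add]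
        _ ≤ _ := Nat.add_le_add h2 i2
        _ = _ := by ring

/-- The combination of floors lies below the indicator of `u ≡ 3 mod 4` plus the tail: checked
directly for small `u`, and for large `u` because the combination is bounded. -/
lemma cert_le (u : ℕ) : floorSum certPos u ≤ floorSum certNeg u + (tailSum certTail u +
    if u % 4 = 3 then 100000 else 0) := by
  rcases lt_or_ge u 10240 with hu | hu
  · have h : certAt u = true := by
      rcases lt_or_ge u 4096 with h1 | h1
      · exact allBlock_spec certAt_block₁ u (by omega) (by norm_num; omega)
      rcases lt_or_ge u 8192 with h2 | h2
      · exact allBlock_spec certAt_block₂ u (by omega) (by norm_num; omega)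
      · exact allBlock_spec certAt_block₃ u (by omega) (by norm_num; omega)
    refine (Nat.le_of_ble_eq_true h).trans ?_
    refine Nat.add_le_add_left (Nat.add_le_add_left ?_ _) _
    cases h3 : Nat.beq (Nat.mod u 4) 3
    · exact Nat.zero_le _
    · have : u % 4 = 3 := Nat.eq_of_beq_eq_true h3
      rw [if_pos this]
  · have h1 := (mul_floorSum_le (fun p hp => cert_dvd p (List.mem_append_left _ hp)) u).1
    have h2 := (mul_floorSum_le (l := certNeg)
      (fun p hp => cert_dvd p (List.mem_append_right _ hp)) u).2
    rw [cert_balance] at h1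
    have h3 := le_of_mul_le_mul_left (h1.trans h2) (by decide : 0 < certQ)
    refine h3.trans (Nat.add_le_add_left ?_ _)
    have h4 : tailSum certTail u = (certTail.map Prod.fst).sum := by
      rw [tailSum_eq]
      congr 1
      refine List.map_congr_left fun p hp => ?_
      have : ∀ p ∈ certTail, p.2 ≤ 10000 := by decide
      rw [if_pos ((this p hp).trans (by omega))]
    have h5 : (certNeg.map Prod.fst).sum ≤ (certTail.map Prod.fst).sum := by decide
    omega

lemma sum_log_factorial (l : List (ℕ × ℕ)) (N : ℕ) :
    (l.map fun p => (p.1 : ℝ) * Real.log (N / p.2).factorial).sum =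
      ∑ m ∈ Ioc 0 N, ArithmeticFunction.vonMangoldt m * (floorSum l (N / m) : ℝ) := by
  simp only [floorSum_eq]
  induction l with
  | nil => simp
  | cons p l ih =>
    rw [List.map_cons, List.sum_cons, ih, log_factorial_eq_sum, mul_sum, ← sum_add_distrib]
    refine sum_congr rfl fun m _ => ?_
    rw [List.map_cons, List.sum_cons]
    push_cast
    ring

lemma sum_psi {l : List (ℕ × ℕ)} (hl : ∀ p ∈ l, 0 < p.2) (N : ℕ) :
    (l.map fun p => (p.1 : ℝ) * Chebyshev.psi ((N / p.2 : ℕ) : ℝ)).sum =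
      ∑ m ∈ Ioc 0 N, ArithmeticFunction.vonMangoldt m * (tailSum l (N / m) : ℝ) := by
  simp only [tailSum_eq]
  induction l with
  | nil => simp
  | cons p l ih =>
    rw [List.map_cons, List.sum_cons, ih fun q hq => hl q (List.mem_cons_of_mem _ hq),
      ← sum_vonMangoldt_ite N (hl p List.mem_cons_self), mul_sum, ← sum_add_distrib]
    refine sum_congr rfl fun m _ => ?_
    rw [List.map_cons, List.sum_cons]
    push_cast
    split_ifs <;> ring

lemma sum_vonMangoldt_even_le {N : ℕ} (hN : N ≠ 0) :
    ∑ m ∈ (Ioc 0 N).filter Even, ArithmeticFunction.vonMangoldt m ≤ Real.log N := by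
  have h1 : ∑ m ∈ (Ioc 0 N).filter Even, ArithmeticFunction.vonMangoldt m ≤
      ∑ m ∈ (Ioc 0 (Nat.log 2 N)).image (2 ^ ·), ArithmeticFunction.vonMangoldt m := by
    rw [← sum_filter_ne_zero]
    refine sum_le_sum_of_subset_of_nonneg ?_ fun _ _ _ => ArithmeticFunction.vonMangoldt_nonneg
    intro m hm
    simp only [mem_filter, mem_Ioc] at hm
    obtain ⟨⟨⟨h0, hmN⟩, he⟩, hΛ⟩ := hm
    rw [ArithmeticFunction.vonMangoldt_ne_zero_iff] at hΛ
    obtain ⟨p, j, hp, hj, rfl⟩ := (isPrimePow_nat_iff _).mp hΛ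
    have h2 : 2 ∣ p := Nat.prime_two.dvd_of_dvd_pow he.two_dvd
    obtain rfl : 2 = p := (Nat.prime_dvd_prime_iff_eq Nat.prime_two hp).mp h2
    rw [mem_image]
    refine ⟨j, ?_, rfl⟩
    rw [mem_Ioc]
    exact ⟨hj, Nat.le_log_of_pow_le (by norm_num) hmN⟩
  refine h1.trans ?_
  rw [sum_image fun a _ b _ h => Nat.pow_right_injective le_rfl h]
  have h2 : ∀ j ∈ Ioc 0 (Nat.log 2 N), ArithmeticFunction.vonMangoldt (2 ^ j) = Real.log 2 := by
    intro j hj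
    rw [mem_Ioc] at hj
    rw [ArithmeticFunction.vonMangoldt_apply_pow (by omega),
      ArithmeticFunction.vonMangoldt_apply_prime Nat.prime_two]
    norm_num
  rw [sum_congr rfl h2, sum_const, Nat.card_Ioc, nsmul_eq_mul, Nat.sub_zero, ← Real.log_pow]
  refine Real.log_le_log (by positivity) ?_
  exact_mod_cast Nat.pow_log_le_self 2 hN

/-- Up to the powers of two, `log (padeG n)` collects `Λ m` over the `m ≤ 4n` with
`⌊4n / m⌋ ≡ 3 mod 4`. -/
lemma sum_vonMangoldt_mod_le {n : ℕ} (hn : n ≠ 0) :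
    ∑ m ∈ Ioc 0 (4 * n), ArithmeticFunction.vonMangoldt m *
      ((if (4 * n / m) % 4 = 3 then 1 else 0 : ℕ) : ℝ) ≤
      Real.log (padeG n) + Real.log ((4 * n : ℕ) : ℝ) := by
  refine le_trans ?_ (add_le_add_right (sum_vonMangoldt_even_le (N := 4 * n) (by omega)) _)
  have hG : Real.log (padeG n) = ∑ m ∈ (Ioc 0 (4 * n)).filter
      (fun m => Odd m ∧ IsPrimePow m ∧ 3 * m ≤ 4 * (n % m) + 1),
      ArithmeticFunction.vonMangoldt m := by
    unfold padeG
    rw [Nat.cast_prod, Real.log_prod]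
    · refine sum_congr ?_ fun m hm => ?_
      · ext m
        simp only [mem_filter, mem_Icc, mem_Ioc]
        constructor <;> rintro ⟨⟨h1, h2⟩, h3⟩ <;> exact ⟨⟨by omega, h2⟩, h3⟩
      · rw [ArithmeticFunction.vonMangoldt_apply, if_pos]
        simp only [mem_filter] at hm
        exact hm.2.2.1
    · intro m _
      exact_mod_cast (Nat.minFac_pos m).ne'
  rw [hG, sum_filter, sum_filter, ← sum_add_distrib]
  refine sum_le_sum fun m hm => ?_
  rw [mem_Ioc] at hm
  have hΛ := ArithmeticFunction.vonMangoldt_nonneg (n := m)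
  by_cases hpp : IsPrimePow m
  swap
  · have : ArithmeticFunction.vonMangoldt m = 0 := by
      rw [ArithmeticFunction.vonMangoldt_apply, if_neg hpp]
    simp [this]
  by_cases hq : (4 * n / m) % 4 = 3
  swap
  · rw [if_neg hq]
    have : ∀ (P Q : Prop) [Decidable P] [Decidable Q],
      (0 : ℝ) ≤ (if P then ArithmeticFunction.vonMangoldt m else 0) +
        if Q then ArithmeticFunction.vonMangoldt m else 0 := by
      intro P Q _ _; split_ifs <;> linarith
    simpa using this _ _
  rw [if_pos hq]
  rcases Nat.even_or_odd m with he | ho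
  · rw [if_pos he, if_neg (fun h => (Nat.not_odd_iff_even.mpr he) h.1)]
    simp
  · rw [if_pos, if_neg (Nat.not_even_iff_odd.mpr ho)]
    · simp
    refine ⟨ho, hpp, ?_⟩
    -- `4n = m(4s + 3) + r` forces `4(n mod m) = 3m + r`
    have h1 := Nat.div_add_mod (4 * n) m
    have h2 := Nat.mod_lt (4 * n) hm.1
    obtain ⟨s, hs⟩ : ∃ s, 4 * n / m = 4 * s + 3 := ⟨4 * n / m / 4, by omega⟩
    rw [hs] at h1
    generalize 4 * n % m = r at h1 h2
    have h3 : m * (4 * s + 3) = 4 * (m * s) + 3 * m := by ring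
    have h4 : n % m = n - m * s := by
      have hle : m * s ≤ n := by omega
      obtain ⟨j, rfl⟩ := Nat.exists_eq_add_of_le hle
      rw [Nat.mul_add_mod, Nat.mod_eq_of_lt (by omega)]
      omega
    omega

/-- The certificate `cert_le` at `u = ⌊4n / m⌋`, weighted by `Λ m` and summed over `m`: a lower bound
for `log (padeG n)` by a combination of logarithms of factorials. -/
lemma cert_log_factorial {n : ℕ} (hn : n ≠ 0) :
    (certPos.map fun p => (p.1 : ℝ) * Real.log (4 * n / p.2).factorial).sum ≤
      (certNeg.map fun p => (p.1 : ℝ) * Real.log (4 * n / p.2).factorial).sum +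
      (certTail.map fun p => (p.1 : ℝ) * Chebyshev.psi ((4 * n / p.2 : ℕ) : ℝ)).sum +
      100000 * (Real.log (padeG n) + Real.log ((4 * n : ℕ) : ℝ)) := by
  have h := mul_le_mul_of_nonneg_left (sum_vonMangoldt_mod_le hn) (by norm_num : (0 : ℝ) ≤ 100000)
  refine le_trans ?_ (add_le_add_right h _)
  rw [sum_log_factorial, sum_log_factorial, sum_psi (by decide), mul_sum, ← sum_add_distrib,
    ← sum_add_distrib]
  refine sum_le_sum fun m _ => ?_
  have h1 : (floorSum certPos (4 * n / m) : ℝ) ≤ floorSum certNeg (4 * n / m) +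
      (tailSum certTail (4 * n / m) +
        100000 * ((if (4 * n / m) % 4 = 3 then 1 else 0 : ℕ) : ℝ)) := by
    have := cert_le (4 * n / m)
    have h2 : (if (4 * n / m) % 4 = 3 then 100000 else 0) =
      100000 * (if (4 * n / m) % 4 = 3 then 1 else 0) := by split_ifs <;> rfl
    rw [h2] at this
    exact_mod_cast this
  have := mul_le_mul_of_nonneg_left h1 (ArithmeticFunction.vonMangoldt_nonneg (n := m))
  linarith

/-! ### Evaluation of the certificate -/

/-- `∑ C * f k` over the pairs `(C, k)` of `l`, with real weights. -/
noncomputable def realSum (f : ℕ → ℝ) (l : List (ℕ × ℕ)) : ℝ :=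
  (l.map fun p => (p.1 : ℝ) * f p.2).sum

lemma realSum_cons (f : ℕ → ℝ) (p : ℕ × ℕ) (l : List (ℕ × ℕ)) :
    realSum f (p :: l) = p.1 * f p.2 + realSum f l := by
  simp [realSum]

lemma realSum_le {f g : ℕ → ℝ} {l : List (ℕ × ℕ)} (h : ∀ p ∈ l, f p.2 ≤ g p.2) :
    realSum f l ≤ realSum g l := by
  refine List.sum_le_sum fun p hp => ?_
  exact mul_le_mul_of_nonneg_left (h p hp) (Nat.cast_nonneg _)

lemma realSum_natCast (f : ℕ → ℕ) (l : List (ℕ × ℕ)) :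
    realSum (fun k => (f k : ℝ)) l = wSum f l := by
  induction l with
  | nil => simp [realSum, wSum]
  | cons p l ih => rw [realSum_cons, ih]; simp [wSum]

lemma realSum_mul_left (a : ℝ) (f : ℕ → ℝ) (l : List (ℕ × ℕ)) :
    realSum (fun k => a * f k) l = a * realSum f l := by
  induction l with
  | nil => simp [realSum]
  | cons p l ih => rw [realSum_cons, realSum_cons, ih]; ring

/-- Stirling's formula summed over a weighted list. -/
lemma abs_sum_log_factorial_le {l : List (ℕ × ℕ)}
    (hl : ∀ p ∈ l, 0 < p.2 ∧ p.2 ≤ 150 ∧ p.2 ∣ certQ) {N : ℕ} (hN : 150 ≤ N) :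
    |(l.map fun p => (p.1 : ℝ) * Real.log (N / p.2).factorial).sum -
      (realSum (fun k => (k : ℝ)⁻¹) l * (N * (Real.log N - 1)) -
        N * realSum (fun k => (k : ℝ)⁻¹ * Real.log k) l)| ≤
      (realSum (fun _ => 1) l * Real.log N - realSum (fun k => Real.log k) l) / 2 +
        realSum (fun _ => 1) l := by
  induction l with
  | nil => simp [realSum]
  | cons p l ih =>
    have ih' := ih fun q hq => hl q (List.mem_cons_of_mem _ hq)
    obtain ⟨hk, hk2, -⟩ := hl p List.mem_cons_self
    have h := abs_log_factorial_div_sub_le hk (hk2.trans hN) rfl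
    have hN0 : (N : ℝ) ≠ 0 := by have : N ≠ 0 := by omega
                                 exact_mod_cast this
    have hk0 : (p.2 : ℝ) ≠ 0 := by exact_mod_cast hk.ne'
    rw [Real.log_div hN0 hk0] at h
    simp only [List.map_cons, List.sum_cons, realSum_cons]
    have hC : (0 : ℝ) ≤ p.1 := Nat.cast_nonneg _
    rw [abs_le] at h ih' ⊢
    have h1 := mul_le_mul_of_nonneg_left h.1 hC
    have h2 := mul_le_mul_of_nonneg_left h.2 hC
    rw [div_eq_mul_inv (N : ℝ)] at h1 h2
    constructor <;> linarith

/-- Binary search for `⌊log₂ X⌋` in `[a, a + 2 ^ j)`. -/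
def logBisect (X : ℕ) : ℕ → ℕ → ℕ
  | 0, a => a
  | j + 1, a => bif Nat.ble (Nat.pow 2 (a + 2 ^ j)) X then logBisect X j (a + 2 ^ j)
      else logBisect X j a

lemma logBisect_spec {X : ℕ} (j : ℕ) : ∀ {a : ℕ}, 2 ^ a ≤ X → X < 2 ^ (a + 2 ^ j) →
    2 ^ logBisect X j a ≤ X ∧ X < 2 ^ (logBisect X j a + 1) := by
  induction j with
  | zero => intro a h1 h2; exact ⟨h1, h2⟩
  | succ j ih =>
    intro a h1 h2
    rw [logBisect]
    cases h : Nat.ble (Nat.pow 2 (a + 2 ^ j)) X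
    · refine ih h1 ?_
      by_contra h3
      exact absurd ((Nat.ble_eq_true_of_le (not_lt.mp h3)).symm.trans h) (by simp)
    · refine ih (Nat.le_of_ble_eq_true h) ?_
      rwa [add_assoc, ← two_mul, ← pow_succ']

/-- `⌊2 ^ s * log₂ k⌋`, for `k < 256`. -/
def logApprox (s k : ℕ) : ℕ := logBisect (Nat.pow k (2 ^ s)) (s + 3) 0

lemma logApprox_bounds {s k : ℕ} (hk : 0 < k) (hk2 : k ≤ 150) :
    Real.log 2 / 2 ^ s * logApprox s k ≤ Real.log k ∧
      Real.log k ≤ Real.log 2 / 2 ^ s * (logApprox s k + 1 : ℕ) := by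
  have hk' : (0 : ℝ) < k := by exact_mod_cast hk
  obtain ⟨h1, h2⟩ : 2 ^ logApprox s k ≤ k ^ 2 ^ s ∧ k ^ 2 ^ s < 2 ^ (logApprox s k + 1) := by
    refine logBisect_spec (s + 3) ?_ ?_
    · exact Nat.one_le_pow _ _ hk
    · calc k ^ 2 ^ s < (2 ^ 8) ^ 2 ^ s :=
            Nat.pow_lt_pow_left (by omega) (by positivity)
        _ = 2 ^ (0 + 2 ^ (s + 3)) := by rw [← pow_mul]; congr 1; rw [pow_add]; omega
  have h1' : (2 : ℝ) ^ logApprox s k ≤ (k : ℝ) ^ 2 ^ s := by exact_mod_cast h1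
  have h2' : (k : ℝ) ^ 2 ^ s ≤ (2 : ℝ) ^ (logApprox s k + 1) := by exact_mod_cast h2.le
  have e1 := Real.log_le_log (by positivity) h1'
  have e2 := Real.log_le_log (by positivity) h2'
  rw [Real.log_pow, Real.log_pow] at e1 e2
  rw [div_mul_eq_mul_div, div_mul_eq_mul_div, div_le_iff₀ (by positivity),
    le_div_iff₀ (by positivity)]
  push_cast at e1 e2 ⊢
  constructor <;> linarith

/-- The numerical content of the certificate, in integers: the main term
`∑ C (log k) / k`, the total of the `log k`, and the total weight. -/
lemma cert_numerics :
    273188150 * certQ + wSum (fun k => certQ / k * (logApprox 14 k + 1)) certPos ≤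
        wSum (fun k => certQ / k * logApprox 14 k) certNeg ∧
      393500000000 ≤ wSum (logApprox 14) certPos + wSum (logApprox 14) certNeg ∧
      wSum (fun _ => 1) certPos + wSum (fun _ => 1) certNeg = 4389610 := by
  decide +kernel

lemma certQ_div {k : ℕ} (hk : 0 < k) (hd : k ∣ certQ) :
    ((certQ / k : ℕ) : ℝ) = certQ * (k : ℝ)⁻¹ := by
  rw [Nat.cast_div hd (by exact_mod_cast hk.ne'), div_eq_mul_inv]

/-- The coefficients satisfy `∑ C / k = 0`, so the terms of order `N log N` cancel. -/
lemma realSum_inv_balance :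
    realSum (fun k => (k : ℝ)⁻¹) certPos = realSum (fun k => (k : ℝ)⁻¹) certNeg := by
  have h : ∀ l : List (ℕ × ℕ), (∀ p ∈ l, 0 < p.2 ∧ p.2 ≤ 150 ∧ p.2 ∣ certQ) →
      certQ * realSum (fun k => (k : ℝ)⁻¹) l = wSum (certQ / ·) l := by
    intro l hl
    rw [← realSum_mul_left, ← realSum_natCast]
    apply le_antisymm <;> refine realSum_le fun p hp => ?_
    · exact (certQ_div (hl p hp).1 (hl p hp).2.2).ge
    · exact (certQ_div (hl p hp).1 (hl p hp).2.2).le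
  have hQ : (certQ : ℝ) ≠ 0 := by norm_num [certQ]
  apply mul_left_cancel₀ hQ
  rw [h _ fun p hp => cert_dvd p (List.mem_append_left _ hp),
    h _ fun p hp => cert_dvd p (List.mem_append_right _ hp), cert_balance]

/-- Upper and lower bounds for `∑ c (log k) / k` from approximations `f` of the logarithms to base
`2 ^ (1 / 2 ^ 14)`, scaled by the common denominator `Q`. -/
lemma realSum_log_bounds {Q : ℕ} {f : ℕ → ℕ} {l : List (ℕ × ℕ)}
    (hl : ∀ p ∈ l, ((Q / p.2 : ℕ) : ℝ) = Q * (p.2 : ℝ)⁻¹ ∧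
      Real.log 2 / 2 ^ 14 * f p.2 ≤ Real.log p.2 ∧
      Real.log p.2 ≤ Real.log 2 / 2 ^ 14 * (f p.2 + 1 : ℕ)) :
    Real.log 2 / 2 ^ 14 * wSum (fun k => Q / k * f k) l ≤
        Q * realSum (fun k => (k : ℝ)⁻¹ * Real.log k) l ∧
      Q * realSum (fun k => (k : ℝ)⁻¹ * Real.log k) l ≤
        Real.log 2 / 2 ^ 14 * wSum (fun k => Q / k * (f k + 1)) l := by
  rw [← realSum_mul_left, ← realSum_natCast, ← realSum_mul_left, ← realSum_natCast,
    ← realSum_mul_left]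
  constructor
  · refine realSum_le fun p hp => ?_
    obtain ⟨h1, h2, -⟩ := hl p hp
    rw [Nat.cast_mul, h1]
    calc Real.log 2 / 2 ^ 14 * (Q * (p.2 : ℝ)⁻¹ * f p.2)
        = Q * (p.2 : ℝ)⁻¹ * (Real.log 2 / 2 ^ 14 * f p.2) := by ring
      _ ≤ Q * (p.2 : ℝ)⁻¹ * Real.log p.2 := by gcongr
      _ = _ := by ring
  · refine realSum_le fun p hp => ?_
    obtain ⟨h1, -, h2⟩ := hl p hp
    rw [Nat.cast_mul, h1]
    calc (Q : ℝ) * ((p.2 : ℝ)⁻¹ * Real.log p.2) = Q * (p.2 : ℝ)⁻¹ * Real.log p.2 := by ring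
      _ ≤ Q * (p.2 : ℝ)⁻¹ * (Real.log 2 / 2 ^ 14 * (f p.2 + 1 : ℕ)) := by gcongr
      _ = _ := by ring

lemma cert_main_term :
    11557.59 + realSum (fun k => (k : ℝ)⁻¹ * Real.log k) certPos ≤
      realSum (fun k => (k : ℝ)⁻¹ * Real.log k) certNeg := by
  obtain ⟨hnum, -, -⟩ := cert_numerics
  have hQ : (0 : ℝ) < certQ := by norm_num [certQ]
  have hlog := Real.log_two_gt_d9
  have hl : ∀ p ∈ certPos ++ certNeg, ((certQ / p.2 : ℕ) : ℝ) = certQ * (p.2 : ℝ)⁻¹ ∧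
      Real.log 2 / 2 ^ 14 * logApprox 14 p.2 ≤ Real.log p.2 ∧
      Real.log p.2 ≤ Real.log 2 / 2 ^ 14 * (logApprox 14 p.2 + 1 : ℕ) := by
    intro p hp
    obtain ⟨h1, h2, h3⟩ := cert_dvd p hp
    exact ⟨certQ_div h1 h3, logApprox_bounds h1 h2⟩
  -- only these bounds matter from here on; the actual values must not be unfolded
  generalize logApprox 14 = f at hnum hl
  generalize certQ = Q at hnum hl hQ
  generalize certPos = l₁ at hnum hl ⊢
  generalize certNeg = l₂ at hnum hl ⊢
  have hP := (realSum_log_bounds fun p hp => hl p (List.mem_append_left _ hp)).2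
  have hN := (realSum_log_bounds fun p hp => hl p (List.mem_append_right _ hp)).1
  have hnum' : (273188150 : ℝ) * Q + wSum (fun k => Q / k * (f k + 1)) l₁ ≤
        wSum (fun k => Q / k * f k) l₂ := by exact_mod_cast hnum
  have hnum2 := mul_le_mul_of_nonneg_left hnum' (show 0 ≤ Real.log 2 / 2 ^ 14 by positivity)
  have h5 : 11557.59 * (Q : ℝ) ≤ Real.log 2 / 2 ^ 14 * (273188150 * Q) := by
    calc 11557.59 * (Q : ℝ) ≤ (0.6931471803 / 2 ^ 14 * 273188150) * Q := by
          gcongr; norm_num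
      _ ≤ (Real.log 2 / 2 ^ 14 * 273188150) * Q := by gcongr
      _ = _ := by ring
  refine le_of_mul_le_mul_left ?_ hQ
  linarith

lemma cert_log_sum : 16647000 ≤
    realSum (fun k => Real.log k) certPos + realSum (fun k => Real.log k) certNeg := by
  have hl : ∀ l : List (ℕ × ℕ), (∀ p ∈ l, 0 < p.2 ∧ p.2 ≤ 150 ∧ p.2 ∣ certQ) →
      Real.log 2 / 2 ^ 14 * wSum (logApprox 14) l ≤ realSum (fun k => Real.log k) l := by
    intro l hl
    rw [← realSum_natCast, ← realSum_mul_left]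
    exact realSum_le fun p hp => (logApprox_bounds (hl p hp).1 (hl p hp).2.1).1
  have h1 := hl certPos fun p hp => cert_dvd p (List.mem_append_left _ hp)
  have h2 := hl certNeg fun p hp => cert_dvd p (List.mem_append_right _ hp)
  have h3 : (393500000000 : ℝ) ≤ wSum (logApprox 14) certPos + wSum (logApprox 14) certNeg := by
    exact_mod_cast cert_numerics.2.1
  have h4 := mul_le_mul_of_nonneg_left h3 (show 0 ≤ Real.log 2 / 2 ^ 14 by positivity)
  linarith [Real.log_two_gt_d9]

lemma cert_weight : realSum (fun _ => 1) certPos + realSum (fun _ => 1) certNeg = 4389610 := by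
  have h := realSum_natCast (fun _ => 1)
  simp only [Nat.cast_one] at h
  rw [h, h]
  exact_mod_cast cert_numerics.2.2

lemma cert_tail_le (N : ℕ) :
    (certTail.map fun p => (p.1 : ℝ) * Chebyshev.psi ((N / p.2 : ℕ) : ℝ)).sum ≤
      1.12 * 1215.6 * N := by
  have h1 : (certTail.map fun p => (p.1 : ℝ) * Chebyshev.psi ((N / p.2 : ℕ) : ℝ)).sum ≤
      realSum (fun K => 1.12 * N * (K : ℝ)⁻¹) certTail := by
    refine List.sum_le_sum fun p _ => ?_
    refine mul_le_mul_of_nonneg_left ((psi_le _).trans ?_) (Nat.cast_nonneg _)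
    beta_reduce
    rw [mul_assoc, ← div_eq_mul_inv]
    gcongr
    exact Nat.cast_div_le
  refine h1.trans ?_
  rw [realSum_mul_left]
  have h2 : realSum (fun K => (K : ℝ)⁻¹) certTail ≤ 1215.6 := by
    norm_num [realSum, certTail]
  have := mul_le_mul_of_nonneg_left h2 (show (0 : ℝ) ≤ 1.12 * N by positivity)
  linarith

/-- An explicit Chebyshev-type lower bound for `padeG n`: Stirling's formula turns
`cert_log_factorial` into a linear lower bound for `log (padeG n)`. -/
lemma pow_le_padeG {n : ℕ} (hn : 25544 ≤ n) : (1.488 : ℝ) ^ n ≤ padeG n := by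
  have hG : (0 : ℝ) < padeG n := by exact_mod_cast Nat.pos_of_ne_zero (padeG_ne_zero n)
  have hc := cert_log_factorial (n := n) (by omega)
  obtain ⟨N, hN⟩ : ∃ N, N = 4 * n := ⟨_, rfl⟩
  have hNn : (N : ℝ) = 4 * n := by exact_mod_cast hN
  have hn' : (25544 : ℝ) ≤ n := by exact_mod_cast hn
  rw [← hN] at hc
  have hP := (abs_le.mp (abs_sum_log_factorial_le (l := certPos)
    (fun p hp => cert_dvd p (List.mem_append_left _ hp)) (N := N) (by omega))).1
  have hM := (abs_le.mp (abs_sum_log_factorial_le (l := certNeg)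
    (fun p hp => cert_dvd p (List.mem_append_right _ hp)) (N := N) (by omega))).2
  have hT := cert_tail_le N
  rw [realSum_inv_balance] at hP
  have hmain := mul_le_mul_of_nonneg_left cert_main_term (show (0 : ℝ) ≤ N by positivity)
  have hB := cert_log_sum
  have hW := cert_weight
  have l2 := Real.log_two_lt_d9
  -- tangent to `log` at `2 ^ 17`
  have hlogN : Real.log N ≤ 17 * Real.log 2 - 1 + N / 131072 := by
    have h := Real.log_le_sub_one_of_pos (x := (N : ℝ) / 2 ^ 17) (by rw [hNn]; positivity)
    rw [Real.log_div (by rw [hNn]; positivity) (by positivity), Real.log_pow] at h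
    push_cast at h
    norm_num at h
    linarith
  have hlog : Real.log 1.488 ≤ 31 / 54 * Real.log 2 := by
    have h := Real.log_le_log (by norm_num) (show (1.488 : ℝ) ^ 54 ≤ 2 ^ 31 by norm_num)
    rw [Real.log_pow, Real.log_pow] at h
    push_cast at h
    linarith
  have hW' : (realSum (fun _ => 1) certPos + realSum (fun _ => 1) certNeg) * Real.log N =
    4389610 * Real.log N := by rw [hW]
  have key : 100000 * Real.log (padeG n) ≥ N * 11557.59 - 1.12 * 1215.6 * N -
      (4389610 / 2 + 100000) * Real.log N + 16647000 / 2 - 4389610 := by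
    linarith
  have h2 : n * Real.log 1.488 ≤ Real.log (padeG n) := by
    have h3 : n * Real.log 1.488 ≤ n * (31 / 54 * 0.6931471808) := by gcongr; linarith
    linarith
  rw [← Real.log_pow] at h2
  exact (Real.log_le_log_iff (by positivity) hG).mp h2

/-! ### The infinite chain -/

/-- The first step, of order `4`, from the elementary bound `t ^ 3 ≤ 25 Y`. -/
lemma PadeBound.start {t Y R : ℝ} (hP : PadeBound t Y R) (ht : 58 ≤ t) (hR0 : 0 < R)
    (hRt : 420 * R ≤ 421 * t) (hYt : t ^ 3 ≤ 25 * Y) : NodeBound t Y (4, 5, 0, 1) := by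
  have hY : 0 < Y := by have : 0 < t ^ 3 := by positivity
                        linarith
  have hc4 : Nat.centralBinom 4 = 70 := by decide +kernel
  have hc5 : Nat.centralBinom 5 = 252 := by decide +kernel
  have hg : 5 ≤ padeG 4 := by
    have := nodes0_le (4, 5, 0, 1) (by decide +kernel)
    simpa using this
  have hL : cbLo 4 = 630 := by decide +kernel
  have := hP.step ht hY hR0 hRt (e := 1 / 25) (k := 3) (n := 4) (g := 5) (U := 70) (U1 := 252)
    (L := 630) (by norm_num) (by linarith) (by norm_num) (by norm_num) (by norm_num)
    (by exact_mod_cast hg) (by rw [hc4]; norm_num) (by rw [hc5]; norm_num)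
    (by rw [hc4]; norm_num) (by norm_num) (by norm_num)
  unfold NodeBound
  simp only [hL]
  norm_num at this ⊢
  exact this

lemma pow_le_last_node : 1488 ^ 25544 ≤ 648 * 2 ^ 18671 * 1000 ^ 25544 :=
  Nat.le_of_ble_eq_true (by decide +kernel)

/-- The bound at the last node of the finite chain, in the shape used by the induction. -/
lemma last_node_bound {t Y : ℝ} (ht : 0 < t) (h : NodeBound t Y (25544, 648, 18671, 15)) :
    0.9797 * 0.093 ^ 25544 * t ^ (25544 + 1) ≤ Y := by
  have hp := pow_le_last_node
  have hL : cbLo 25544 = 4 ^ 25544 := by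
    unfold cbLo
    rw [if_neg (by norm_num)]
  simp only [NodeBound, hL] at h
  clear hL
  refine le_trans ?_ h
  clear h
  generalize 25544 = n at hp ⊢
  generalize 18671 = a at hp ⊢
  have hp' : (1488 : ℝ) ^ n ≤ 648 * 2 ^ a * 1000 ^ n := by exact_mod_cast hp
  have key : (0.093 : ℝ) ^ n ≤ (4 ^ n : ℕ) * (648 * 2 ^ a : ℕ) / 64 ^ n := by
    rw [le_div_iff₀ (by positivity), ← mul_pow]
    refine le_of_mul_le_mul_right ?_ (show (0 : ℝ) < 1000 ^ n by positivity)
    push_cast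
    calc ((0.093 : ℝ) * 64) ^ n * 1000 ^ n = 4 ^ n * 1488 ^ n := by
          rw [← mul_pow, ← mul_pow]; norm_num
      _ ≤ 4 ^ n * (648 * 2 ^ a * 1000 ^ n) := by gcongr
      _ = _ := by ring
  calc 0.9797 * 0.093 ^ n * t ^ (n + 1)
      ≤ 0.9797 * ((4 ^ n : ℕ) * (648 * 2 ^ a : ℕ) / 64 ^ n) * t ^ (n + 1) := by gcongr
    _ = _ := by ring

/-- The two numerical conditions of the induction step: the growth rates `1.0041` and `1.0018` of
the right-hand sides over the left-hand sides beat the constants and the linear factor. -/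
lemma induction_numerics {N : ℕ} (hN : 25545 ≤ N) :
    1225.5 * 4 ^ N * 421 ^ N ≤
      (1.488 : ℝ) ^ N * (0.9797 / 0.093 * 0.093 ^ N) ^ 3 * 58 ^ (2 * N) * 420 ^ N ∧
    24.6 * 4 ^ N * 4 ^ (N + 1) * (N + 1) * 421 ^ (2 * N + 1) * 58 <
      1.75 * 64 ^ N * ((0.9797 : ℝ) / 0.093 * 0.093 ^ N) ^ 4 * 58 ^ (2 * N) * 420 ^ (2 * N + 1) := by
  have hN' : (25545 : ℝ) ≤ N := by exact_mod_cast hN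
  have hB : ∀ x : ℝ, 0 ≤ x → 1 + N * x ≤ (1 + x) ^ N :=
    fun x hx => one_add_mul_le_pow (by linarith) N
  constructor
  · calc (1225.5 : ℝ) * 4 ^ N * 421 ^ N
        ≤ (0.9797 / 0.093) ^ 3 * (1 + N * 0.004) * (4 * 421) ^ N := by
          rw [mul_assoc, ← mul_pow]
          gcongr
          norm_num
          linarith
      _ ≤ (0.9797 / 0.093) ^ 3 * (1 + 0.004) ^ N * (4 * 421) ^ N := by
          gcongr
          exact hB _ (by norm_num)
      _ = (0.9797 / 0.093) ^ 3 * ((1 + 0.004) * (4 * 421)) ^ N := by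
          rw [mul_pow (1 + 0.004 : ℝ), mul_assoc]
      _ ≤ (0.9797 / 0.093) ^ 3 * (1.488 * 0.093 ^ 3 * 58 ^ 2 * 420) ^ N := by
          gcongr _ * ?_ ^ N
          norm_num
      _ = _ := by simp only [mul_pow, pow_mul]; rw [pow_right_comm 0.093 3 N]; ring
  · have h4 : 0.3 * ((N : ℝ) + 1) ≤ (1 + N * 0.0004) ^ 4 := by
      have h3 : (1000 : ℝ) ≤ (1 + N * 0.0004) ^ 3 := by
        calc (1000 : ℝ) = 10 ^ 3 := by norm_num
          _ ≤ _ := by gcongr; linarith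
      calc 0.3 * ((N : ℝ) + 1) ≤ 1000 * (1 + N * 0.0004) := by linarith
        _ ≤ (1 + N * 0.0004) ^ 3 * (1 + N * 0.0004) := by gcongr
        _ = _ := by ring
    calc (24.6 : ℝ) * 4 ^ N * 4 ^ (N + 1) * (N + 1) * 421 ^ (2 * N + 1) * 58
        = 24.6 * 4 * 421 * 58 * (N + 1) * (16 * 421 ^ 2) ^ N := by
          rw [mul_pow, ← pow_mul, show (16 : ℝ) = 4 * 4 by norm_num, mul_pow]; ring
      _ < 1.75 * (0.9797 / 0.093) ^ 4 * 420 * (0.3 * (N + 1)) * (16 * 421 ^ 2) ^ N := by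
          gcongr ?_ * (16 * 421 ^ 2) ^ N
          norm_num
          linarith
      _ ≤ 1.75 * (0.9797 / 0.093) ^ 4 * 420 * ((1 + 0.0004) ^ N) ^ 4 * (16 * 421 ^ 2) ^ N := by
          gcongr _ * ?_ * _
          refine h4.trans ?_
          gcongr
          exact hB _ (by norm_num)
      _ = 1.75 * (0.9797 / 0.093) ^ 4 * 420 * ((1 + 0.0004) ^ 4 * (16 * 421 ^ 2)) ^ N := by
          rw [pow_right_comm, mul_pow _ (16 * 421 ^ 2) N]; ring
      _ ≤ 1.75 * (0.9797 / 0.093) ^ 4 * 420 * (64 * 0.093 ^ 4 * 58 ^ 2 * 420 ^ 2) ^ N := by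
          gcongr _ * ?_ ^ N
          norm_num
      _ = _ := by
          simp only [mul_pow, pow_mul, pow_succ _ (2 * N)]; rw [pow_right_comm 0.093 4 N]; ring

/-- The bootstrap never stops: `Y` exceeds `0.9797 * 0.093 ^ n * t ^ (n + 1)` for all large `n`, which
is absurd as `0.093 t > 5`. -/
lemma PadeBound.false {t Y R : ℝ} (hP : PadeBound t Y R) (ht : 58 ≤ t) (hR0 : 0 < R)
    (hRt : 420 * R ≤ 421 * t) (hYt : t ^ 3 ≤ 25 * Y) : False := by
  have hY : 0 < Y := by have : 0 < t ^ 3 := by positivity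
                        linarith
  have hlast := NodeBound.chain hP ht hY hR0 hRt (nodes0.tail ++ nodes1 ++ nodes2 ++ nodes3) _
    (hP.start ht hR0 hRt hYt) (by
      intro q hq
      simp only [List.mem_append] at hq
      rcases hq with ((hq | hq) | hq) | hq
      · exact nodes0_le q (List.mem_of_mem_tail hq)
      · exact nodes1_le q hq
      · exact nodes2_le q hq
      · exact nodes3_le q hq) chain_ok
  have hD : (nodes0.tail ++ nodes1 ++ nodes2 ++ nodes3).getLastD (4, 5, 0, 1) =
    (25544, 648, 18671, 15) := by decide +kernel
  rw [hD] at hlast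
  have hall : ∀ n : ℕ, 25544 ≤ n → 0.9797 * 0.093 ^ n * t ^ (n + 1) ≤ Y := by
    intro n hn
    induction n, hn using Nat.le_induction with
    | base => exact last_node_bound (by linarith) hlast
    | succ n hn ih =>
      obtain ⟨s1, s2⟩ := induction_numerics (N := n + 1) (by omega)
      have he : (0.9797 : ℝ) / 0.093 * 0.093 ^ (n + 1) = 0.9797 * 0.093 ^ n := by
        rw [pow_succ]; ring
      rw [he] at s1 s2
      have hU : ((n + 1).centralBinom : ℝ) ≤ 4 ^ (n + 1) := by
        exact_mod_cast centralBinom_le_four_pow (n + 1)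
      have hU1 : ((n + 1 + 1).centralBinom : ℝ) ≤ 4 ^ (n + 1 + 1) := by
        exact_mod_cast centralBinom_le_four_pow (n + 1 + 1)
      have hL : (4 : ℝ) ^ (n + 1) ≤ (2 * (n + 1 : ℕ) + 1) * (n + 1).centralBinom := by
        exact_mod_cast four_pow_le_centralBinom (n + 1)
      have h := hP.step ht hY hR0 hRt (k := n + 1) (n := n + 1) (by positivity) ih
        (by omega) (by omega) (by positivity) (pow_le_padeG (by omega)) hU hU1 hL
        (by rwa [show 3 * (n + 1) - (n + 1) = 2 * (n + 1) by omega])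
        (by
          refine lt_of_mul_lt_mul_right (s2.trans_eq ?_) (show (0 : ℝ) ≤ 58 by norm_num)
          rw [show 4 * (n + 1) - (2 * (n + 1) + 1) = 2 * n + 1 by omega,
            show 2 * (n + 1) = 2 * n + 1 + 1 by ring, pow_succ (58 : ℝ) (2 * n + 1)]
          ring)
      refine le_of_eq_of_le ?_ h
      congr 1
      rw [mul_assoc (0.9797 : ℝ), ← mul_pow, mul_div_assoc, ← div_pow]
      norm_num
  obtain ⟨m, hm⟩ := pow_unbounded_of_one_lt Y (show (1 : ℝ) < 5 by norm_num)
  have h1 := hall (m + 25544) (by omega)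
  generalize hn : m + 25544 = n at h1
  have h2 : (5 : ℝ) ^ m ≤ 5 ^ n := pow_le_pow_right₀ (by norm_num) (by omega)
  have h3 : (5 : ℝ) ^ n ≤ (0.093 * t) ^ n := by
    gcongr
    linarith
  have h4 : (0.093 * t) ^ n ≤ 0.9797 * 0.093 ^ n * t ^ (n + 1) := by
    rw [mul_pow, pow_succ t n]
    have : (0 : ℝ) ≤ 0.093 ^ n * t ^ n := by positivity
    nlinarith
  linarith

/-! ### Conclusion -/

/-- There are no solutions of the relaxed inequality outside the elementary range. -/
lemma no_large_solution (t a b : ℤ) (ht : 58 ≤ t) (ha : 4 ≤ a) (hb : 2 * |b| ≤ a) (hb0 : b ≠ 0)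
    (hF : |a ^ 4 - t * a ^ 3 * b - 6 * a ^ 2 * b ^ 2 + t * a * b ^ 3 + b ^ 4| ≤ 24 * t + 28) :
    False := by
  obtain ⟨h1, h2, h3⟩ := elem_reduction t a b ht ha hb hb0 hF
  have ht' : (58 : ℝ) ≤ t := by exact_mod_cast ht
  have ha' : (4 : ℝ) ≤ a := by exact_mod_cast ha
  have h3' : (t : ℝ) ^ 3 < 25 * a := by exact_mod_cast h3
  have hY2 : Real.sqrt ((a : ℝ) ^ 2 + (b : ℝ) ^ 2) ^ 2 = (a : ℝ) ^ 2 + (b : ℝ) ^ 2 :=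
    Real.sq_sqrt (by positivity)
  have hR2 : Real.sqrt ((t : ℝ) ^ 2 + 16) ^ 2 = (t : ℝ) ^ 2 + 16 := Real.sq_sqrt (by positivity)
  have hYa : (a : ℝ) ≤ Real.sqrt ((a : ℝ) ^ 2 + (b : ℝ) ^ 2) :=
    Real.le_sqrt_of_sq_le (by nlinarith [sq_nonneg (b : ℝ)])
  have hR0 : 0 < Real.sqrt ((t : ℝ) ^ 2 + 16) := Real.sqrt_pos.mpr (by positivity)
  have hP : PadeBound t (Real.sqrt ((a : ℝ) ^ 2 + (b : ℝ) ^ 2)) (Real.sqrt ((t : ℝ) ^ 2 + 16)) :=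
    fun n hn => pade_ineq t a b ht h1 h2 hF _ _ (by linarith) hY2 hR0 hR2 n hn
  refine hP.false ht' hR0 ?_ (by linarith)
  have : Real.sqrt ((t : ℝ) ^ 2 + 16) ≤ 421 / 420 * t :=
    (Real.sqrt_le_left (by positivity)).mpr (by nlinarith)
  linarith

/-- For `t ≥ 58`, every primitive solution of `|F_t^{(4)}(x,y)| ≤ 6t+7` with `y > 0`,
`-y ≤ x ≤ y` is one of `(0,1), (1,1), (-1,1), (1,2), (-1,2)`; moreover the solution set
is stable under the orbit map `(x,y) ↦ (y,-x), (-x,-y), (-y,x)`. -/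
theorem simplest_quartic_thue_inequality_primitive (t : ℤ) (ht : 58 ≤ t) :
    (∀ x y : ℤ, |F4 t x y| ≤ 6 * t + 7 → Int.gcd x y = 1 → 0 < y → -y ≤ x → x ≤ y →
      ((x, y) = (0, 1) ∨ (x, y) = (1, 1) ∨ (x, y) = (-1, 1) ∨
        (x, y) = (1, 2) ∨ (x, y) = (-1, 2))) ∧
    (∀ x y : ℤ, |F4 t x y| ≤ 6 * t + 7 →
      (|F4 t y (-x)| ≤ 6 * t + 7 ∧ |F4 t (-x) (-y)| ≤ 6 * t + 7 ∧
        |F4 t (-y) x| ≤ 6 * t + 7)) := by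
  refine ⟨fun x y hF hg hy hx1 hx2 => ?_, fun x y hF => ?_⟩
  · simp only [F4, Int.cast_id] at hF
    simp only [Prod.mk.injEq]
    by_cases hx : 2 * |x| ≤ y
    · rcases eq_or_ne x 0 with rfl | hx0
      · rw [Int.gcd_zero_left] at hg
        omega
      rcases lt_or_ge y 4 with h | h
      · rw [abs_le] at hF
        have hb : |x| ≤ 1 := by omega
        rw [abs_le] at hb
        have h2 : 2 ≤ y := by have := abs_pos.mpr hx0; omega
        obtain rfl | rfl : x = 1 ∨ x = -1 := by omega
        · interval_cases y
          · simp
          · norm_num at hF; omega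
        · interval_cases y
          · simp
          · norm_num at hF; omega
      · refine (no_large_solution t y (-x) ht h (by rwa [abs_neg]) (by omega) ?_).elim
        calc _ = |x ^ 4 - t * x ^ 3 * y - 6 * x ^ 2 * y ^ 2 + t * x * y ^ 3 + y ^ 4| := by
              congr 1; ring
          _ ≤ _ := by linarith
    · -- `F (x - y, x + y) = -4 F (x, y)` moves the ratio away from `± 1`
      have hF4 : |-4 * (x ^ 4 - t * x ^ 3 * y - 6 * x ^ 2 * y ^ 2 + t * x * y ^ 3 + y ^ 4)| ≤
          24 * t + 28 := by
        rw [abs_mul]; norm_num; linarith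
      rcases le_total 0 x with hx0 | hx0
      · rw [abs_of_nonneg hx0] at hx
        rcases eq_or_ne x y with rfl | hxy
        · rw [Int.gcd_self] at hg
          omega
        rcases lt_or_ge (y + x) 4 with h | h
        · omega
        · refine (no_large_solution t (y + x) (y - x) ht h ?_ (by omega) ?_).elim
          · rw [abs_of_nonneg (by omega)]; omega
          · refine le_of_eq_of_le ?_ hF4
            congr 1; ring
      · rw [abs_of_nonpos hx0] at hx
        rcases eq_or_ne (-x) y with rfl | hxy
        · rw [Int.gcd_neg, Int.gcd_self] at hg
          omega
        rcases lt_or_ge (y - x) 4 with h | h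
        · omega
        · refine (no_large_solution t (y - x) (-x - y) ht h ?_ (by omega) ?_).elim
          · rw [abs_of_nonpos (by omega)]; omega
          · refine le_of_eq_of_le ?_ hF4
            congr 1; ring
  · refine ⟨?_, ?_, ?_⟩ <;> convert hF using 2 <;> simp only [F4] <;> ring
end

section
/- For every integer t with t ≥ 58, the polynomial f_t^{(4)}(x) = x^4 − t x^3 − 6 x^2 + t x + 1 has four distinct real roots α_1, α_2, α_3, α_4, and these roots satisfy min_{i≠j} |α_i − α_j| > 0.9833 and min_i ∏_{j≠i} |α_j − α_i| > 58.1. -/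
/-!
The roots are permuted cyclically by the Möbius map `x ↦ (x - 1) / (x + 1)` of order four, so a
single root `a` yields all of them:
`a`, `-1 / a`, `(a - 1) / (a + 1)`, `-(a + 1) / (a - 1)`.
The intermediate value theorem gives a root `a ≥ 58.05`: the quartic is decreasing in `t` at
`x = 58.05` and already negative there for `t = 58`, while it is positive at `x = t + 1`.
All mutual distances are then explicit rational functions of `a`. The smallest one is
`(a ^ 2 + 1) / (a * (a + 1)) = 1 - (a - 1) / (a * (a + 1))`, between the roots near `0` and `1`,
and the smallest product is `(a ^ 2 + 1) ^ 3 / (a ^ 3 * (a ^ 2 - 1)) ≈ a + 4 / a`, at the root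
near `0`; both bounds hold as soon as `a ≥ 58.05`.
-/

theorem exists_large_root (t : ℝ) (ht : 58 ≤ t) :
    ∃ a : ℝ, 58.05 ≤ a ∧ a ^ 4 - t * a ^ 3 - 6 * a ^ 2 + t * a + 1 = 0 := by
  have hc : ContinuousOn (fun a : ℝ => a ^ 4 - t * a ^ 3 - 6 * a ^ 2 + t * a + 1)
      (Set.Icc 58.05 (t + 1)) := by fun_prop
  obtain ⟨a, ha, h⟩ := intermediate_value_Icc (by linarith) hc
    (show (0 : ℝ) ∈ Set.Icc _ _ from ⟨by norm_num; linarith, by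
      nlinarith [mul_nonneg (sub_nonneg.2 ht) (sq_nonneg (t + 1)), sq_nonneg (t + 1)]⟩)
  exact ⟨a, ha.1, h⟩

/-- The distances between the four roots `a`, `-1 / a`, `(a - 1) / (a + 1)`,
`-(a + 1) / (a - 1)`, bounded below pair by pair. The final clause is the product of the distances
from `-1 / a`, for which the pairwise bounds are too weak. -/
theorem root_gaps (a : ℝ) (ha : 58.05 ≤ a) :
    58 < a - -1 / a ∧ 57 < a - (a - 1) / (a + 1) ∧ 58 < a - -(a + 1) / (a - 1) ∧
    0.9833 < (a - 1) / (a + 1) - -1 / a ∧ 1 < -1 / a - -(a + 1) / (a - 1) ∧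
    2 < (a - 1) / (a + 1) - -(a + 1) / (a - 1) ∧
    58.1 < (a - -1 / a) * ((a - 1) / (a + 1) - -1 / a) * (-1 / a - -(a + 1) / (a - 1)) := by
  have h0 : 0 < a := by linarith
  have h1 : 0 < a - 1 := by linarith
  have h2 : 0 < a + 1 := by linarith
  have e1 : a - -1 / a = (a ^ 2 + 1) / a := by field_simp; ring
  have e2 : a - (a - 1) / (a + 1) = (a ^ 2 + 1) / (a + 1) := by field_simp; ring
  have e3 : a - -(a + 1) / (a - 1) = (a ^ 2 + 1) / (a - 1) := by field_simp; ring
  have e4 : (a - 1) / (a + 1) - -1 / a = (a ^ 2 + 1) / (a * (a + 1)) := by field_simp; ring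
  have e5 : -1 / a - -(a + 1) / (a - 1) = (a ^ 2 + 1) / (a * (a - 1)) := by field_simp; ring
  have e6 : (a - 1) / (a + 1) - -(a + 1) / (a - 1) =
      2 * (a ^ 2 + 1) / ((a + 1) * (a - 1)) := by field_simp; ring
  have e7 : (a ^ 2 + 1) / a * ((a ^ 2 + 1) / (a * (a + 1))) * ((a ^ 2 + 1) / (a * (a - 1))) =
      (a ^ 2 + 1) ^ 3 / (a ^ 3 * ((a + 1) * (a - 1))) := by field_simp
  rw [e1, e2, e3, e4, e5, e6, e7]
  refine ⟨?_, ?_, ?_, ?_, ?_, ?_, ?_⟩ <;> rw [lt_div_iff₀ (by positivity)]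
  iterate 6 nlinarith
  -- Since `(a ^ 2 + 1) ^ 3 ≥ a ^ 3 * (a ^ 3 + 3 * a)`, a cubic inequality suffices.
  have hq : 58.1 * (a ^ 2 - 1) < a ^ 3 + 3 * a := by
    nlinarith [mul_nonneg (sub_nonneg.2 ha) (sq_nonneg a), sq_nonneg (a - 58.05)]
  have := mul_lt_mul_of_pos_left hq (show 0 < a ^ 3 by positivity)
  nlinarith [sq_nonneg a]

theorem roots_of_root (t a : ℝ) (ha : 58.05 ≤ a)
    (h : a ^ 4 - t * a ^ 3 - 6 * a ^ 2 + t * a + 1 = 0) (i : Fin 4) :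
    let x := ![a, -1 / a, (a - 1) / (a + 1), -(a + 1) / (a - 1)] i
    x ^ 4 - t * x ^ 3 - 6 * x ^ 2 + t * x + 1 = 0 := by
  have h0 : a ≠ 0 := by linarith
  have h1 : a - 1 ≠ 0 := by linarith
  have h2 : a + 1 ≠ 0 := by linarith
  fin_cases i
  · exact h
  · simp
    field_simp
    linear_combination h
  · simp
    field_simp
    linear_combination -4 * h
  · simp
    field_simp
    linear_combination -4 * h

/-- For `t ≥ 58`, the simplest quartic polynomial `f_t^{(4)}(x) = x^4 - t x^3 - 6x^2 + t x + 1`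
has four distinct real roots, whose minimal mutual distance exceeds `0.9833` and such that
`min_i ∏_{j ≠ i} |α_j - α_i| > 58.1`. -/
theorem simplest_quartic_roots_large_t (t : ℤ) (ht : 58 ≤ t) :
    ∃ α : Fin 4 → ℝ, Function.Injective α ∧
      (∀ i, (α i) ^ 4 - (t : ℝ) * (α i) ^ 3 - 6 * (α i) ^ 2 + (t : ℝ) * (α i) + 1 = 0) ∧
      (∀ i j, i ≠ j → 0.9833 < |α i - α j|) ∧
      (∀ i, 58.1 < ∏ j ∈ Finset.univ.erase i, |α j - α i|) := by
  obtain ⟨a, ha, hroot⟩ := exists_large_root t (by exact_mod_cast ht)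
  obtain ⟨g1, g2, g3, g4, g5, g6, g7⟩ := root_gaps a ha
  have hr := roots_of_root t a ha hroot
  generalize -1 / a = b at *
  generalize (a - 1) / (a + 1) = c at *
  generalize -(a + 1) / (a - 1) = d at *
  have hgap : ∀ i j, i ≠ j → 0.9833 < |![a, b, c, d] i - ![a, b, c, d] j| := by
    intro i j hij
    rw [lt_abs]
    fin_cases i <;> fin_cases j <;> simp at hij ⊢ <;>
      first
      | (left; linarith)
      | (right; linarith)
  refine ⟨![a, b, c, d], fun i j hij => ?_, hr, hgap, fun i => ?_⟩
  · by_contra hne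
    have := hgap i j hne
    rw [hij] at this
    norm_num at this
  · have s0 : (Finset.univ.erase (0 : Fin 4)) = {1, 2, 3} := by decide
    have s1 : (Finset.univ.erase (1 : Fin 4)) = {0, 2, 3} := by decide
    have s2 : (Finset.univ.erase (2 : Fin 4)) = {0, 1, 3} := by decide
    have s3 : (Finset.univ.erase (3 : Fin 4)) = {0, 1, 2} := by decide
    have ab : |a - b| = a - b := abs_of_pos (by linarith)
    have ac : |a - c| = a - c := abs_of_pos (by linarith)
    have ad : |a - d| = a - d := abs_of_pos (by linarith)
    have cb : |c - b| = c - b := abs_of_pos (by linarith)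
    have bd : |b - d| = b - d := abs_of_pos (by linarith)
    have cd : |c - d| = c - d := abs_of_pos (by linarith)
    have key : ∀ {x y z p q r : ℝ}, 0 < p → 0 < q → 0 < r → p < x → q < y → r < z →
        p * (q * r) < x * (y * z) := fun {x y z p q r} hp hq hr h1 h2 h3 => by
      have : 0 < y := hq.trans h2
      gcongr
    fin_cases i
    · have := key (by norm_num) (by norm_num) (by norm_num) g1 g2 g3
      simp [s0, abs_sub_comm _ a, ab, ac, ad]
      linarith
    · simp [s1, abs_sub_comm d b, ab, cb, bd]
      linarith
    · have := key (by norm_num) (by norm_num) (by norm_num) g2 g4 g6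
      simp [s2, abs_sub_comm b c, abs_sub_comm d c, ac, cb, cd]
      linarith
    · have := key (by norm_num) (by norm_num) (by norm_num) g3 g5 g6
      simp [s3, ad, bd, cd]
      linarith
end
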